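/- arXiv:2212.05455 — 2 statements merged into one kernel-verified Lean document; each statement's English description precedes it below -/
import Mathlib

section
/- Let k ≥ 2 be an integer and let G be a connected graph of order n. If the spectral radius of the complement satisfies ρ(Ḡ) ≤ √(k(n−2)), then G has a spanning k-ended-tree, unless G is isomorphic to the star K_{1,k+1}. -/
open Finset
open scoped Classical

/-- The adjacency matrix of a simple graph over ℝ. -/
noncomputable def adjMat {V : Type*} [Fintype V] (G : SimpleGraph V) :
    Matrix V V ℝ := fun i j => if G.Adj i j then 1 else 0

/-- The spectral radius of a graph: the largest (real) eigenvalue of its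
adjacency matrix. -/
noncomputable def specRad {V : Type*} [Fintype V] (G : SimpleGraph V) : ℝ :=
  sSup {μ : ℝ | Module.End.HasEigenvalue (Matrix.mulVecLin (adjMat G)) μ}

/-- The signless Laplacian matrix `Q = D + A` of a simple graph. -/
noncomputable def qMat {V : Type*} [Fintype V] (G : SimpleGraph V) :
    Matrix V V ℝ := fun i j =>
  (if i = j then ((univ.filter fun u => G.Adj i u).card : ℝ) else 0) +
    (if G.Adj i j then 1 else 0)

/-- The signless Laplacian spectral radius of a graph: the largest (real)
eigenvalue of `Q = D + A`. -/
noncomputable def qRad {V : Type*} [Fintype V] (G : SimpleGraph V) : ℝ :=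
  sSup {μ : ℝ | Module.End.HasEigenvalue (Matrix.mulVecLin (qMat G)) μ}

/-- `G` has a spanning `k`-ended-tree: a spanning tree with at most `k`
leaves (vertices of degree 1 in the tree). -/
noncomputable def HasSpanningKEndedTree {V : Type*} [Fintype V]
    (G : SimpleGraph V) (k : ℕ) : Prop :=
  ∃ T : SimpleGraph V, T ≤ G ∧ T.IsTree ∧
    (univ.filter fun v => T.degree v = 1).card ≤ k

/-- `G` has a spanning tree with leaf degree at most `k`: every vertex of the
tree is adjacent (in the tree) to at most `k` leaves of the tree. -/
noncomputable def HasSpanningTreeLeafDegLE {V : Type*} [Fintype V]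
    (G : SimpleGraph V) (k : ℕ) : Prop :=
  ∃ T : SimpleGraph V, T ≤ G ∧ T.IsTree ∧
    ∀ v, (univ.filter fun u => T.Adj v u ∧ T.degree u = 1).card ≤ k

/-- The graph `K₁ ∨ (K_{n-k-1} + kK₁)` on `n` vertices: vertex `0` is joined to
everything, vertices `0, …, n-k-1` form a clique `K_{n-k}`, and the last `k`
vertices are only adjacent to vertex `0`. -/
def oneJoinCliquePlusIso (n k : ℕ) : SimpleGraph (Fin n) :=
  SimpleGraph.fromRel fun i j => i.val = 0 ∨ (i.val < n - k ∧ j.val < n - k)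


lemma sq_cmp {l L2 U V V' : ℝ} (hl : 0 ≤ l) (hl2 : l ^ 2 = L2) (hU : 0 < U) (hV : V ≤ V')
    (h : L2 * V * V' < U ^ 2) : l * V < U := by
  rcases le_or_gt V 0 with h0 | h0
  · nlinarith
  · have : (l * V) ^ 2 < U ^ 2 := by
      have : (l * V) ^ 2 = L2 * V * V := by rw [← hl2]; ring
      have h2 : L2 * V * V ≤ L2 * V * V' := by
        apply mul_le_mul_of_nonneg_left hV
        rw [← hl2]; positivity
      linarith
    exact lt_of_pow_lt_pow_left₀ 2 hU.le this

/-- homogeneous form, case II -/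
def RII (k P p x y M b : ℝ) : ℝ :=
  (2*k*(k+P-1)*((k+2*P+p)*(x+y)+M*x) + M*x*((k-1)*(1+p)+P))^2*(x+y)
  - k*((k+2*P+p)*(x+y)+M*x)*(2*(k*(k-1)+(2*k-1)*P)*(x+y)+M*x*(k+1-P-p))*
    (2*(k*(k-1)+(2*k-1)*P)*(x+y)+M*x*(k+1-P-p)+b*(M*x*(P+p)))

set_option maxRecDepth 20000 in
set_option maxHeartbeats 4000000 in
lemma RII_a {a P p x y : ℝ} (ha : 0 ≤ a) (hP : 0 ≤ P) (hp : 0 ≤ p) (hx : 0 ≤ x) (hy : 0 ≤ y) :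
    (x+y)^3 ≤ RII (a+2) (P+2) p x y (P+2+1+3*p) 1 := by
  rw [← sub_nonneg]
  unfold RII
  ring_nf
  positivity

set_option maxHeartbeats 2000000 in
lemma RII_b {a p x y : ℝ} (ha : 0 ≤ a) (hp : 0 ≤ p) (hx : 0 ≤ x) (hy : 0 ≤ y) :
    (x+y)^3 ≤ RII (a+2) 1 (p+1) x y (1+1+3*(p+1)) 1 := by
  rw [← sub_nonneg]
  unfold RII
  ring_nf
  positivity

set_option maxHeartbeats 2000000 in
lemma RII_c {a x y : ℝ} (ha : 0 ≤ a) (hx : 0 ≤ x) (hy : 0 ≤ y) :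
    (x+y)^3 ≤ RII (a+2) 1 0 x y (1+1+3*0) 0 := by
  rw [← sub_nonneg]
  unfold RII
  ring_nf
  positivity

set_option maxHeartbeats 2000000 in
lemma RII_d {a p x y : ℝ} (ha : 0 ≤ a) (hp : 0 ≤ p) (hx : 0 ≤ x) (hy : 0 ≤ y) :
    (x+y)^3 ≤ RII (a+2) 0 (p+3) x y (0+1+3*(p+3)) 1 := by
  rw [← sub_nonneg]
  unfold RII
  ring_nf
  positivity

set_option maxHeartbeats 2000000 in
lemma RII_e {a x y : ℝ} (ha : 0 ≤ a) (hx : 0 ≤ x) (hy : 0 ≤ y) :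
    (x+y)^3 ≤ RII (a+2) 0 2 x y (0+1+3*2) 0 := by
  rw [← sub_nonneg]
  unfold RII
  ring_nf
  positivity

set_option maxHeartbeats 2000000 in
lemma RII_f {a x y : ℝ} (ha : 0 ≤ a) (hx : 0 ≤ x) (hy : 0 ≤ y) :
    (x+y)^3 ≤ RII (a+3) 0 1 x y 2 0 := by
  rw [← sub_nonneg]
  unfold RII
  ring_nf
  positivity

set_option maxHeartbeats 2000000 in
lemma RII_g {x y : ℝ} (hx : 0 ≤ x) (hy : 0 ≤ y) :
    (x+y)^3 ≤ RII 2 0 1 x y 1 0 := by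
  rw [← sub_nonneg]
  unfold RII
  ring_nf
  positivity

/-- homogeneous form, case I -/
def RI (k P p x y lo b : ℝ) : ℝ :=
  (4*(k+P-1)*(k*((k+2*P+2*p)*(x+y)+((P+p+1+lo)*(x+y)+(2*(P+p+1)-lo)*x)))
    +(3*((P+p+1+lo)*(x+y)+(2*(P+p+1)-lo)*x)-(P+p+1)*(x+y))*(k+(P+p+1)+k*p))^2*(x+y)
  - (k*((k+2*P+2*p)*(x+y)+((P+p+1+lo)*(x+y)+(2*(P+p+1)-lo)*x)))*
   (4*((k*(k-1)+(2*k-1)*P)*(x+y)+k*(((P+p+1+lo)*(x+y)+(2*(P+p+1)-lo)*x)+p*(x+y)))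
     -(3*((P+p+1+lo)*(x+y)+(2*(P+p+1)-lo)*x)-(P+p+1)*(x+y))*(k+(P+p+1)))
   *(4*((k*(k-1)+(2*k-1)*P)*(x+y)+k*(((P+p+1+lo)*(x+y)+(2*(P+p+1)-lo)*x)+p*(x+y)))
     -(3*((P+p+1+lo)*(x+y)+(2*(P+p+1)-lo)*x)-(P+p+1)*(x+y))*(k+(P+p+1))
     +b*((3*((P+p+1+lo)*(x+y)+(2*(P+p+1)-lo)*x)-(P+p+1)*(x+y))*(P+p+1)))

set_option maxRecDepth 20000 in
set_option maxHeartbeats 4000000 in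
lemma RI_a {a P p x y : ℝ} (ha : 0 ≤ a) (hP : 0 ≤ P) (hp : 0 ≤ p) (hx : 0 ≤ x) (hy : 0 ≤ y) :
    (x+y)^3 ≤ RI (a+2) P p x y (1+p) 1 := by
  rw [← sub_nonneg]
  unfold RI
  ring_nf
  positivity

set_option maxHeartbeats 2000000 in
lemma RI_b {a x y : ℝ} (ha : 0 ≤ a) (hx : 0 ≤ x) (hy : 0 ≤ y) :
    (x+y)^3 ≤ RI (a+2) 0 0 x y 0 1 := by
  rw [← sub_nonneg]
  unfold RI
  ring_nf
  positivity
set_option maxHeartbeats 2000000 in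
lemma RI_c {a x y : ℝ} (ha : 0 ≤ a) (hx : 0 ≤ x) (hy : 0 ≤ y) :
    (x+y)^3 ≤ RI (a+2) 0 1 x y 0 0 := by
  rw [← sub_nonneg]
  unfold RI
  ring_nf
  positivity

set_option maxHeartbeats 2000000 in
lemma RIb_a {a P p : ℝ} (ha : 0 ≤ a) (hP : 0 ≤ P) (hp : 0 ≤ p) :
   1 ≤ ((p+a)+2+P-1)^2*((p+a)+2)*((p+a)+2+2*P+2*p+3*(P+1+p)) -
     (((p+a)+2)^2+3*((p+a)+2)*P-P+2*((p+a)+2)*p-2*(P+1+p)^2)*(((p+a)+2)^2+3*((p+a)+2)*P-P+2*((p+a)+2)*p) := by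
  rw [← sub_nonneg]
  ring_nf
  positivity

set_option maxHeartbeats 2000000 in
lemma RIb_b {a P p : ℝ} (ha : 0 ≤ a) (hP : 0 ≤ P) (hp : 0 ≤ p) :
   1 ≤ (a+2+P-1)^2*(a+2)*(a+2+2*P+2*(p+a)+3*(P+1+(p+a))) -
     ((a+2)^2+3*(a+2)*P-P+2*(a+2)*(p+a)-2*(P+1+(p+a))^2)*((a+2)^2+3*(a+2)*P-P+2*(a+2)*(p+a)) := by
  rw [← sub_nonneg]
  ring_nf
  positivity

lemma caseII {k P p t l M b : ℝ} (hk : 2 ≤ k) (hP : 0 ≤ P) (hp : 0 ≤ p) (ht : 0 ≤ t) (htM : t ≤ M)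
    (hM : 0 < M) (hb : 0 ≤ b) (hl : 0 ≤ l) (hl2 : l ^ 2 = k * (k + 2 * P + p + t))
    (hR : ∀ x y : ℝ, 0 ≤ x → 0 ≤ y → (x+y)^3 ≤ RII k P p x y M b) :
    0 < l * ((k+P-1)*l - (k*(k-1)+(2*k-1)*P) - k*t) + t/2*((k+P-1+p)*(l+1)+(k-2)*p) := by
  have h := hR (t/M) (1 - t/M) (by positivity) (by rw [sub_nonneg, div_le_one hM]; exact htM)
  have e1 : t/M + (1 - t/M) = 1 := by ring
  have e2 : M * (t/M) = t := by field_simp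
  unfold RII at h
  rw [e1, e2] at h
  have := sq_cmp (l := l) (L2 := k * (k + 2 * P + p + t))
    (U := 2*k*(k+P-1)*(k+2*P+p+t) + t*((k-1)*(1+p)+P))
    (V := 2*(k*(k-1)+(2*k-1)*P) + t*(k+1-P-p))
    (V' := 2*(k*(k-1)+(2*k-1)*P) + t*(k+1-P-p) + b*(t*(P+p))) hl hl2
    (by
      have : 0 < k + P - 1 := by linarith
      have : 0 ≤ k - 1 := by linarith
      positivity) (by have : 0 ≤ b*(t*(P+p)) := by positivity
                      linarith) (by linarith)
  rw [show l * ((k+P-1)*l - (k*(k-1)+(2*k-1)*P) - k*t) + t/2*((k+P-1+p)*(l+1)+(k-2)*p)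
    = ((2*k*(k+P-1)*(k+2*P+p+t) + t*((k-1)*(1+p)+P)) - l * (2*(k*(k-1)+(2*k-1)*P) + t*(k+1-P-p)))/2
    by linear_combination (k+P-1)*hl2]
  linarith

lemma caseI {k P p r l b x : ℝ} (lo : ℝ) (hk : 2 ≤ k) (hP : 0 ≤ P) (hp : 0 ≤ p) (hr : 1 ≤ r)
    (hrl : P + p + 1 ≤ r) (hx0 : 0 ≤ x) (hx1 : x ≤ 1)
    (hx : r = P + p + 1 + lo + (2 * (P + p + 1) - lo) * x)
    (hb : 0 ≤ b) (hl : 0 ≤ l) (hl2 : l ^ 2 = k * (k + 2 * P + 2 * p + r))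
    (hR : ∀ x y : ℝ, 0 ≤ x → 0 ≤ y → (x+y)^3 ≤ RI k P p x y lo b) :
    0 < l * ((k+P-1)*l - (k*(k-1)+(2*k-1)*P) - k*(r+p))
      + (3*r-(P+p+1))/4*((k+(P+p+1))*(l+1)+k*p) := by
  have h := hR x (1 - x) hx0 (by linarith)
  have e1 : x + (1 - x) = 1 := by ring
  unfold RI at h
  rw [e1] at h
  simp only [mul_one, one_pow] at h
  rw [← hx] at h
  have := sq_cmp (l := l) (L2 := k * (k + 2 * P + 2 * p + r))
    (U := 4*(k+P-1)*(k*(k+2*P+2*p+r))+(3*r-(P+p+1))*(k+(P+p+1)+k*p))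
    (V := 4*(k*(k-1)+(2*k-1)*P+k*(r+p))-(3*r-(P+p+1))*(k+(P+p+1)))
    (V' := 4*(k*(k-1)+(2*k-1)*P+k*(r+p))-(3*r-(P+p+1))*(k+(P+p+1))
      +b*((3*r-(P+p+1))*(P+p+1))) hl hl2
    (by
      have : 0 < k + P - 1 := by linarith
      have : 0 ≤ 3*r-(P+p+1) := by linarith
      positivity) (by
      have : 0 ≤ 3*r-(P+p+1) := by linarith
      have : 0 ≤ b*((3*r-(P+p+1))*(P+p+1)) := by positivity
      linarith) (by linarith)
  rw [show l * ((k+P-1)*l - (k*(k-1)+(2*k-1)*P) - k*(r+p))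
      + (3*r-(P+p+1))/4*((k+(P+p+1))*(l+1)+k*p) =
      ((4*(k+P-1)*(k*(k+2*P+2*p+r))+(3*r-(P+p+1))*(k+(P+p+1)+k*p)) -
       l * (4*(k*(k-1)+(2*k-1)*P+k*(r+p))-(3*r-(P+p+1))*(k+(P+p+1))))/4
    by linear_combination (k+P-1)*hl2]
  linarith

lemma caseIb {k P p r l : ℝ} (hk : 2 ≤ k) (hP : 0 ≤ P) (hp : 0 ≤ p)
    (hrl : 3 * (P + p + 1) ≤ r) (hl : 0 ≤ l) (hl2 : l ^ 2 = k * (k + 2 * P + 2 * p + r)) :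
    0 < l * ((k+P-1)*l - (k*(k-1)+(2*k-1)*P) - k*(r+p))
      + (r-(P+p+1))*((k+(P+p+1))*(l+1)+k*p) := by
  have hA : (k^2+3*k*P-P+2*k*p-2*(P+1+p)^2)*(k^2+3*k*P-P+2*k*p) <
      (k+P-1)^2*k*(k+2*P+2*p+3*(P+1+p)) := by
    rcases le_total p (k-2) with h | h
    · have := RIb_a (a := k - 2 - p) (P := P) (p := p) (by linarith) hP hp
      have e : p + (k - 2 - p) + 2 = k := by ring
      rw [e] at this
      linarith
    · have := RIb_b (a := k - 2) (P := P) (p := p - (k-2)) (by linarith) hP (by linarith)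
      have e : k - 2 + 2 = k := by ring
      have e' : p - (k-2) + (k - 2) = p := by ring
      rw [e, e'] at this
      linarith
  have hl0 : 0 < l := by
    by_contra h
    have : l = 0 := by linarith
    subst this
    have : 0 < k * (k + 2 * P + 2 * p + r) := by
      apply mul_pos <;> linarith
    simp at hl2
    rcases hl2 with h | h <;> linarith
  have hB : k^2+3*k*P-P+2*k*p-2*(P+1+p)^2 < (k+P-1)*l := by
    have hkp : 0 < k + P - 1 := by linarith
    rcases le_or_gt (k^2+3*k*P-P+2*k*p-2*(P+1+p)^2) 0 with h | h
    · have : 0 < (k+P-1)*l := by positivity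
      linarith
    · apply lt_of_pow_lt_pow_left₀ 2 (by positivity)
      calc _ ≤ (k^2+3*k*P-P+2*k*p-2*(P+1+p)^2)*(k^2+3*k*P-P+2*k*p) := by
            rw [sq]; apply mul_le_mul_of_nonneg_left _ h.le; nlinarith [sq_nonneg (P+1+p)]
        _ < _ := hA
        _ ≤ (k+P-1)^2 * l^2 := by
            rw [hl2, mul_assoc]
            apply mul_le_mul_of_nonneg_left _ (sq_nonneg _)
            apply mul_le_mul_of_nonneg_left _ (by linarith)
            linarith
        _ = _ := by ring
  have hC : 0 < (k+P-1)*l - (k*(k-1)+(2*k-1)*P) - k*(r+p) + (r-(P+p+1))*(k+(P+p+1)) := by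
    nlinarith [mul_nonneg (by linarith : 0 ≤ r - 3 * (P+p+1)) (by linarith : 0 ≤ P+p+1)]
  have h1 := mul_pos hl0 hC
  have h2 : 0 ≤ (r-(P+p+1))*((k+(P+p+1))+k*p) := by
    apply mul_nonneg <;> nlinarith
  nlinarith

lemma final_ineq (k P p t : ℕ) (hk : 2 ≤ k) (hne : ¬ (P = 0 ∧ p = 0 ∧ t = 0)) (l W d : ℝ)
    (hl : 0 ≤ l) (hl2 : l ^ 2 = (k:ℝ) * (k + 2 * P + p + t))
    (hW : W * (l+1+p) = ((k:ℝ)+(P+p+1))*(l+1)+k*p)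
    (h1 : p ≤ t → ((t:ℝ)-p)^2/(P+1+t) ≤ d) (h2 : (t:ℝ)/2*(1-1/W)^2 ≤ d) :
    0 < l * (((k:ℝ)+P-1)*l - (k*(k-1)+(2*k-1)*P) - k*t) + d*(((k:ℝ)+(P+p+1))*(l+1)+k*p) := by
  have hkR : (2:ℝ) ≤ k := by exact_mod_cast hk
  have hP : (0:ℝ) ≤ P := by positivity
  have hp : (0:ℝ) ≤ p := by positivity
  have ht : (0:ℝ) ≤ t := by positivity
  have hPhi : 0 < ((k:ℝ)+(P+p+1))*(l+1)+k*p := by positivity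
  have hmp : 0 < l+1+p := by positivity
  have hWpos : 0 < W := by
    by_contra h
    have : W * (l+1+p) ≤ 0 := mul_nonpos_of_nonpos_of_nonneg (by linarith) hmp.le
    linarith
  have D2 : (t:ℝ)/2*((k+P-1+p)*(l+1)+(k-2)*p) ≤ d*(((k:ℝ)+(P+p+1))*(l+1)+k*p) := by
    have a1 : (1:ℝ) - 2/W ≤ (1-1/W)^2 := by
      have : (1-1/W)^2 = 1 - 2/W + (1/W)^2 := by ring
      rw [this]; nlinarith [sq_nonneg (1/W)]
    have a2 : (t:ℝ)/2*(1-2/W) ≤ d := le_trans (mul_le_mul_of_nonneg_left a1 (by positivity)) h2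
    have a3 := mul_le_mul_of_nonneg_right a2 hPhi.le
    have a4 : (1 - 2/W) * (((k:ℝ)+(P+p+1))*(l+1)+k*p) = (k+P-1+p)*(l+1)+(k-2)*p := by
      have : 2/W * (((k:ℝ)+(P+p+1))*(l+1)+k*p) = 2 * (l+1+p) := by
        rw [← hW]; field_simp
      rw [sub_mul, this]; ring
    rw [mul_assoc, a4] at a3
    exact a3
  have fin2 : ∀ M b : ℝ, (t:ℝ) ≤ M → 0 < M → 0 ≤ b →
      (∀ x y : ℝ, 0 ≤ x → 0 ≤ y → (x+y)^3 ≤ RII k P p x y M b) →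
      0 < l * (((k:ℝ)+P-1)*l - (k*(k-1)+(2*k-1)*P) - k*t) + d*(((k:ℝ)+(P+p+1))*(l+1)+k*p) := by
    intro M b hM hM0 hb hR
    have := caseII hkR hP hp ht hM hM0 hb hl hl2 hR
    linarith
  have D1 : p ≤ t → (3*((t:ℝ)-p)-(P+p+1))/4 ≤ d ∧ ((t:ℝ)-p)-(P+p+1) ≤ d := by
    intro h
    have := h1 h
    have hpt : (p:ℝ) ≤ t := by exact_mod_cast h
    constructor
    · refine le_trans ?_ this
      rw [le_div_iff₀ (by positivity)]
      nlinarith [sq_nonneg ((t:ℝ)-p-(P+p+1))]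
    · refine le_trans ?_ this
      rw [le_div_iff₀ (by positivity)]
      nlinarith [sq_nonneg ((t:ℝ)-p-(P+p+1))]
  have fin1 : ∀ lo b : ℝ, 0 ≤ b → lo < 2 * (P+p+1) → 0 ≤ lo → (P:ℝ) + p + 1 + lo + p ≤ t → 
      (∀ x y : ℝ, 0 ≤ x → 0 ≤ y → (x+y)^3 ≤ RI k P p x y lo b) →
      0 < l * (((k:ℝ)+P-1)*l - (k*(k-1)+(2*k-1)*P) - k*t) + d*(((k:ℝ)+(P+p+1))*(l+1)+k*p) := by
    intro lo b hb hlo hlo0 hr hR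
    have hpt : p ≤ t := by
      have : (p:ℝ) ≤ t := by linarith
      exact_mod_cast this
    obtain ⟨d1, d2⟩ := D1 hpt
    have hl2' : l ^ 2 = (k:ℝ) * (k + 2 * P + 2 * p + ((t:ℝ) - p)) := by rw [hl2]; ring
    rcases le_total ((t:ℝ)-p) (3*(P+p+1)) with h | h
    · have hden : 0 < 2 * ((P:ℝ)+p+1) - lo := by linarith
      have := caseI (r := (t:ℝ)-p) (x := ((t:ℝ)-p-(P+p+1+lo))/(2*(P+p+1)-lo)) (b := b) (l := l)
        lo hkR hP hp (by linarith) (by linarith) (div_nonneg (by linarith) hden.le)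
        (by rw [div_le_one hden]; linarith) (by rw [mul_div_cancel₀ _ hden.ne']; ring) hb hl hl2' hR
      have e := mul_le_mul_of_nonneg_right d1 hPhi.le
      rw [sub_add_cancel] at this
      linarith
    · have := caseIb hkR hP hp (by linarith) hl hl2'
      have e := mul_le_mul_of_nonneg_right d2 hPhi.le
      rw [sub_add_cancel] at this
      linarith
  have ek : (k:ℝ) = (k - 2) + 2 := by ring
  have ha : (0:ℝ) ≤ k - 2 := by linarith
  -- generic use of case I
  have gen1 : P + 1 + 3 * p + 1 ≤ t →
      0 < l * (((k:ℝ)+P-1)*l - (k*(k-1)+(2*k-1)*P) - k*t) + d*(((k:ℝ)+(P+p+1))*(l+1)+k*p) := by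
    intro h
    have h' : (P:ℝ) + 1 + 3 * p + 1 ≤ t := by exact_mod_cast h
    apply fin1 (1+p) 1 zero_le_one (by linarith) (by positivity) (by linarith)
    intro x y hx hy
    have := RI_a ha hP hp hx hy
    rwa [← ek] at this
  rcases Nat.lt_or_ge P 2 with hP2 | hP2
  · interval_cases P
    · -- P = 0
      rcases Nat.lt_or_ge p 3 with hp3 | hp3
      · interval_cases p
        · have ht1 : 1 ≤ t := by omega
          have ht1' : (1:ℝ) ≤ t := by exact_mod_cast ht1
          apply fin1 0 1 zero_le_one (by norm_num) le_rfl (by push_cast; linarith)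
          intro x y hx hy
          have := RI_b ha hx hy
          rw [← ek] at this
          simpa using this
        · rcases Nat.lt_or_ge t 3 with ht3 | ht3
          · rcases Nat.lt_or_ge k 3 with hk3 | hk3
            · have : k = 2 := by omega
              subst this
              rcases Nat.lt_or_ge t 2 with ht2 | ht2
              · have ht' : (t:ℝ) ≤ 1 := by exact_mod_cast (by omega : t ≤ 1)
                apply fin2 1 0 ht' one_pos le_rfl
                intro x y hx hy
                have := RII_g hx hy
                simpa using this
              · have : t = 2 := by omega
                subst this
                push_cast at *
                have hl10 : l ^ 2 = 10 := by rw [hl2]; norm_num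
                have hl3 : 3 < l := by nlinarith
                have hW' : W = (4 * l + 6) / (l + 2) := by
                  rw [eq_div_iff (by linarith)]; linarith
                have e : (2:ℝ)/2 * (1 - 1/W)^2 = ((3*l+4)/(4*l+6))^2 := by
                  rw [hW']
                  have : 1 - 1/((4 * l + 6) / (l + 2)) = (3*l+4)/(4*l+6) := by
                    field_simp; ring
                  rw [this]; ring
                rw [e, div_pow, div_le_iff₀ (by positivity)] at h2
                have h3 : 0 < (l * ((2+0-1)*l - (2*(2-1)+(2*2-1)*0) - 2*2) + d*((2+(0+1+1))*(l+1)+2*1)) * (4*l+6) := by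
                  nlinarith
                exact (pos_iff_pos_of_mul_pos h3).mpr (by linarith)
            · have ht' : (t:ℝ) ≤ 2 := by exact_mod_cast (by omega : t ≤ 2)
              apply fin2 2 0 ht' two_pos le_rfl
              intro x y hx hy
              have hk3' : (3:ℝ) ≤ k := by exact_mod_cast hk3
              have := RII_f (a := (k:ℝ) - 3) (by linarith) hx hy
              rw [sub_add_cancel] at this
              simpa using this
          · have ht' : (3:ℝ) ≤ t := by exact_mod_cast ht3
            apply fin1 0 0 le_rfl (by norm_num) le_rfl (by push_cast; linarith)
            intro x y hx hy
            have := RI_c ha hx hy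
            rw [← ek] at this
            simpa using this
        · rcases Nat.lt_or_ge t 8 with h | h
          · have ht' : (t:ℝ) ≤ 0 + 1 + 3 * 2 := by norm_num; exact_mod_cast (by omega : t ≤ 7)
            apply fin2 _ 0 ht' (by norm_num) le_rfl
            intro x y hx hy
            have := RII_e ha hx hy
            rw [← ek] at this
            simpa using this
          · exact gen1 (by omega)
      · rcases Nat.lt_or_ge (0 + 1 + 3 * p) t with h | h
        · exact gen1 h
        · have h' : (t:ℝ) ≤ 0 + 1 + 3 * p := by exact_mod_cast h
          apply fin2 _ 1 h' (by positivity) zero_le_one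
          intro x y hx hy
          have hp3' : (3:ℝ) ≤ p := by exact_mod_cast hp3
          have := RII_d (p := (p:ℝ) - 3) ha (by linarith) hx hy
          rw [← ek, sub_add_cancel] at this
          simpa using this
    · rcases Nat.lt_or_ge (1 + 1 + 3 * p) t with h | h
      · exact gen1 h
      · have h' : (t:ℝ) ≤ 1 + 1 + 3 * p := by exact_mod_cast h
        rcases Nat.eq_zero_or_pos p with h0 | h0
        · subst h0
          apply fin2 _ 0 h' (by positivity) le_rfl
          intro x y hx hy
          have := RII_c ha hx hy
          rw [← ek] at this
          simpa using this
        · apply fin2 _ 1 h' (by positivity) zero_le_one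
          intro x y hx hy
          have h0' : (1:ℝ) ≤ p := by exact_mod_cast h0
          have := RII_b (p := (p:ℝ) - 1) ha (by linarith) hx hy
          rw [← ek, sub_add_cancel] at this
          simpa using this
  · rcases Nat.lt_or_ge (P + 1 + 3 * p) t with h | h
    · exact gen1 h
    · have h' : (t:ℝ) ≤ P + 1 + 3 * p := by exact_mod_cast h
      apply fin2 _ 1 h' (by positivity) zero_le_one
      intro x y hx hy
      have hP2' : (2:ℝ) ≤ P := by exact_mod_cast hP2
      have := RII_a (P := (P:ℝ) - 2) ha (by linarith) hp hx hy
      rw [← ek, sub_add_cancel] at this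
      simpa using this

lemma specRad_gt {V : Type*} [Fintype V] (G : SimpleGraph V) (x : V → ℝ) (l : ℝ)
    (h : l * ∑ i, x i ^ 2 < ∑ i, ∑ j, x i * x j * (if G.Adj i j then 1 else 0)) :
    l < specRad G := by
  set A := adjMat G with hA
  have hAs : A.IsHermitian := by
    ext i j
    simp [hA, adjMat, G.adj_comm]
  set B : Matrix V V ℝ := l • (1 : Matrix V V ℝ) - A with hB
  have hBs : B.IsHermitian := by
    apply Matrix.IsHermitian.sub _ hAs
    ext i j
    simp [Matrix.one_apply, eq_comm]
  have hnp : ¬ B.PosSemidef := by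
    intro hp
    have h1 := hp.dotProduct_mulVec_nonneg x
    have e : star x ⬝ᵥ (B.mulVec x) = l * ∑ i, x i ^ 2 -
        ∑ i, ∑ j, x i * x j * (if G.Adj i j then 1 else 0) := by
      rw [hB, Matrix.sub_mulVec, dotProduct_sub]
      congr 1
      · simp [dotProduct, Matrix.smul_mulVec, Finset.mul_sum]
        apply Finset.sum_congr rfl; intro i _; ring
      · simp only [dotProduct, Matrix.mulVec, Finset.mul_sum]
        apply Finset.sum_congr rfl; intro i _
        apply Finset.sum_congr rfl; intro j _
        simp [hA, adjMat]
    rw [e] at h1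
    linarith
  rw [hBs.posSemidef_iff_eigenvalues_nonneg] at hnp
  have hnp' : ∃ i, hBs.eigenvalues i < 0 := by
    by_contra hc
    push Not at hc
    exact hnp (fun i => hc i)
  obtain ⟨i, hi⟩ := hnp'
  have hv := hBs.mulVec_eigenvectorBasis i
  set v : V → ℝ := ⇑(hBs.eigenvectorBasis i) with hvdef
  have hAv : A.mulVec v = (l - hBs.eigenvalues i) • v := by
    have : A = l • (1 : Matrix V V ℝ) - B := by rw [hB]; abel
    rw [this, Matrix.sub_mulVec, hv, sub_smul]
    simp [Matrix.smul_mulVec]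
  have hv0 : v ≠ 0 := by
    intro h0
    have := hBs.eigenvectorBasis.orthonormal.ne_zero i
    apply this
    ext j
    exact congrFun h0 j
  have hev : Module.End.HasEigenvalue (Matrix.mulVecLin A) (l - hBs.eigenvalues i) := by
    apply Module.End.hasEigenvalue_of_hasEigenvector (x := v)
    rw [Module.End.hasEigenvector_iff, Module.End.mem_eigenspace_iff]
    exact ⟨by simpa using hAv, hv0⟩
  have hle : l - hBs.eigenvalues i ≤ specRad G := by
    apply le_csSup
    · exact (Module.End.finite_hasEigenvalue _).bddAbove
    · exact hev
  linarith

noncomputable def dg {V : Type*} [Fintype V] (T : SimpleGraph V) (v : V) : ℕ :=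
  (univ.filter fun u => T.Adj v u).card

noncomputable def lv {V : Type*} [Fintype V] (T : SimpleGraph V) : Finset V :=
  univ.filter fun v => dg T v = 1

def Closer {V : Type*} (T : SimpleGraph V) (v x u : V) : Prop :=
  T.Adj x u ∧ T.dist u v < T.dist x v

def IsMinT {V : Type*} [Fintype V] (G T : SimpleGraph V) : Prop :=
  T ≤ G ∧ T.IsTree ∧ ∀ T' : SimpleGraph V, T' ≤ G → T'.IsTree → (lv T).card ≤ (lv T').card

section tree
variable {V : Type*} [Fintype V]
set_option linter.unusedSectionVars false

lemma dg_eq_degree (T : SimpleGraph V) (v : V) [Fintype (T.neighborSet v)] :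
    dg T v = T.degree v := by
  rw [← SimpleGraph.card_neighborFinset_eq_degree]
  unfold dg
  congr 1
  ext u
  simp

lemma exists_closer {T : SimpleGraph V} (hT : T.IsTree) {v x : V} (h : x ≠ v) :
    ∃ u, Closer T v x u := by
  obtain ⟨p, hp⟩ := (hT.1.preconnected x v).exists_walk_length_eq_dist
  cases p with
  | nil => exact absurd rfl h
  | cons hadj q =>
    rename_i u
    refine ⟨u, hadj, ?_⟩
    have := T.dist_le q
    simp at hp
    omega

lemma closer_unique {T : SimpleGraph V} (hT : T.IsTree) {v x u u' : V}
    (h : Closer T v x u) (h' : Closer T v x u') : u = u' := by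
  have key : ∀ u, Closer T v x u → ∃ p : T.Walk x v, p.IsPath ∧ p.snd = u := by
    intro u h
    obtain ⟨q, hq⟩ := (hT.1.preconnected u v).exists_walk_length_eq_dist
    refine ⟨SimpleGraph.Walk.cons h.1 q, ?_, by simp⟩
    apply SimpleGraph.Walk.isPath_of_length_eq_dist
    have h1 := T.dist_le (SimpleGraph.Walk.cons h.1 q)
    have := h.2
    simp at h1 ⊢
    omega
  obtain ⟨p, hp, rfl⟩ := key u h
  obtain ⟨p', hp', rfl⟩ := key u' h'
  have := (hT.2.subsingleton_path x v).elim ⟨p, hp⟩ ⟨p', hp'⟩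
  have : p = p' := congrArg Subtype.val this
  rw [this]

lemma adj_closer {T : SimpleGraph V} (hT : T.IsTree) (v : V) {x u : V} (h : T.Adj x u) :
    (Closer T v x u ∧ T.dist x v = T.dist u v + 1) ∨
    (Closer T v u x ∧ T.dist u v = T.dist x v + 1) := by
  have := hT.dist_eq_dist_add_one_of_adj v h
  rw [T.dist_comm (u := v), T.dist_comm (u := v)] at this
  rcases this with h1 | h1
  · left; exact ⟨⟨h, by omega⟩, h1⟩
  · right; exact ⟨⟨h.symm, by omega⟩, h1⟩

lemma Closer.dist_eq {T : SimpleGraph V} (hT : T.IsTree) {v x u : V} (h : Closer T v x u) :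
    T.dist x v = T.dist u v + 1 := by
  rcases adj_closer hT v h.1 with h1 | h1
  · exact h1.2
  · have := h.2; have := h1.2; omega

lemma Closer.asymm {T : SimpleGraph V} {v x u : V} (h : Closer T v x u) : ¬ Closer T v u x := by
  intro h'
  have := h.2; have := h'.2; omega

def exch {V : Type*} (T : SimpleGraph V) (a b v w : V) : SimpleGraph V :=
  SimpleGraph.fromEdgeSet ((T.edgeSet \ {s(a,b)}) ∪ {s(v,w)})

lemma exch_adj {T : SimpleGraph V} {a b v w : V} (hvw : v ≠ w) (x y : V) :
    (exch T a b v w).Adj x y ↔ (T.Adj x y ∧ s(x,y) ≠ s(a,b)) ∨ s(x,y) = s(v,w) := by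
  unfold exch
  rw [SimpleGraph.fromEdgeSet_adj]
  simp only [Set.mem_union, Set.mem_sdiff, SimpleGraph.mem_edgeSet, Set.mem_singleton_iff]
  constructor
  · rintro ⟨h, -⟩; exact h
  · intro h
    refine ⟨h, ?_⟩
    rintro rfl
    rcases h with h | h
    · exact T.irrefl h.1
    · rw [Sym2.eq_iff] at h
      rcases h with h | h
      · exact hvw (h.1 ▸ h.2)
      · exact hvw (h.2 ▸ h.1)

lemma exch_tree {T : SimpleGraph V} (hT : T.IsTree) {a b v w : V} (hvw : v ≠ w)
    (h1 : Closer T v a b) (h2 : Closer T w b a) (hn : ¬ T.Adj v w) :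
    (exch T a b v w).IsTree := by
  set T' := exch T a b v w with hT'
  have hadj := exch_adj (T := T) (a := a) (b := b) hvw
  have hvwa : T'.Adj v w := by rw [hT', hadj]; right; rfl
  have A : ∀ (v a b : V), Closer T v a b → (∀ x y, T.Adj x y → s(x,y) ≠ s(a,b) → T'.Adj x y) →
      ∀ n x, T.dist x v = n → T.dist x v < T.dist a v → T'.Reachable x v := by
    intro v a b h1 hh n
    induction n using Nat.strong_induction_on with
    | _ n ih =>
      intro x hx hlt
      by_cases hxv : x = v
      · subst hxv; exact SimpleGraph.Reachable.refl _
      · obtain ⟨u, hu⟩ := exists_closer hT hxv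
        have hd := hu.2
        refine SimpleGraph.Reachable.trans (SimpleGraph.Adj.reachable (hh x u hu.1 ?_))
          (ih _ (by rw [← hx]; exact hd) u rfl (by omega))
        intro he
        rw [Sym2.eq_iff] at he
        rcases he with ⟨rfl, rfl⟩ | ⟨rfl, rfl⟩ <;> omega
  have hbv : T'.Reachable b v := A v a b h1 (fun x y h hne => (hadj x y).2 (Or.inl ⟨h, hne⟩)) _ b rfl h1.2
  have haw : T'.Reachable a w := A w b a h2
    (fun x y h hne => (hadj x y).2 (Or.inl ⟨h, by rw [Sym2.eq_swap (a := a)]; exact hne⟩)) _ a rfl h2.2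
  have hab : T'.Reachable a b := haw.trans (hvwa.symm.reachable.trans hbv.symm)
  have hedge : ∀ x y, T.Adj x y → T'.Reachable x y := by
    intro x y h
    by_cases he : s(x,y) = s(a,b)
    · rw [Sym2.eq_iff] at he
      rcases he with ⟨rfl, rfl⟩ | ⟨rfl, rfl⟩
      · exact hab
      · exact hab.symm
    · exact ((hadj x y).2 (Or.inl ⟨h, he⟩)).reachable
  have hconn : T'.Connected := by
    have := hT.1.nonempty
    refine SimpleGraph.Connected.mk ?_
    intro x y
    obtain ⟨p⟩ := hT.1.preconnected x y
    induction p with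
    | nil => exact SimpleGraph.Reachable.refl _
    | cons h q ih => exact (hedge _ _ h).trans ih
  rw [SimpleGraph.isTree_iff_connected_and_card]
  refine ⟨hconn, ?_⟩
  rw [← (SimpleGraph.isTree_iff_connected_and_card.1 hT).2]
  congr 1
  have he : T'.edgeSet = insert s(v,w) (T.edgeSet \ {s(a,b)}) := by
    ext e
    induction e using Sym2.ind with
    | _ x y =>
      rw [SimpleGraph.mem_edgeSet, hT', hadj]
      simp only [Set.mem_insert_iff, Set.mem_sdiff, SimpleGraph.mem_edgeSet, Set.mem_singleton_iff]
      tauto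
  rw [Nat.card_coe_set_eq, Nat.card_coe_set_eq, he]
  rw [Set.ncard_insert_of_notMem (by simp [hn])]
  exact Set.ncard_sdiff_singleton_add_one (by simpa using h1.1)

lemma exch_dg {T : SimpleGraph V} {a b v w : V} (hvw : v ≠ w)
    (hab : T.Adj a b) (hn : ¬ T.Adj v w) (u : V) :
    dg (exch T a b v w) u + ((if u = a then 1 else 0) + (if u = b then 1 else 0)) =
      dg T u + ((if u = v then 1 else 0) + (if u = w then 1 else 0)) := by
  have aux : ∀ a b : V, a ≠ b → ((if u = a then 1 else 0) + (if u = b then 1 else 0)) =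
      ∑ y : V, (if s(u,y) = s(a,b) then 1 else 0) := by
    intro a b hab
    by_cases hua : u = a
    · subst hua
      simp [Sym2.eq_iff, hab]
    · by_cases hub : u = b
      · subst hub
        simp [Sym2.eq_iff, hua]
      · simp [Sym2.eq_iff, hua, hub]
  rw [aux a b hab.ne, aux v w hvw]
  unfold dg
  rw [Finset.card_filter, Finset.card_filter, ← Finset.sum_add_distrib, ← Finset.sum_add_distrib]
  apply Finset.sum_congr rfl
  intro y _
  have h1 := exch_adj (T := T) (a := a) (b := b) hvw u y
  have h2 : s(u,y) = s(a,b) → T.Adj u y := by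
    intro h; rw [← SimpleGraph.mem_edgeSet, h]; exact hab
  have h3 : s(u,y) = s(v,w) → ¬ T.Adj u y := by
    intro h; rw [← SimpleGraph.mem_edgeSet, h]; exact hn
  split_ifs <;> first | rfl | (exfalso; tauto)

lemma exch_le {G T : SimpleGraph V} {a b v w : V} (hTG : T ≤ G) (h : G.Adj v w) :
    exch T a b v w ≤ G := by
  intro x y hxy
  rw [exch_adj h.ne] at hxy
  rcases hxy with h1 | h1
  · exact hTG h1.1
  · rw [← SimpleGraph.mem_edgeSet, h1]; exact h

/-- betweenness -/
lemma between_closer {T : SimpleGraph V} (hT : T.IsTree) {v w x b : V}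
    (hx : T.dist v x + T.dist x w = T.dist v w) (h : Closer T v x b) :
    Closer T w b x ∧ T.dist v b + T.dist b w = T.dist v w := by
  have h1 := h.dist_eq hT
  rcases adj_closer hT w h.1 with h2 | h2
  · exfalso
    have h3 := hT.1.dist_triangle (u := v) (v := b) (w := w)
    rw [T.dist_comm (u := x) (v := v), T.dist_comm (u := b) (v := v)] at h1
    omega
  · refine ⟨h2.1, ?_⟩
    rw [T.dist_comm (u := x) (v := v), T.dist_comm (u := b) (v := v)] at h1
    omega

lemma two_le_dg {T : SimpleGraph V} {x b c : V} (hb : T.Adj x b) (hc : T.Adj x c) (hbc : b ≠ c) :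
    2 ≤ dg T x := by
  have : ({b, c} : Finset V) ⊆ univ.filter fun u => T.Adj x u := by
    intro u; simp; rintro (rfl | rfl) <;> assumption
  have := Finset.card_le_card this
  rw [Finset.card_pair hbc] at this
  exact this

lemma dg_one_unique {T : SimpleGraph V} {x b c : V} (h : dg T x = 1) (hb : T.Adj x b) (hc : T.Adj x c) :
    b = c := by
  by_contra hne
  have := two_le_dg hb hc hne
  omega

lemma dg_two_cases {T : SimpleGraph V} {x b c u : V} (h : dg T x ≤ 2) (hb : T.Adj x b) (hc : T.Adj x c)
    (hbc : b ≠ c) (hu : T.Adj x u) : u = b ∨ u = c := by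
  by_contra hne
  push Not at hne
  have : ({b, c, u} : Finset V) ⊆ univ.filter fun u => T.Adj x u := by
    intro z; simp; rintro (rfl | rfl | rfl) <;> assumption
  have := Finset.card_le_card this
  rw [Finset.card_eq_three.2 ⟨b, c, u, hbc, hne.1.symm, hne.2.symm, rfl⟩] at this
  unfold dg at h
  omega

lemma closed_univ {T : SimpleGraph V} (hT : T.Connected) (P : V → Prop) (v : V) (hv : P v)
    (h : ∀ x u, P x → T.Adj x u → P u) (x : V) : P x := by
  obtain ⟨p⟩ := hT.preconnected v x
  revert hv
  induction p with
  | nil => exact id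
  | cons hh q ih => exact fun hv => ih (h _ _ hv hh)

/-- in a tree with at least three leaves, the path between two leaves has a branch vertex -/
lemma exists_branch {T : SimpleGraph V} (hT : T.IsTree) (h3 : 3 ≤ (lv T).card) {v w : V}
    (hvw : v ≠ w) (hv : dg T v = 1) (hw : dg T w = 1) :
    ∃ x, x ≠ v ∧ x ≠ w ∧ T.dist v x + T.dist x w = T.dist v w ∧ 3 ≤ dg T x := by
  by_contra hcon
  push Not at hcon
  have two : ∀ x, x ≠ v → x ≠ w → T.dist v x + T.dist x w = T.dist v w → ∃ b c,
      Closer T v x b ∧ Closer T w x c ∧ b ≠ c := by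
    intro x hxv hxw hx
    obtain ⟨b, hb⟩ := exists_closer hT hxv
    obtain ⟨c, hc⟩ := exists_closer hT hxw
    refine ⟨b, c, hb, hc, ?_⟩
    rintro rfl
    exact hc.asymm (between_closer hT hx hb).1
  have swap : ∀ x c, T.dist v x + T.dist x w = T.dist v w → Closer T w x c →
      T.dist v c + T.dist c w = T.dist v w := by
    intro x c hx hc
    have := (between_closer (v := w) (w := v) hT (by
      rw [T.dist_comm (u := w) (v := x), T.dist_comm (u := x) (v := v), T.dist_comm (u := w) (v := v)]
      omega) hc).2
    rw [T.dist_comm (u := w) (v := c), T.dist_comm (u := c) (v := v), T.dist_comm (u := w) (v := v)] at this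
    omega
  have hall := closed_univ hT.1 (fun x => T.dist v x + T.dist x w = T.dist v w) v (by simp) (by
    intro x u hx hxu
    by_cases hxv : x = v
    · by_cases hxw : x = w
      · exact absurd (hxv.symm.trans hxw) hvw
      · obtain ⟨c, hc⟩ := exists_closer hT hxw
        have : u = c := dg_one_unique (by rw [hxv]; exact hv) hxu hc.1
        rw [this]; exact swap x c hx hc
    · by_cases hxw : x = w
      · obtain ⟨c, hc⟩ := exists_closer hT hxv
        have : u = c := dg_one_unique (by rw [hxw]; exact hw) hxu hc.1
        rw [this]; exact (between_closer hT hx hc).2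
      · obtain ⟨b, c, hb, hc, hbc⟩ := two x hxv hxw hx
        rcases dg_two_cases (by have := hcon x hxv hxw hx; omega) hb.1 hc.1 hbc hxu with rfl | rfl
        · exact (between_closer hT hx hb).2
        · exact swap x u hx hc)
  have hsub : lv T ⊆ {v, w} := by
    intro x hx
    by_contra hne
    simp at hne
    obtain ⟨b, c, hb, hc, hbc⟩ := two x hne.1 hne.2 (hall x)
    have := two_le_dg hb.1 hc.1 hbc
    simp [lv] at hx
    omega
  have := Finset.card_le_card hsub
  have := Finset.card_le_two (a := v) (b := w)
  omega


lemma leaves_indep {G T : SimpleGraph V} (hM : IsMinT G T) (h3 : 3 ≤ (lv T).card) {v w : V}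
    (hv : dg T v = 1) (hw : dg T w = 1) : ¬ G.Adj v w := by
  intro hG
  have hvw := hG.ne
  obtain ⟨hTG, hT, hmin⟩ := hM
  obtain ⟨x, hxv, hxw, hx, hx3⟩ := exists_branch hT h3 hvw hv hw
  obtain ⟨b, hb⟩ := exists_closer hT hxv
  have hb' := between_closer hT hx hb
  have hn : ¬ T.Adj v w := by
    intro h
    rw [← SimpleGraph.dist_eq_one_iff_adj] at h
    have h1 := hT.1.pos_dist_of_ne hxv
    have h2 := hT.1.pos_dist_of_ne hxw
    rw [T.dist_comm] at h1
    omega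
  have ht := exch_tree hT hvw hb hb'.1 hn
  have hdg := exch_dg (a := x) (b := b) hvw hb.1 hn
  have hle := hmin _ (exch_le hTG hG) ht
  have hbw : b ≠ w := by
    rintro rfl
    have := hb'.1.2
    simp at this
  have hxb := hb.1.ne
  have hsub : lv (exch T x b v w) ⊆ if b = v then (lv T).erase w else insert b (((lv T).erase v).erase w) := by
    intro u hu
    have hu1 : dg (exch T x b v w) u = 1 := by simpa [lv] using hu
    have hd := hdg u
    rw [hu1] at hd
    split_ifs with hbv
    · subst hbv
      rw [Finset.mem_erase]
      by_cases h1 : u = x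
      · subst h1; simp [hxb, hxw] at hd; omega
      · by_cases h2 : u = b
        · subst h2; exact ⟨hvw, by simp [lv, hv]⟩
        · by_cases h3 : u = w
          · subst h3; simp [h1, h2] at hd; omega
          · simp [h1, h2, h3] at hd; exact ⟨h3, by simp [lv, hd]⟩
    · rw [Finset.mem_insert, Finset.mem_erase, Finset.mem_erase]
      by_cases h1 : u = x
      · subst h1; simp [hxb, hxw, hxv] at hd; omega
      · by_cases h2 : u = b
        · left; exact h2
        · right
          by_cases h3 : u = w
          · subst h3; simp [h1, h2, hvw.symm] at hd; omega
          · by_cases h4 : u = v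
            · subst h4; simp [h1, h2, hvw] at hd; omega
            · simp [h1, h2, h3, h4] at hd; exact ⟨h3, h4, by simp [lv, hd]⟩
  have hc := Finset.card_le_card hsub
  have hvl : v ∈ lv T := by simp [lv, hv]
  have hwl : w ∈ lv T := by simp [lv, hw]
  split_ifs at hc with hbv
  · rw [Finset.card_erase_of_mem hwl] at hc
    omega
  · have h1 := Finset.card_insert_le b (((lv T).erase v).erase w)
    rw [Finset.card_erase_of_mem (by simp [hwl, hvw.symm]), Finset.card_erase_of_mem hvl] at h1
    omega

/-- rotation -/
lemma rot_lemma {G T : SimpleGraph V} (hM : IsMinT G T) {v w w' : V}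
    (hv : dg T v = 1) (hG : G.Adj v w) (hc : Closer T v w w') (hne : w' ≠ v) :
    IsMinT G (exch T w w' v w) ∧ (lv (exch T w w' v w)).card = (lv T).card ∧
    dg T w' = 2 ∧ dg (exch T w w' v w) v = 2 ∧ dg (exch T w w' v w) w' = 1 ∧
    (∀ u, u ≠ v → u ≠ w' → dg (exch T w w' v w) u = dg T u) ∧ ¬ T.Adj v w := by
  have hvw := hG.ne
  obtain ⟨hTG, hT, hmin⟩ := hM
  have hn : ¬ T.Adj v w := by
    intro h
    have : Closer T v w v := by
      refine ⟨h.symm, ?_⟩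
      have := hT.1.pos_dist_of_ne hvw.symm
      simpa using this
    exact hne (closer_unique hT hc this)
  have hc2 : Closer T w w' w := by
    refine ⟨hc.1.symm, ?_⟩
    have := hT.1.pos_dist_of_ne hc.1.ne.symm
    simpa using this
  have ht := exch_tree hT hvw hc hc2 hn
  have hdg := exch_dg (a := w) (b := w') hvw hc.1 hn
  have hle := hmin _ (exch_le hTG hG) ht
  have hww := hc.1.ne
  obtain ⟨b, hb⟩ := exists_closer hT hne
  have hbw : w ≠ b := by
    rintro rfl
    exact hb.asymm hc
  have h2 := two_le_dg hc2.1 hb.1 hbw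
  have dv : dg (exch T w w' v w) v = 2 := by
    have := hdg v
    simp [hvw, hne.symm] at this
    omega
  have dw : dg (exch T w w' v w) w' + 1 = dg T w' := by
    have := hdg w'
    simp [hne, hww.symm] at this
    omega
  have du : ∀ u, u ≠ v → u ≠ w' → dg (exch T w w' v w) u = dg T u := by
    intro u h1 h2
    have := hdg u
    simp [h1, h2] at this
    omega
  have hvl : v ∈ lv T := by simp [lv, hv]
  have hsub : lv (exch T w w' v w) ⊆ insert w' ((lv T).erase v) := by
    intro u hu
    have hu1 : dg (exch T w w' v w) u = 1 := by simpa [lv] using hu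
    rw [Finset.mem_insert, Finset.mem_erase]
    by_cases h1 : u = w'
    · left; exact h1
    · right
      have h3 : u ≠ v := by rintro rfl; omega
      exact ⟨h3, by rw [du u h3 h1] at hu1; simp [lv, hu1]⟩
  have hpos : 0 < (lv T).card := Finset.card_pos.2 ⟨v, hvl⟩
  have hd2 : dg T w' = 2 := by
    by_contra hd2
    have hsub' : lv (exch T w w' v w) ⊆ (lv T).erase v := by
      intro u hu
      have := hsub hu
      rw [Finset.mem_insert] at this
      rcases this with rfl | h
      · simp [lv] at hu; omega
      · exact h
    have h1 := Finset.card_le_card hsub'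
    rw [Finset.card_erase_of_mem hvl] at h1
    omega
  have hcard : (lv (exch T w w' v w)).card ≤ (lv T).card := by
    have h1 := Finset.card_le_card hsub
    have h3 := Finset.card_insert_le w' ((lv T).erase v)
    rw [Finset.card_erase_of_mem hvl] at h3
    omega
  refine ⟨⟨exch_le hTG hG, ht, fun T' h1 h2 => hcard.trans (hmin T' h1 h2)⟩, le_antisymm hcard hle,
    hd2, dv, by omega, du, hn⟩

end tree

inductive Reach {V : Type*} (G T0 : SimpleGraph V) (y : V) : SimpleGraph V → V → Prop
  | base : Reach G T0 y T0 y
  | step (T : SimpleGraph V) (v w w' : V) : Reach G T0 y T v → G.Adj v w → Closer T v w w' → w' ≠ v →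
      Reach G T0 y (exch T w w' v w) w'

noncomputable def YS {V : Type*} [Fintype V] (G T0 : SimpleGraph V) (y : V) : Finset V :=
  univ.filter fun v => ∃ T, Reach G T0 y T v

noncomputable def SS {V : Type*} [Fintype V] (T0 : SimpleGraph V) (y : V) : Finset V :=
  (lv T0).erase y

noncomputable def CS {V : Type*} [Fintype V] (G T0 : SimpleGraph V) (y : V) : Finset V :=
  univ.filter fun v => v ∉ YS G T0 y ∧ v ∉ SS T0 y

noncomputable def DD {V : Type*} [Fintype V] (T0 : SimpleGraph V) (y u : V) : ℕ :=
  if u = y then 2 else dg T0 u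

structure Setup {V : Type*} [Fintype V] (G T0 : SimpleGraph V) (y : V) : Prop where
  hM : IsMinT G T0
  h3 : 3 ≤ (lv T0).card
  hy : dg T0 y = 1
  hmax : ∀ (T : SimpleGraph V) (z : V), IsMinT G T → dg T z = 1 → dg G z ≤ dg G y

section reach
variable {V : Type*} [Fintype V] {G T0 : SimpleGraph V} {y : V}
set_option linter.unusedSectionVars false

lemma reach_mem {T : SimpleGraph V} {v : V} (h : Reach G T0 y T v) : v ∈ YS G T0 y := by
  simp only [YS, Finset.mem_filter, Finset.mem_univ, true_and]
  exact ⟨T, h⟩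

lemma reach_inv (S : Setup G T0 y) {T : SimpleGraph V} {v : V} (h : Reach G T0 y T v) :
    IsMinT G T ∧ (lv T).card = (lv T0).card ∧ dg T v = 1 ∧ (∀ u, u ≠ v → dg T u = DD T0 y u) ∧
      DD T0 y v = 2 ∧
    (∀ c c', c ∉ YS G T0 y → c' ∉ YS G T0 y → (T.Adj c c' ↔ T0.Adj c c')) := by
  induction h with
  | base =>
    refine ⟨S.hM, rfl, S.hy, ?_, by simp [DD], fun _ _ _ _ => Iff.rfl⟩
    intro u hu
    simp [DD, hu]
  | step T v w w' hr hG hc hne ih =>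
    obtain ⟨i1, i2, i3, i4, i5, i6⟩ := ih
    obtain ⟨r1, r2, r3, r4, r5, r6, r7⟩ := rot_lemma i1 i3 hG hc hne
    have hv := reach_mem hr
    have hw' := reach_mem (Reach.step T v w w' hr hG hc hne)
    refine ⟨r1, r2.trans i2, r5, ?_, ?_, ?_⟩
    · intro u hu
      by_cases huv : u = v
      · subst huv; rw [r4, i5]
      · rw [r6 u huv hu, i4 u huv]
    · rw [← i4 w' hne, r3]
    · intro c c' h1 h2
      rw [← i6 c c' h1 h2, exch_adj hG.ne]
      have e1 : s(c,c') ≠ s(w,w') := by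
        intro he
        rw [Sym2.eq_iff] at he
        rcases he with ⟨rfl, rfl⟩ | ⟨rfl, rfl⟩
        · exact h2 hw'
        · exact h1 hw'
      have e2 : s(c,c') ≠ s(v,w) := by
        intro he
        rw [Sym2.eq_iff] at he
        rcases he with ⟨rfl, rfl⟩ | ⟨rfl, rfl⟩
        · exact h1 hv
        · exact h2 hv
      tauto

lemma exists_reach {v : V} (h : v ∈ YS G T0 y) : ∃ T, Reach G T0 y T v := by
  simpa [YS] using h

lemma y_mem : y ∈ YS G T0 y := reach_mem Reach.base

lemma DD_of_S (S : Setup G T0 y) {z : V} (hz : z ∈ SS T0 y) : DD T0 y z = 1 := by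
  simp [SS, lv] at hz
  simp [DD, hz]

lemma DD_of_Y (S : Setup G T0 y) {z : V} (hz : z ∈ YS G T0 y) : DD T0 y z = 2 := by
  obtain ⟨T, hT⟩ := exists_reach hz
  exact (reach_inv S hT).2.2.2.2.1

lemma S_notin_Y (S : Setup G T0 y) {z : V} (hz : z ∈ SS T0 y) : z ∉ YS G T0 y := by
  intro h
  have := DD_of_S S hz
  have := DD_of_Y S h
  omega

lemma S_leaf (S : Setup G T0 y) {z : V} (hz : z ∈ SS T0 y) {T : SimpleGraph V} {v : V}
    (h : Reach G T0 y T v) : dg T z = 1 := by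
  have hne : z ≠ v := by rintro rfl; exact S_notin_Y S hz (reach_mem h)
  rw [(reach_inv S h).2.2.2.1 z hne, DD_of_S S hz]

lemma S_Y_nonadj (S : Setup G T0 y) {z v : V} (hz : z ∈ SS T0 y) (hv : v ∈ YS G T0 y) : ¬ G.Adj z v := by
  obtain ⟨T, hT⟩ := exists_reach hv
  have hi := reach_inv S hT
  exact leaves_indep hi.1 (by rw [hi.2.1]; exact S.h3) (S_leaf S hz hT) hi.2.2.1

lemma S_S_nonadj (S : Setup G T0 y) {z v : V} (hz : z ∈ SS T0 y) (hv : v ∈ SS T0 y) : ¬ G.Adj z v :=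
  leaves_indep S.hM S.h3 (S_leaf S hz Reach.base) (S_leaf S hv Reach.base)

lemma mem_C {x : V} : x ∈ CS G T0 y ↔ x ∉ YS G T0 y ∧ x ∉ SS T0 y := by simp [CS]

lemma S_nbr (S : Setup G T0 y) {z u : V} (hz : z ∈ SS T0 y) (h : G.Adj z u) : u ∈ CS G T0 y := by
  rw [mem_C]
  exact ⟨fun h' => S_Y_nonadj S hz h' h, fun h' => S_S_nonadj S hz h' h⟩

/-- neighbours of `v ∈ Y` have parent in `Y` -/
lemma Y_nbr (S : Setup G T0 y) {T : SimpleGraph V} {v u w' : V} (h : Reach G T0 y T v)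
    (hG : G.Adj v u) (hc : Closer T v u w') : w' ∈ YS G T0 y := by
  by_cases hne : w' = v
  · subst hne; exact reach_mem h
  · exact reach_mem (Reach.step T v u w' h hG hc hne)

noncomputable def par (T : SimpleGraph V) (v x : V) : V :=
  if h : ∃ u, Closer T v x u then h.choose else x

lemma par_closer {T : SimpleGraph V} (hT : T.IsTree) {v x : V} (h : x ≠ v) : Closer T v x (par T v x) := by
  have h := exists_closer hT h
  unfold par
  rw [dif_pos h]
  exact h.choose_spec

lemma closer_iff {T : SimpleGraph V} (hT : T.IsTree) {v x u : V} :
    Closer T v x u ↔ x ≠ v ∧ par T v x = u := by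
  constructor
  · intro h
    have hne : x ≠ v := by
      rintro rfl
      have := h.2
      simp at this
    exact ⟨hne, closer_unique hT (par_closer hT hne) h⟩
  · rintro ⟨h, rfl⟩
    exact par_closer hT h

lemma child_card {T : SimpleGraph V} (hT : T.IsTree) (v u : V) :
    (univ.filter fun x => Closer T v x u).card + (if u = v then 0 else 1) = dg T u := by
  have h1 : (univ.filter fun x => Closer T v u x).card = if u = v then 0 else 1 := by
    split_ifs with h
    · rw [Finset.card_eq_zero, Finset.filter_eq_empty_iff]
      intro x _ hx
      exact ((closer_iff hT).1 hx).1 h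
    · rw [Finset.card_eq_one]
      refine ⟨par T v u, ?_⟩
      ext x
      simp [closer_iff hT, h, eq_comm]
  rw [← h1, ← Finset.card_union_of_disjoint]
  · unfold dg
    congr 1
    ext x
    simp only [Finset.mem_union, Finset.mem_filter, Finset.mem_univ, true_and]
    constructor
    · rintro (h | h)
      · exact h.1.symm
      · exact h.1
    · intro h
      rcases adj_closer hT v h with h | h
      · exact Or.inr h.1
      · exact Or.inl h.1
  · rw [Finset.disjoint_filter]
    intro x _ h h'
    exact h.asymm h'

lemma S_no_child (S : Setup G T0 y) {T : SimpleGraph V} {v x z : V} (h : Reach G T0 y T v)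
    (hz : z ∈ SS T0 y) : ¬ Closer T v x z := by
  intro hc
  have hne : z ≠ v := by rintro rfl; exact S_notin_Y S hz (reach_mem h)
  have h1 := child_card (reach_inv S h).1.2.1 v z
  rw [S_leaf S hz h, if_neg hne] at h1
  have : (univ.filter fun x => Closer T v x z) = ∅ := Finset.card_eq_zero.1 (by omega)
  have h2 : x ∈ (univ.filter fun x => Closer T v x z) := by simp [hc]
  rw [this] at h2
  simp at h2

lemma Y_child (S : Setup G T0 y) {T : SimpleGraph V} {v u : V} (h : Reach G T0 y T v)
    (hu : u ∈ YS G T0 y) : (univ.filter fun x => Closer T v x u).card = 1 := by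
  have hi := reach_inv S h
  have h1 := child_card hi.1.2.1 v u
  split_ifs at h1 with huv
  · subst huv; omega
  · rw [hi.2.2.2.1 u huv, DD_of_Y S hu] at h1
    omega

/-- vertices whose parent lies in `Y` -/
noncomputable def AY (G T0 : SimpleGraph V) (y : V) (T : SimpleGraph V) (v : V) : Finset V :=
  univ.filter fun x => x ≠ v ∧ par T v x ∈ YS G T0 y

lemma AY_card (S : Setup G T0 y) {T : SimpleGraph V} {v : V} (h : Reach G T0 y T v) :
    (AY G T0 y T v).card = (YS G T0 y).card := by
  have hT := (reach_inv S h).1.2.1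
  rw [Finset.card_eq_sum_card_fiberwise (f := par T v) (t := YS G T0 y)
    (by intro x hx; simp [AY] at hx; exact hx.2)]
  rw [Finset.card_eq_sum_ones]
  apply Finset.sum_congr rfl
  intro u hu
  rw [← Y_child S h hu]
  congr 1
  ext x
  simp only [AY, Finset.mem_filter, Finset.mem_univ, true_and, closer_iff hT]
  constructor
  · rintro ⟨⟨h1, h2⟩, h3⟩; exact ⟨h1, h3⟩
  · rintro ⟨h1, h2⟩; exact ⟨⟨h1, h2 ▸ hu⟩, h2⟩

lemma AY_cases (S : Setup G T0 y) {T : SimpleGraph V} {v : V} (h : Reach G T0 y T v) {x : V}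
    (hx : x ∈ AY G T0 y T v) : x ∈ CS G T0 y ∨ x ∈ (YS G T0 y).erase v := by
  have hi := reach_inv S h
  simp only [AY, Finset.mem_filter, Finset.mem_univ, true_and] at hx
  by_cases hY : x ∈ YS G T0 y
  · right; simp [hY, hx.1]
  · left
    rw [mem_C]
    refine ⟨hY, ?_⟩
    intro hS
    exact S_Y_nonadj S hS hx.2 (hi.1.1 (par_closer hi.1.2.1 hx.1).1)

noncomputable def pairC (G T0 : SimpleGraph V) (y : V) : ℕ :=
  ∑ w ∈ CS G T0 y, ((CS G T0 y).filter fun w' => T0.Adj w w').card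

/-- main count -/
lemma count (S : Setup G T0 y) {T : SimpleGraph V} {v : V} (h : Reach G T0 y T v) :
    2 * ((CS G T0 y).card) = pairC G T0 y + 2 * ((AY G T0 y T v) ∩ CS G T0 y).card ∧
    (YS G T0 y).card = ((AY G T0 y T v) ∩ CS G T0 y).card +
      ((AY G T0 y T v) ∩ (YS G T0 y).erase v).card := by
  have hi := reach_inv S h
  have hT := hi.1.2.1
  have hvC : v ∉ CS G T0 y := by
    rw [mem_C]; intro hh; exact hh.1 (reach_mem h)
  constructor
  · set R := (CS G T0 y).filter fun x => par T v x ∈ CS G T0 y with hR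
    have h1 : (CS G T0 y).card = R.card + ((AY G T0 y T v) ∩ CS G T0 y).card := by
      rw [← Finset.card_filter_add_card_filter_not (s := CS G T0 y) (fun x => par T v x ∈ CS G T0 y)]
      congr 2
      ext x
      simp only [Finset.mem_filter, Finset.mem_inter, AY, Finset.mem_univ, true_and]
      constructor
      · rintro ⟨hx, hp⟩
        have hxv : x ≠ v := by rintro rfl; exact hvC hx
        refine ⟨⟨hxv, ?_⟩, hx⟩
        by_contra hY
        apply hp
        rw [mem_C]
        exact ⟨hY, fun hS => S_no_child S h hS (par_closer hT hxv)⟩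
      · rintro ⟨⟨hxv, hY⟩, hx⟩
        refine ⟨hx, ?_⟩
        rw [mem_C]; tauto
    have h2 : pairC G T0 y = 2 * R.card := by
      have e1 : pairC G T0 y = ∑ w ∈ CS G T0 y, ∑ w' ∈ CS G T0 y,
          ((if Closer T v w w' then 1 else 0) + (if Closer T v w' w then 1 else 0)) := by
        unfold pairC
        apply Finset.sum_congr rfl
        intro w hw
        rw [Finset.card_filter]
        apply Finset.sum_congr rfl
        intro w' hw'
        have hh := hi.2.2.2.2.2 w w' (mem_C.1 hw).1 (mem_C.1 hw').1
        by_cases hadj : T0.Adj w w'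
        · rcases adj_closer hT v (hh.2 hadj) with hc | hc
          · simp [hadj, hc.1, hc.1.asymm]
          · simp [hadj, hc.1, hc.1.asymm]
        · have c1 : ¬ Closer T v w w' := fun hc => hadj (hh.1 hc.1)
          have c2 : ¬ Closer T v w' w := fun hc => hadj (hh.1 hc.1.symm)
          simp [hadj, c1, c2]
      have e2 : ∑ w ∈ CS G T0 y, ∑ w' ∈ CS G T0 y, (if Closer T v w w' then 1 else 0) = R.card := by
        rw [hR, Finset.card_filter]
        apply Finset.sum_congr rfl
        intro w hw
        have hwv : w ≠ v := by rintro rfl; exact hvC hw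
        simp only [closer_iff hT, hwv, ne_eq, not_false_eq_true, true_and]
        simp
      rw [e1]
      simp only [Finset.sum_add_distrib]
      rw [Finset.sum_comm (f := fun w w' => if Closer T v w' w then 1 else 0), e2]
      omega
    omega
  · rw [← AY_card S h, ← Finset.card_union_of_disjoint]
    · congr 1
      ext x
      simp only [Finset.mem_union, Finset.mem_inter]
      constructor
      · intro hx
        rcases AY_cases S h hx with h1 | h1
        · exact Or.inl ⟨hx, h1⟩
        · exact Or.inr ⟨hx, h1⟩
      · rintro (h1 | h1) <;> exact h1.1
    · rw [Finset.disjoint_left]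
      intro x h1 h2
      simp only [Finset.mem_inter, Finset.mem_erase] at h1 h2
      exact (mem_C.1 h1.2).1 h2.2.2

lemma nbr_sub_AY (S : Setup G T0 y) {T : SimpleGraph V} {v : V} (h : Reach G T0 y T v) {u : V}
    (hu : G.Adj v u) : u ∈ AY G T0 y T v := by
  have hT := (reach_inv S h).1.2.1
  simp only [AY, Finset.mem_filter, Finset.mem_univ, true_and]
  exact ⟨hu.ne.symm, Y_nbr S h hu (par_closer hT hu.ne.symm)⟩

/-- summary of numeric information -/
lemma count_summary (S : Setup G T0 y) : ∃ s P p : ℕ, pairC G T0 y = 2 * s ∧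
    (CS G T0 y).card = P + 1 + s ∧ (YS G T0 y).card = P + p + 1 ∧
    (∀ v ∈ YS G T0 y, ((YS G T0 y).filter fun u => G.Adj v u).card ≤ p) ∧
    (∀ v ∈ YS G T0 y, dg G v ≤ (YS G T0 y).card) ∧
    (∀ v ∈ SS T0 y, dg G v ≤ (YS G T0 y).card) := by
  have key : ∀ v ∈ YS G T0 y, dg G v ≤ (YS G T0 y).card := by
    intro v hv
    obtain ⟨T, h⟩ := exists_reach hv
    rw [← AY_card S h]
    apply Finset.card_le_card
    intro u hu
    exact nbr_sub_AY S h (by simpa using hu)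
  obtain ⟨c1, c2⟩ := count S (Reach.base (G := G) (T0 := T0) (y := y))
  have hA : ((AY G T0 y T0 y) ∩ (YS G T0 y).erase y).card ≤ (YS G T0 y).card - 1 := by
    rw [← Finset.card_erase_of_mem (y_mem (G := G) (T0 := T0) (y := y))]
    exact Finset.card_le_card Finset.inter_subset_right
  have hpos : 0 < (YS G T0 y).card := Finset.card_pos.2 ⟨y, y_mem⟩
  refine ⟨(CS G T0 y).card - ((AY G T0 y T0 y) ∩ CS G T0 y).card,
    ((AY G T0 y T0 y) ∩ CS G T0 y).card - 1,
    ((AY G T0 y T0 y) ∩ (YS G T0 y).erase y).card, by omega, by omega, by omega, ?_, key, ?_⟩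
  · intro v hv
    obtain ⟨T, h⟩ := exists_reach hv
    obtain ⟨d1, d2⟩ := count S h
    have : ((YS G T0 y).filter fun u => G.Adj v u).card ≤ ((AY G T0 y T v) ∩ (YS G T0 y).erase v).card := by
      apply Finset.card_le_card
      intro u hu
      simp only [Finset.mem_filter, Finset.mem_inter, Finset.mem_erase] at hu ⊢
      exact ⟨nbr_sub_AY S h hu.2, hu.2.ne.symm, hu.1⟩
    omega
  · intro z hz
    exact (S.hmax T0 z S.hM (S_leaf S hz Reach.base)).trans (key y y_mem)

end reach

lemma item7_abs {V : Type*} (C : Finset V) (R : V → V → Prop) (hR : ∀ x y, R x y → R y x)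
    (k θ Q W : ℝ) (hk : 1 ≤ k) (hθ : 0 ≤ θ) (hQ : 0 ≤ Q) (hW : W = k + θ * Q)
    (yy al : V → V → ℝ) (hy0 : ∀ w w', 0 ≤ yy w w') (hal0 : ∀ w w', 0 ≤ al w w')
    (a e : V → ℝ) (Hv : V → Prop) (ha0 : ∀ w, 0 ≤ a w) (he0 : ∀ w, 0 ≤ e w)
    (h1 : ∀ w ∈ C, ∑ w' ∈ C.filter (R w), yy w w' ≤ e w)
    (h2 : ∀ w ∈ C, ∑ w' ∈ C.filter (R w), (if Hv w' then 0 else al w w') ≤ a w)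
    (h3 : ∀ w ∈ C, Hv w → k - 1 ≤ a w)
    (h4 : ∀ w ∈ C, Hv w → (C.filter (R w)).card ≤ 2)
    (h5 : ∀ w ∈ C, Hv w → (C.filter (R w)).card = 2 → Q ≤ e w)
    (h6 : ∀ w ∈ C, ∀ w' ∈ C, R w w' → yy w w' + yy w' w = Q)
    (h7 : ∀ w ∈ C, ∀ w' ∈ C, R w w' → al w w' + al w' w = k) :
    (∑ w ∈ C, ((C.filter (R w)).card : ℝ)) / 4 * (W - 1) ^ 2 ≤ ∑ w ∈ C, (a w + θ * e w) ^ 2 := by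
  set ψ : V → V → ℝ := fun w w' => if Hv w then (k - 1 + θ * yy w w')
    else θ * yy w w' + (if Hv w' then 0 else al w w') with hψ
  set g : V → V → ℝ := fun w w' => if Hv w ∧ (C.filter (R w)).card = 2 then (W - 1) ^ 2 / 2
    else ψ w w' ^ 2 with hg
  have hψ0 : ∀ w w', 0 ≤ ψ w w' := by
    intro w w'
    have := mul_nonneg hθ (hy0 w w')
    have := hal0 w w'
    simp only [hψ]
    split_ifs <;> linarith
  have hW1 : 0 ≤ W - 1 := by have := mul_nonneg hθ hQ; linarith
  have s1 : ∀ w ∈ C, ∑ w' ∈ C.filter (R w), g w w' ≤ (a w + θ * e w) ^ 2 := by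
    intro w hw
    have hH0 : 0 ≤ a w + θ * e w := by have := mul_nonneg hθ (he0 w); have := ha0 w; linarith
    by_cases hv : Hv w
    · by_cases hc : (C.filter (R w)).card = 2
      · have : ∀ w' ∈ C.filter (R w), g w w' = (W - 1) ^ 2 / 2 := by
          intro w' _; simp [hg, hv, hc]
        rw [Finset.sum_congr rfl this, Finset.sum_const, hc]
        have h5' := mul_le_mul_of_nonneg_left (h5 w hw hv hc) hθ
        have h3' := h3 w hw hv
        have : W - 1 ≤ a w + θ * e w := by linarith
        have := pow_le_pow_left₀ hW1 this 2
        simp only [nsmul_eq_mul]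
        push_cast
        linarith
      · have hle : (C.filter (R w)).card ≤ 1 := by have := h4 w hw hv; omega
        rcases Nat.le_one_iff_eq_zero_or_eq_one.1 hle with h0 | h0
        · rw [Finset.card_eq_zero] at h0
          rw [h0]; simp; positivity
        · obtain ⟨w', hw'⟩ := Finset.card_eq_one.1 h0
          have hh := h1 w hw
          rw [hw'] at hh ⊢
          simp only [Finset.sum_singleton] at hh ⊢
          have e1 : g w w' = (k - 1 + θ * yy w w') ^ 2 := by simp [hg, hψ, hv, hw']
          rw [e1]
          apply pow_le_pow_left₀
          · have := mul_nonneg hθ (hy0 w w'); linarith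
          · have := mul_le_mul_of_nonneg_left hh hθ
            have := h3 w hw hv
            linarith
    · have e1 : ∀ w' ∈ C.filter (R w), g w w' = ψ w w' ^ 2 := by
        intro w' _; simp [hg, hv]
      rw [Finset.sum_congr rfl e1]
      refine (Finset.sum_sq_le_sq_sum_of_nonneg (fun i _ => hψ0 w i)).trans ?_
      apply pow_le_pow_left₀ (Finset.sum_nonneg (fun i _ => hψ0 w i))
      have e2 : ∀ w' ∈ C.filter (R w), ψ w w' = θ * yy w w' + (if Hv w' then 0 else al w w') := by
        intro w' _; simp [hψ, hv]
      rw [Finset.sum_congr rfl e2, Finset.sum_add_distrib, ← Finset.mul_sum]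
      have := mul_le_mul_of_nonneg_left (h1 w hw) hθ
      have := h2 w hw
      linarith
  have s2 : ∀ w ∈ C, ∀ w' ∈ C, R w w' → (W - 1) ^ 2 / 2 ≤ g w w' + g w' w := by
    intro w hw w' hw' hr
    have g0 : ∀ u u', 0 ≤ g u u' := by
      intro u u'; simp only [hg]; split_ifs <;> positivity
    by_cases c1 : Hv w ∧ (C.filter (R w)).card = 2
    · have : g w w' = (W - 1) ^ 2 / 2 := by simp only [hg]; rw [if_pos c1]
      have := g0 w' w
      linarith
    · by_cases c2 : Hv w' ∧ (C.filter (R w')).card = 2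
      · have : g w' w = (W - 1) ^ 2 / 2 := by simp only [hg]; rw [if_pos c2]
        have := g0 w w'
        linarith
      · have e1 : g w w' = ψ w w' ^ 2 := by simp only [hg]; rw [if_neg c1]
        have e2 : g w' w = ψ w' w ^ 2 := by simp only [hg]; rw [if_neg c2]
        rw [e1, e2]
        have hs : W - 1 ≤ ψ w w' + ψ w' w := by
          have i6 := h6 w hw w' hw' hr
          have i7 := h7 w hw w' hw' hr
          have i8 : θ * yy w w' + θ * yy w' w = θ * Q := by rw [← i6]; ring
          simp only [hψ]
          split_ifs <;> linarith
        have := pow_le_pow_left₀ hW1 hs 2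
        nlinarith [sq_nonneg (ψ w w' - ψ w' w)]
  have s3 : ∑ w ∈ C, ∑ w' ∈ C.filter (R w), g w w' = ∑ w ∈ C, ∑ w' ∈ C.filter (R w), g w' w := by
    simp only [Finset.sum_filter]
    rw [Finset.sum_comm]
    apply Finset.sum_congr rfl; intro w _
    apply Finset.sum_congr rfl; intro w' _
    simp [show R w' w ↔ R w w' from ⟨hR _ _, hR _ _⟩]
  have s4 : ∑ w ∈ C, ((C.filter (R w)).card : ℝ) * ((W - 1) ^ 2 / 2) ≤
      ∑ w ∈ C, ∑ w' ∈ C.filter (R w), (g w w' + g w' w) := by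
    apply Finset.sum_le_sum
    intro w hw
    rw [← nsmul_eq_mul, ← Finset.sum_const]
    apply Finset.sum_le_sum
    intro w' hw'
    rw [Finset.mem_filter] at hw'
    exact s2 w hw w' hw'.1 hw'.2
  simp only [Finset.sum_add_distrib] at s4
  rw [← s3, ← Finset.sum_mul] at s4
  have s5 := Finset.sum_le_sum s1
  linarith

lemma split3 {V : Type*} [Fintype V] (S Y C : Finset V) (hC : ∀ x, x ∈ C ↔ x ∉ Y ∧ x ∉ S)
    (hSY : ∀ x ∈ S, x ∉ Y) (f : V → ℝ) :
    ∑ i, f i = ∑ i ∈ S, f i + ∑ i ∈ Y, f i + ∑ i ∈ C, f i := by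
  rw [← Finset.sum_union (Finset.disjoint_left.2 hSY), ← Finset.sum_union]
  · apply Finset.sum_congr _ (fun _ _ => rfl)
    ext x
    simp only [Finset.mem_univ, Finset.mem_union, hC, true_iff]
    tauto
  · rw [Finset.disjoint_left]
    intro x hx hx'
    rw [hC] at hx'
    rw [Finset.mem_union] at hx
    tauto

lemma ray {V : Type*} [Fintype V] (G : SimpleGraph V) (S Y C : Finset V)
    (hC : ∀ x, x ∈ C ↔ x ∉ Y ∧ x ∉ S) (hSY : ∀ x ∈ S, x ∉ Y)
    (nSS : ∀ x ∈ S, ∀ z ∈ S, ¬ G.Adj x z) (nSY : ∀ x ∈ S, ∀ z ∈ Y, ¬ G.Adj x z)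
    (p : ℕ) (hp : ∀ v ∈ Y, (Y.filter fun u => G.Adj v u).card ≤ p)
    (l θ : ℝ) (hl : 0 < l) (hθ : 0 ≤ θ) (a e : V → ℝ)
    (ha : ∀ w, a w = ((S.filter fun z => ¬ G.Adj z w).card : ℝ))
    (he : ∀ w, e w = ((Y.filter fun z => ¬ G.Adj z w).card : ℝ))
    (hF : l * (S.card + Y.card * θ ^ 2) + (∑ w ∈ C, (a w + θ * e w) ^ 2) / l <
      (S.card : ℝ) * (S.card - 1) + 2 * S.card * Y.card * θ + θ ^ 2 * Y.card * (Y.card - 1 - p) +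
        2 * ((∑ w ∈ C, (a w + θ * e w) ^ 2) / l)) :
    l < specRad Gᶜ := by
  set x : V → ℝ := fun i => if i ∈ S then 1 else if i ∈ Y then θ else (a i + θ * e i) / l with hx
  have xS : ∀ i ∈ S, x i = 1 := by intro i hi; simp [hx, hi]
  have xY : ∀ i ∈ Y, x i = θ := by
    intro i hi
    have : i ∉ S := fun h => hSY i h hi
    simp [hx, hi, this]
  have xC : ∀ i ∈ C, x i = (a i + θ * e i) / l := by
    intro i hi
    rw [hC] at hi
    simp [hx, hi]
  have hx0 : ∀ i, 0 ≤ x i := by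
    intro i
    have h1 : 0 ≤ a i := by rw [ha]; positivity
    have h2 : 0 ≤ e i := by rw [he]; positivity
    simp only [hx]
    split_ifs <;> positivity
  apply specRad_gt Gᶜ x l
  set nb : V → V → ℝ := fun i j => if Gᶜ.Adj i j then 1 else 0 with hnb
  have nb0 : ∀ i j, 0 ≤ nb i j := by intro i j; simp only [hnb]; split_ifs <;> norm_num
  set D := (∑ w ∈ C, (a w + θ * e w) ^ 2) with hD
  have L : l * ∑ i, x i ^ 2 = l * (S.card + Y.card * θ ^ 2) + D / l := by
    rw [split3 S Y C hC hSY, Finset.sum_congr rfl (fun i hi => by rw [xS i hi]),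
      Finset.sum_congr (s₁ := Y) rfl (fun i hi => by rw [xY i hi]),
      Finset.sum_congr (s₁ := C) rfl (fun i hi => by rw [xC i hi])]
    simp only [div_pow, ← Finset.sum_div, Finset.sum_const, nsmul_eq_mul]
    rw [← hD]
    field_simp
  rw [L]
  have row : ∀ i, ∑ j, x i * x j * nb i j = x i * (∑ j ∈ S, nb i j + θ * ∑ j ∈ Y, nb i j +
      ∑ j ∈ C, x j * nb i j) := by
    intro i
    simp only [mul_assoc]
    rw [← Finset.mul_sum, split3 S Y C hC hSY]
    congr 3
    · exact Finset.sum_congr rfl (fun j hj => by rw [xS j hj, one_mul])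
    · rw [Finset.mul_sum]
      exact Finset.sum_congr rfl (fun j hj => by rw [xY j hj])
  have R1 : ∀ i ∈ S, ∑ j ∈ S, nb i j = S.card - 1 := by
    intro i hi
    have : ∑ j ∈ S, nb i j = ∑ j ∈ S, (1 - if i = j then (1:ℝ) else 0) := by
      apply Finset.sum_congr rfl
      intro j hj
      have := nSS i hi j hj
      by_cases hij : i = j <;> simp [hnb, SimpleGraph.compl_adj, hij, this]
    rw [this, Finset.sum_sub_distrib]
    simp [hi]
  have R2 : ∀ i ∈ S, ∑ j ∈ Y, nb i j = Y.card := by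
    intro i hi
    have : ∀ j ∈ Y, nb i j = 1 := by
      intro j hj
      have hij : i ≠ j := by rintro rfl; exact hSY i hi hj
      simp [hnb, SimpleGraph.compl_adj, hij, nSY i hi j hj]
    rw [Finset.sum_congr rfl this]; simp
  have R3 : ∀ i ∈ Y, ∑ j ∈ S, nb i j = S.card := by
    intro i hi
    have : ∀ j ∈ S, nb i j = 1 := by
      intro j hj
      have hij : i ≠ j := by rintro rfl; exact hSY i hj hi
      have := nSY j hj i hi
      rw [G.adj_comm] at this
      simp [hnb, SimpleGraph.compl_adj, hij, this]
    rw [Finset.sum_congr rfl this]; simp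
  have R4 : ∀ i ∈ Y, (Y.card : ℝ) - 1 - p ≤ ∑ j ∈ Y, nb i j := by
    intro i hi
    have : ∑ j ∈ Y, nb i j = ∑ j ∈ Y, (1 - (if i = j then (1:ℝ) else 0) - if G.Adj i j then 1 else 0) := by
      apply Finset.sum_congr rfl
      intro j hj
      by_cases hij : i = j
      · subst hij; simp [hnb]
      · by_cases hg : G.Adj i j <;> simp [hnb, SimpleGraph.compl_adj, hij, hg]
    rw [this, Finset.sum_sub_distrib, Finset.sum_sub_distrib]
    have h1 : ((Y.filter fun u => G.Adj i u).card : ℝ) ≤ p := by exact_mod_cast hp i hi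
    simp [hi]
    linarith
  have cc : ∀ (A : Finset V), (∀ i ∈ A, i ∉ C) → ∀ w ∈ C, ∑ i ∈ A, nb i w =
      ((A.filter fun z => ¬ G.Adj z w).card : ℝ) := by
    intro A hA w hw
    rw [Finset.card_filter]
    push_cast
    apply Finset.sum_congr rfl
    intro i hi
    have : i ≠ w := by rintro rfl; exact hA i hi hw
    simp [hnb, SimpleGraph.compl_adj, this]
  have nbs : ∀ i j, nb i j = nb j i := by intro i j; simp only [hnb, SimpleGraph.adj_comm]
  have SC : ∀ i ∈ S, i ∉ C := by intro i hi; rw [hC]; tauto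
  have YC : ∀ i ∈ Y, i ∉ C := by intro i hi; rw [hC]; tauto
  have R5 : ∀ w ∈ C, ∑ i ∈ S, nb i w = a w := by
    intro w hw; rw [cc S SC w hw, ha]
  have R6 : ∀ w ∈ C, ∑ i ∈ Y, nb i w = e w := by
    intro w hw; rw [cc Y YC w hw, he]
  have T1 : ∑ i ∈ S, ∑ j ∈ C, x j * nb i j = ∑ j ∈ C, x j * a j := by
    rw [Finset.sum_comm]
    apply Finset.sum_congr rfl
    intro j hj
    rw [← Finset.mul_sum, R5 j hj]
  have T2 : ∑ i ∈ Y, ∑ j ∈ C, x j * nb i j = ∑ j ∈ C, x j * e j := by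
    rw [Finset.sum_comm]
    apply Finset.sum_congr rfl
    intro j hj
    rw [← Finset.mul_sum, R6 j hj]
  have B1 : ∑ i ∈ S, ∑ j, x i * x j * nb i j =
      (S.card : ℝ) * (S.card - 1 + θ * Y.card) + ∑ j ∈ C, x j * a j := by
    have : ∀ i ∈ S, ∑ j, x i * x j * nb i j = (S.card - 1 + θ * Y.card) + ∑ j ∈ C, x j * nb i j := by
      intro i hi
      rw [row, xS i hi, R1 i hi, R2 i hi]; ring
    rw [Finset.sum_congr rfl this, Finset.sum_add_distrib, T1, Finset.sum_const, nsmul_eq_mul]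
  have B2 : (Y.card : ℝ) * θ * (S.card + θ * (Y.card - 1 - p)) + θ * ∑ j ∈ C, x j * e j ≤
      ∑ i ∈ Y, ∑ j, x i * x j * nb i j := by
    have : ∀ i ∈ Y, θ * (S.card + θ * (Y.card - 1 - p)) + θ * ∑ j ∈ C, x j * nb i j ≤
        ∑ j, x i * x j * nb i j := by
      intro i hi
      rw [row, xY i hi, R3 i hi, ← mul_add]
      apply mul_le_mul_of_nonneg_left _ hθ
      have := mul_le_mul_of_nonneg_left (R4 i hi) hθ
      linarith
    have h2 := Finset.sum_le_sum this
    rw [Finset.sum_add_distrib, ← Finset.mul_sum (f := fun i => ∑ j ∈ C, x j * nb i j), T2] at h2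
    simp only [Finset.sum_const, nsmul_eq_mul] at h2
    linarith
  have B3 : D / l ≤ ∑ i ∈ C, ∑ j, x i * x j * nb i j := by
    rw [hD, Finset.sum_div]
    apply Finset.sum_le_sum
    intro i hi
    rw [row, Finset.sum_congr (s₁ := S) rfl (fun j _ => nbs i j),
      Finset.sum_congr (s₁ := Y) rfl (fun j _ => nbs i j), R5 i hi, R6 i hi]
    have : 0 ≤ ∑ j ∈ C, x j * nb i j := Finset.sum_nonneg (fun j _ => mul_nonneg (hx0 j) (nb0 i j))
    have h2 := mul_nonneg (hx0 i) this
    have h3 : (a i + θ * e i) ^ 2 / l = x i * (a i + θ * e i) := by rw [xC i hi]; ring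
    rw [h3]
    linarith
  have B4 : ∑ j ∈ C, x j * a j + θ * ∑ j ∈ C, x j * e j = D / l := by
    rw [hD, Finset.sum_div, Finset.mul_sum, ← Finset.sum_add_distrib]
    apply Finset.sum_congr rfl
    intro i hi
    rw [xC i hi]; ring
  have FF := split3 S Y C hC hSY (fun i => ∑ j, x i * x j * nb i j)
  refine lt_of_lt_of_eq (b := ∑ i, ∑ j, x i * x j * nb i j) ?_ (Finset.sum_congr rfl fun i _ =>
    Finset.sum_congr rfl fun j _ => by simp only [hnb]; congr)
  rw [FF]
  nlinarith

section mainsec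
variable {V : Type*} [Fintype V] {G T0 : SimpleGraph V} {y : V}

lemma sum_filter_le {V : Type*} (N A : Finset V) (P : V → V → Prop) (B : V → Prop)
    [∀ w, DecidablePred fun v => P v w] [DecidablePred B]
    (h : ∀ v ∈ A, ∀ w ∈ N, P v w → B v)
    (hu : ∀ v ∈ A, ∀ w ∈ N, ∀ w' ∈ N, P v w → P v w' → w = w') :
    ∑ w ∈ N, (A.filter fun v => P v w).card ≤ (A.filter B).card := by
  rw [← Finset.card_biUnion]
  · apply Finset.card_le_card
    intro v hv
    simp only [Finset.mem_biUnion, Finset.mem_filter] at hv ⊢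
    obtain ⟨w, hw, hv, hp⟩ := hv
    exact ⟨hv, h v hv w hw hp⟩
  · intro w hw w' hw' hne
    rw [Function.onFun, Finset.disjoint_left]
    intro v h1 h2
    simp only [Finset.mem_filter] at h1 h2
    exact hne (hu v h1.1 w hw w' hw' h1.2 h2.2)

lemma filter_compl_card {V : Type*} (A : Finset V) (P Q : V → Prop) (h : ∀ v ∈ A, P v ∨ Q v)
    (h' : ∀ v ∈ A, P v → ¬ Q v) : (A.filter P).card + (A.filter Q).card = A.card := by
  rw [← Finset.card_filter_add_card_filter_not (s := A) P]
  congr 2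
  apply Finset.filter_congr
  intro v hv
  have := h v hv
  have := h' v hv
  tauto

lemma fact5 (S : Setup G T0 y) {z w w' : V} (hz : z ∈ SS T0 y)
    (hw' : w' ∈ CS G T0 y) (hc : Closer T0 z w w') (hG : G.Adj z w) :
    dg T0 w' = 2 ∧ (SS T0 y).card - 1 ≤ ((SS T0 y).filter fun z => ¬ G.Adj z w').card := by
  have hne : w' ≠ z := by
    rintro rfl
    exact (mem_C.1 hw').2 hz
  have hzl := S_leaf S hz Reach.base
  obtain ⟨r1, r2, r3, r4, r5, r6, r7⟩ := rot_lemma S.hM hzl hG hc hne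
  refine ⟨r3, ?_⟩
  rw [← Finset.card_erase_of_mem hz]
  apply Finset.card_le_card
  intro z' hz'
  rw [Finset.mem_erase] at hz'
  rw [Finset.mem_filter]
  refine ⟨hz'.2, ?_⟩
  have hne' : z' ≠ w' := by
    rintro rfl
    exact (mem_C.1 hw').2 hz'.2
  apply leaves_indep r1 (by rw [r2]; exact S.h3) _ r5
  rw [r6 z' hz'.1 hne']
  exact S_leaf S hz'.2 Reach.base

noncomputable def aN (G T0 : SimpleGraph V) (y w : V) : ℕ := ((SS T0 y).filter fun z => ¬ G.Adj z w).card
noncomputable def eN (G T0 : SimpleGraph V) (y w : V) : ℕ := ((YS G T0 y).filter fun z => ¬ G.Adj z w).card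

lemma item7 (S : Setup G T0 y) (θ W : ℝ) (hθ : 0 ≤ θ)
    (hW : W = (SS T0 y).card + θ * (YS G T0 y).card) (hK : 2 ≤ (SS T0 y).card) :
    (pairC G T0 y : ℝ) / 4 * (W - 1) ^ 2 ≤
      ∑ w ∈ CS G T0 y, ((aN G T0 y w : ℝ) + θ * eN G T0 y w) ^ 2 := by
  have hch : ∀ v, ∃ T, v ∈ YS G T0 y → Reach G T0 y T v := by
    intro v
    by_cases h : v ∈ YS G T0 y
    · obtain ⟨T, hT⟩ := exists_reach h; exact ⟨T, fun _ => hT⟩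
    · exact ⟨T0, fun h' => absurd h' h⟩
  choose TT hTT using hch
  have hT0 := S.hM.2.1
  have hadj : ∀ v ∈ YS G T0 y, ∀ w ∈ CS G T0 y, ∀ w' ∈ CS G T0 y, ((TT v).Adj w w' ↔ T0.Adj w w') := by
    intro v hv w hw w' hw'
    exact (reach_inv S (hTT v hv)).2.2.2.2.2 w w' (mem_C.1 hw).1 (mem_C.1 hw').1
  have hKr : (2 : ℝ) ≤ (SS T0 y).card := by exact_mod_cast hK
  obtain ⟨Hv, hHv⟩ : ∃ Hv : V → Prop, ∀ w, Hv w ↔ (dg T0 w = 2 ∧ (SS T0 y).card - 1 ≤ aN G T0 y w) :=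
    ⟨_, fun w => Iff.rfl⟩
  have := item7_abs (CS G T0 y) T0.Adj (fun _ _ h => h.symm) (SS T0 y).card θ (YS G T0 y).card W
    (by linarith) hθ (by positivity) hW
    (fun w w' => (((YS G T0 y).filter fun v => Closer (TT v) v w w').card : ℝ))
    (fun w w' => (((SS T0 y).filter fun z => Closer T0 z w w').card : ℝ))
    (fun _ _ => by positivity) (fun _ _ => by positivity)
    (fun w => (aN G T0 y w : ℝ)) (fun w => (eN G T0 y w : ℝ))
    Hv
    (fun _ => by positivity) (fun _ => by positivity)
    (by
      intro w hw
      rw [← Nat.cast_sum]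
      norm_cast
      unfold eN
      apply sum_filter_le
      · intro v hv w' hw' hc hG
        exact (mem_C.1 (Finset.mem_filter.1 hw').1).1 (Y_nbr S (hTT v hv) hG hc)
      · intro v hv w1 _ w2 _ h1 h2
        exact closer_unique (reach_inv S (hTT v hv)).1.2.1 h1 h2)
    (by
      intro w hw
      have e1 : ∀ w' ∈ (CS G T0 y).filter (T0.Adj w),
          (if Hv w' then (0:ℝ) else
            (((SS T0 y).filter fun z => Closer T0 z w w').card : ℝ)) =
          (((SS T0 y).filter fun z => Closer T0 z w w' ∧
            ¬ Hv w').card : ℝ) := by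
        intro w' _
        split_ifs with hh
        · simp [hh]
        · simp [hh]
      rw [Finset.sum_congr rfl e1, ← Nat.cast_sum]
      norm_cast
      unfold aN
      apply sum_filter_le (P := fun z w' => Closer T0 z w w' ∧
            ¬ Hv w')
      · intro z hz w' hw' hc hG
        exact hc.2 ((hHv w').2 (fact5 S hz (Finset.mem_filter.1 hw').1 hc.1 hG))
      · intro v hv w1 _ w2 _ h1 h2
        exact closer_unique hT0 h1.1 h2.1)
    (by
      intro w hw hv
      rw [hHv] at hv
      have := hv.2
      have : (SS T0 y).card ≤ aN G T0 y w + 1 := by omega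
      have : ((SS T0 y).card : ℝ) ≤ aN G T0 y w + 1 := by exact_mod_cast this
      linarith)
    (by
      intro w hw hv
      rw [hHv] at hv
      rw [← hv.1]
      apply Finset.card_le_card
      intro u hu
      simp at hu ⊢
      exact hu.2)
    (by
      intro w hw hv hc
      rw [hHv] at hv
      norm_cast
      apply Finset.card_le_card
      intro v hvY
      rw [Finset.mem_filter]
      refine ⟨hvY, ?_⟩
      intro hG
      have hi := reach_inv S (hTT v hvY)
      have hwv : w ≠ v := hG.ne.symm
      have hwy : w ≠ y := by rintro rfl; exact (mem_C.1 hw).1 y_mem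
      have hcl := par_closer hi.1.2.1 hwv
      have hpY := Y_nbr S (hTT v hvY) hG hcl
      have hdg : dg (TT v) w = 2 := by
        rw [hi.2.2.2.1 w hwv, DD, if_neg hwy, hv.1]
      have hsub : (CS G T0 y).filter (T0.Adj w) ⊆ univ.filter fun u => (TT v).Adj w u := by
        intro u hu
        rw [Finset.mem_filter] at hu
        simp
        exact (hadj v hvY w hw u hu.1).2 hu.2
      have heq := Finset.eq_of_subset_of_card_le hsub (by rw [hc]; exact hdg.le)
      have hm : par (TT v) v w ∈ univ.filter fun u => (TT v).Adj w u := by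
        simp; exact hcl.1
      rw [← heq, Finset.mem_filter] at hm
      exact (mem_C.1 hm.1).1 hpY)
    (by
      intro w hw w' hw' hr
      norm_cast
      apply filter_compl_card
      · intro v hv
        rcases adj_closer (reach_inv S (hTT v hv)).1.2.1 v ((hadj v hv w hw w' hw').2 hr) with h | h
        · exact Or.inl h.1
        · exact Or.inr h.1
      · intro v hv h; exact h.asymm)
    (by
      intro w hw w' hw' hr
      norm_cast
      apply filter_compl_card
      · intro v hv
        rcases adj_closer hT0 v hr with h | h
        · exact Or.inl h.1
        · exact Or.inr h.1
      · intro v hv h; exact h.asymm)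
  rw [← Nat.cast_sum] at this
  exact this

lemma item6 (S : Setup G T0 y) (θ : ℝ) (hθ : 0 ≤ θ)
    (hS : ∀ v ∈ SS T0 y, dg G v ≤ (YS G T0 y).card) (hY : ∀ v ∈ YS G T0 y, dg G v ≤ (YS G T0 y).card) :
    ((SS T0 y).card + θ * (YS G T0 y).card) * ((CS G T0 y).card - (YS G T0 y).card) ≤
      ∑ w ∈ CS G T0 y, ((aN G T0 y w : ℝ) + θ * eN G T0 y w) := by
  have key : ∀ A : Finset V, (∀ v ∈ A, dg G v ≤ (YS G T0 y).card) →
      (A.card : ℝ) * ((CS G T0 y).card - (YS G T0 y).card) ≤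
      ∑ w ∈ CS G T0 y, ((A.filter fun z => ¬ G.Adj z w).card : ℝ) := by
    intro A hA
    have e : ∑ w ∈ CS G T0 y, ((A.filter fun z => ¬ G.Adj z w).card : ℝ) =
        ∑ z ∈ A, (((CS G T0 y).filter fun w => ¬ G.Adj z w).card : ℝ) := by
      simp only [Finset.card_filter]
      push_cast
      rw [Finset.sum_comm]
    rw [e, ← nsmul_eq_mul, ← Finset.sum_const]
    apply Finset.sum_le_sum
    intro z hz
    have h1 := Finset.card_filter_add_card_filter_not (s := CS G T0 y) (fun w => G.Adj z w)
    have h2 : ((CS G T0 y).filter fun w => G.Adj z w).card ≤ dg G z := by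
      apply Finset.card_le_card
      intro u hu
      simp at hu ⊢
      exact hu.2
    have h3 := hA z hz
    have h4 : (CS G T0 y).card ≤ (YS G T0 y).card + ((CS G T0 y).filter fun w => ¬ G.Adj z w).card := by omega
    have h5 : ((CS G T0 y).card : ℝ) ≤ (YS G T0 y).card + ((CS G T0 y).filter fun w => ¬ G.Adj z w).card := by
      exact_mod_cast h4
    linarith
  have k1 := key _ hS
  have k2 := mul_le_mul_of_nonneg_left (key _ hY) hθ
  rw [Finset.sum_add_distrib, ← Finset.mul_sum]
  unfold aN eN
  linarith

lemma alg_final (k Q p l d θ W X : ℝ) (hl : 0 < l) (hp : 0 ≤ p) (hk : 0 < k) (hQ : 0 < Q)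
    (hθ : θ = (l + 1) / (l + 1 + p)) (hW : W = k + θ * Q)
    (hX : X = (l + d) * ((k + Q) * (l + 1) + k * p) - l * ((l + 1) * (l + 1 + p))) (hX0 : 0 < X) :
    l * (k + Q * θ ^ 2) + W ^ 2 * d / l <
      k * (k - 1) + 2 * k * Q * θ + θ ^ 2 * Q * (Q - 1 - p) + 2 * (W ^ 2 * d / l) := by
  have hM : 0 < l + 1 + p := by linarith
  have key : k * (k - 1) + 2 * k * Q * θ + θ ^ 2 * Q * (Q - 1 - p) + 2 * (W ^ 2 * d / l) -
      (l * (k + Q * θ ^ 2) + W ^ 2 * d / l) =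
      ((k + Q) * (l + 1) + k * p) / (l * (l + 1 + p) ^ 2) * X := by
    rw [hX, hW, hθ]
    field_simp
    ring
  have : 0 < ((k + Q) * (l + 1) + k * p) / (l * (l + 1 + p) ^ 2) * X := by positivity
  linarith

lemma main_gt (S : Setup G T0 y) (hne : ¬ ((CS G T0 y).card = 1 ∧ (YS G T0 y).card = 1)) :
    Real.sqrt (((SS T0 y).card : ℝ) * ((Fintype.card V : ℝ) - 2)) < specRad Gᶜ := by
  obtain ⟨s, P, p, hs, hc, hQ, hp, hdY, hdS⟩ := count_summary S
  have hK : 2 ≤ (SS T0 y).card := by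
    have : y ∈ lv T0 := by simp [lv, S.hy]
    have h3 := S.h3
    rw [SS, Finset.card_erase_of_mem this]; omega
  set k := (SS T0 y).card with hkdef
  have hn : (Fintype.card V : ℝ) = k + (P + p + 1) + (P + 1 + s) := by
    have := split3 (SS T0 y) (YS G T0 y) (CS G T0 y) (fun x => mem_C) (fun x hx => S_notin_Y S hx) (fun _ => 1)
    simp at this
    rw [this, hc, hQ]
    push_cast
    ring
  have hkr : (2 : ℝ) ≤ k := by exact_mod_cast hK
  have hin : (0:ℝ) < (k:ℝ) * ((Fintype.card V : ℝ) - 2) := by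
    rw [hn]
    apply mul_pos (by linarith)
    have : (0:ℝ) ≤ P := by positivity
    have : (0:ℝ) ≤ p := by positivity
    have : (0:ℝ) ≤ s := by positivity
    linarith
  set l := Real.sqrt ((k : ℝ) * ((Fintype.card V : ℝ) - 2)) with hl
  have hl0 : 0 < l := Real.sqrt_pos.2 hin
  have hl2 : l ^ 2 = (k:ℝ) * (k + 2 * P + p + s) := by
    rw [hl, Real.sq_sqrt hin.le, hn]; ring
  have hM : 0 < l + 1 + (p:ℝ) := by positivity
  set θ : ℝ := (l + 1) / (l + 1 + p) with hθ
  have hθ0 : 0 ≤ θ := by positivity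
  set Q : ℝ := ((YS G T0 y).card : ℝ) with hQr
  have hQe : Q = P + p + 1 := by rw [hQr, hQ]; push_cast; ring
  have hQ0 : 0 < Q := by rw [hQe]; positivity
  set W : ℝ := k + θ * Q with hW
  have hW0 : 0 < W := by positivity
  set D := ∑ w ∈ CS G T0 y, ((aN G T0 y w : ℝ) + θ * eN G T0 y w) ^ 2 with hD
  set d := D / W ^ 2 with hd
  have hWd : W ^ 2 * d = D := by rw [hd]; field_simp
  have hcr : ((CS G T0 y).card : ℝ) = P + 1 + s := by rw [hc]; push_cast; ring
  have hW2 : 0 < W ^ 2 := pow_pos hW0 2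
  clear_value d D W θ Q l
  have hX0 := final_ineq k P p s hK (by
      rintro ⟨h1, h2, h3⟩
      apply hne
      omega) l W d hl0.le hl2
    (by rw [hW, hθ, hQe]; field_simp; ring)
    (by
      intro hps
      have h6 := item6 S θ hθ0 hdS hdY
      rw [← hkdef, hcr, ← hQr, hQe] at h6
      have hcs := sq_sum_le_card_mul_sum_sq (s := CS G T0 y)
        (f := fun w => ((aN G T0 y w : ℝ) + θ * eN G T0 y w))
      rw [hcr, ← hD] at hcs
      rw [div_le_iff₀ (by positivity), hd]
      have hst : (0:ℝ) ≤ s - p := by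
        have : (p:ℝ) ≤ s := by exact_mod_cast hps
        linarith
      have h7 : W * (s - p) ≤ ∑ w ∈ CS G T0 y, ((aN G T0 y w : ℝ) + θ * eN G T0 y w) := by
        rw [hW, hQe]
        refine le_trans (le_of_eq ?_) h6
        ring
      have h8 := pow_le_pow_left₀ (mul_nonneg hW0.le hst) h7 2
      rw [div_mul_eq_mul_div, le_div_iff₀ hW2]
      nlinarith)
    (by
      have h7 := item7 S θ W hθ0 (by rw [hW, hQr]) hK
      rw [← hD, hs] at h7
      rw [hd, le_div_iff₀ hW2]
      refine le_trans (le_of_eq ?_) h7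
      push_cast
      field_simp
      ring)
  have hX1 : 0 < (l + d) * ((k + Q) * (l + 1) + k * p) - l * ((l + 1) * (l + 1 + p)) := by
    refine lt_of_lt_of_eq hX0 ?_
    rw [hQe]
    linear_combination (l:ℝ) * hl2
  have hfin := alg_final k Q p l d θ W _ hl0 (by positivity) (by linarith) hQ0 hθ hW rfl hX1
  rw [hWd, hD, hQr] at hfin
  exact ray G (SS T0 y) (YS G T0 y) (CS G T0 y) (fun x => mem_C) (fun x hx => S_notin_Y S hx)
    (fun x hx z hz => S_S_nonadj S hx hz) (fun x hx z hz => S_Y_nonadj S hx hz) p hp l θ hl0 hθ0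
    (fun w => (aN G T0 y w : ℝ)) (fun w => (eN G T0 y w : ℝ)) (fun w => rfl) (fun w => rfl) hfin

end mainsec

lemma exists_minT {V : Type*} [Fintype V] {G : SimpleGraph V} (hG : G.Connected) :
    ∃ T, IsMinT G T := by
  obtain ⟨T, hT, hT'⟩ := hG.exists_isTree_le
  obtain ⟨T1, h1, h2⟩ := Set.exists_min_image {T : SimpleGraph V | T ≤ G ∧ T.IsTree}
    (fun T => (lv T).card) (Set.toFinite _) ⟨T, hT, hT'⟩
  exact ⟨T1, h1.1, h1.2, fun T' a b => h2 T' ⟨a, b⟩⟩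

lemma exists_setup {V : Type*} [Fintype V] {G : SimpleGraph V} (hG : G.Connected) {k : ℕ}
    (hk : 2 ≤ k) (hno : ¬ HasSpanningKEndedTree G k) :
    ∃ T0 y, Setup G T0 y ∧ k ≤ (SS T0 y).card := by
  obtain ⟨T1, h1⟩ := exists_minT hG
  have hbig : ∀ T, IsMinT G T → k + 1 ≤ (lv T).card := by
    intro T hT
    by_contra hcon
    apply hno
    refine ⟨T, hT.1, hT.2.1, ?_⟩
    have : (univ.filter fun v => T.degree v = 1) = lv T := by
      ext v
      simp only [lv, Finset.mem_filter, Finset.mem_univ, true_and, dg_eq_degree]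
    rw [this]
    omega
  have hne : (lv T1).Nonempty := by
    rw [← Finset.card_pos]
    have := hbig T1 h1
    omega
  obtain ⟨y1, hy1⟩ := hne
  obtain ⟨⟨T0, y⟩, h2, h3⟩ := Set.exists_max_image
    {q : SimpleGraph V × V | IsMinT G q.1 ∧ dg q.1 q.2 = 1}
    (fun q => dg G q.2) (Set.toFinite _) ⟨(T1, y1), h1, by simpa [lv] using hy1⟩
  have hb := hbig T0 h2.1
  refine ⟨T0, y, ⟨h2.1, by omega, h2.2, fun T z hT hz => h3 (T, z) ⟨hT, hz⟩⟩, ?_⟩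
  have : y ∈ lv T0 := by simpa [lv] using h2.2
  rw [SS, Finset.card_erase_of_mem this]
  omega

lemma star_iso {V : Type*} [Fintype V] {G : SimpleGraph V} (w : V) {m : ℕ}
    (hcard : Fintype.card V = m + 1) (hadj : ∀ x, x ≠ w → G.Adj x w)
    (hind : ∀ x z, x ≠ w → z ≠ w → ¬ G.Adj x z) :
    Nonempty (G ≃g completeBipartiteGraph (Fin 1) (Fin m)) := by
  have hc : Fintype.card {x // ¬ x = w} = m := by
    rw [Fintype.card_subtype_compl, hcard]
    simp
  have hc1 : Fintype.card {x // x = w} = 1 := by simp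
  let e1 : {x // x = w} ≃ Fin 1 := Fintype.equivFinOfCardEq hc1
  let e2 : {x // ¬ x = w} ≃ Fin m := Fintype.equivFinOfCardEq hc
  let e : V ≃ Fin 1 ⊕ Fin m := (Equiv.sumCompl (fun x => x = w)).symm.trans (Equiv.sumCongr e1 e2)
  have ew : ∀ x, x = w → (e x).isLeft = true := by
    intro x hx
    have := Equiv.sumCompl_symm_apply_of_pos (p := fun x => x = w) hx
    simp [e, this]
  have ex : ∀ x, x ≠ w → (e x).isRight = true := by
    intro x hx
    have := Equiv.sumCompl_symm_apply_of_neg (p := fun x => x = w) hx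
    simp [e, this]
  have hR : ∀ q : Fin 1 ⊕ Fin m, q.isRight = !q.isLeft := by intro q; cases q <;> rfl
  refine ⟨⟨e, ?_⟩⟩
  intro a b
  rw [completeBipartiteGraph_adj]
  by_cases ha : a = w <;> by_cases hb : b = w
  · have h1 := ew a ha
    have h2 := ew b hb
    subst ha; subst hb
    simp [hR, h1]
  · have h1 := ew a ha
    have h2 := ex b hb
    have := (hadj b hb).symm
    subst ha
    simp [this, h1, h2]
  · have h1 := ex a ha
    have h2 := ew b hb
    have := hadj a ha
    subst hb
    simp [this, h1, h2]
  · have h1 := ex a ha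
    have h2 := ex b hb
    have := hind a b ha hb
    simp only [this, h1, h2, iff_false]
    rw [hR] at h1 h2
    simp at h1 h2
    simp [h1, h2]

theorem complement_spectral_spanning_k_ended_tree {n k : ℕ} (hk : 2 ≤ k)
    (G : SimpleGraph (Fin n)) (hG : G.Connected)
    (hρ : specRad Gᶜ ≤ Real.sqrt ((k : ℝ) * ((n : ℝ) - 2))) :
    HasSpanningKEndedTree G k ∨
      Nonempty (G ≃g completeBipartiteGraph (Fin 1) (Fin (k + 1))) := by
  by_cases hno : HasSpanningKEndedTree G k
  · exact Or.inl hno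
  right
  obtain ⟨T0, y, S, hkK⟩ := exists_setup hG hk hno
  have hkr : (2:ℝ) ≤ k := by exact_mod_cast hk
  have hkKr : (k:ℝ) ≤ (SS T0 y).card := by exact_mod_cast hkK
  have hn3 : 3 ≤ n := by
    have := Finset.card_le_univ (lv T0)
    have h3 := S.h3
    simp at this
    omega
  have hn3r : (3:ℝ) ≤ n := by exact_mod_cast hn3
  by_cases hne : (CS G T0 y).card = 1 ∧ (YS G T0 y).card = 1
  swap
  · exfalso
    have h := main_gt S hne
    have h2 : Real.sqrt ((k : ℝ) * ((n : ℝ) - 2)) ≤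
        Real.sqrt (((SS T0 y).card : ℝ) * ((Fintype.card (Fin n) : ℝ) - 2)) := by
      apply Real.sqrt_le_sqrt
      rw [Fintype.card_fin]
      apply mul_le_mul_of_nonneg_right hkKr
      linarith
    linarith
  obtain ⟨hC1, hY1⟩ := hne
  obtain ⟨w, hw⟩ := Finset.card_eq_one.1 hC1
  obtain ⟨y', hy'⟩ := Finset.card_eq_one.1 hY1
  have hyy : y' = y := by
    have : y ∈ YS G T0 y := y_mem
    rw [hy'] at this
    exact (Finset.mem_singleton.1 this).symm
  subst hyy
  have hcase : ∀ x, x ≠ w → x ∈ SS T0 y' ∨ x = y' := by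
    intro x hx
    have h : x ∉ CS G T0 y' := by rw [hw]; simpa using hx
    rw [mem_C, hy'] at h
    simp at h
    tauto
  have hind : ∀ x z, x ≠ w → z ≠ w → ¬ G.Adj x z := by
    intro x z hx hz hadj
    rcases hcase x hx with h1 | h1 <;> rcases hcase z hz with h2 | h2
    · exact S_S_nonadj S h1 h2 hadj
    · exact S_Y_nonadj S h1 (h2 ▸ y_mem) hadj
    · exact S_Y_nonadj S h2 (h1 ▸ y_mem) hadj.symm
    · exact hadj.ne (h1.trans h2.symm)
  have hnt : Nontrivial (Fin n) := Fin.nontrivial_iff_two_le.2 (by omega)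
  have hadj : ∀ x, x ≠ w → G.Adj x w := by
    intro x hx
    obtain ⟨u, hu⟩ := hG.preconnected.exists_adj_of_nontrivial x
    by_cases huw : u = w
    · exact huw ▸ hu
    · exact absurd hu (hind x u hx huw)
  have hcard : (n : ℝ) = (SS T0 y').card + 2 := by
    have := split3 (SS T0 y') (YS G T0 y') (CS G T0 y') (fun x => mem_C)
      (fun x hx => S_notin_Y S hx) (fun _ => 1)
    simp [hC1, hY1] at this
    rw [this]; ring
  have hcardN : n = (SS T0 y').card + 2 := by exact_mod_cast hcard
  rcases hkK.eq_or_lt with heq | hlt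
  · apply star_iso w _ hadj hind
    rw [Fintype.card_fin]; omega
  · exfalso
    have hltr : (k:ℝ) < (SS T0 y').card := by exact_mod_cast hlt
    have hS0 : ∀ w' ∈ CS G T0 y', ((SS T0 y').filter fun z => ¬ G.Adj z w').card = 0 := by
      intro w' hw'
      rw [hw] at hw'
      rw [Finset.mem_singleton.1 hw', Finset.card_eq_zero, Finset.filter_eq_empty_iff]
      intro x hx
      rw [not_not]
      apply hadj
      rintro rfl
      have : x ∈ CS G T0 y' := by rw [hw]; simp
      exact (mem_C.1 this).2 hx
    have hY0 : ∀ w' ∈ CS G T0 y', ((YS G T0 y').filter fun z => ¬ G.Adj z w').card = 0 := by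
      intro w' hw'
      rw [hw] at hw'
      rw [Finset.mem_singleton.1 hw', Finset.card_eq_zero, Finset.filter_eq_empty_iff]
      intro x hx
      rw [not_not]
      apply hadj
      rintro rfl
      have : x ∈ CS G T0 y' := by rw [hw]; simp
      exact (mem_C.1 this).1 hx
    have hl0 : 0 < Real.sqrt ((k : ℝ) * ((n : ℝ) - 2)) :=
      Real.sqrt_pos.2 (mul_pos (by linarith) (by linarith))
    have hlK : Real.sqrt ((k : ℝ) * ((n : ℝ) - 2)) < (SS T0 y').card := by
      rw [Real.sqrt_lt' (by linarith), hcard]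
      nlinarith
    refine absurd hρ (not_le.2 ?_)
    apply ray G (SS T0 y') (YS G T0 y') (CS G T0 y') (fun x => mem_C) (fun x hx => S_notin_Y S hx)
      (fun x hx z hz => S_S_nonadj S hx hz) (fun x hx z hz => S_Y_nonadj S hx hz) 0 _ _ 1 hl0
      zero_le_one _ _ (fun w => rfl) (fun w => rfl)
    · have hz : ∑ w ∈ CS G T0 y', ((((SS T0 y').filter fun z => ¬ G.Adj z w).card : ℝ) +
          1 * (((YS G T0 y').filter fun z => ¬ G.Adj z w).card : ℝ)) ^ 2 = 0 := by
        apply Finset.sum_eq_zero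
        intro w' hw'
        rw [hS0 w' hw', hY0 w' hw']
        norm_num
      rw [hz, hY1]
      rw [zero_div]
      push_cast
      have := mul_lt_mul_of_pos_right hlK (show (0:ℝ) < (SS T0 y').card + 1 by linarith)
      linarith
    · intro v hv
      rw [Nat.le_zero, Finset.card_eq_zero, Finset.filter_eq_empty_iff]
      intro u hu
      rw [hy', Finset.mem_singleton] at hu hv
      rw [hu, hv]
      exact G.loopless.irrefl _
end

section
/- Let k ≥ 1 be an integer and let G be a connected graph of order n ≥ 2k + 12. If the spectral radius satisfies ρ(G) ≥ ρ(K₁ ∨ (K_{n−k−2} + (k+1)K₁)), then G has a spanning tree with leaf degree at most k, unless G is isomorphic to K₁ ∨ (K_{n−k−2} + (k+1)K₁). -/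
open Finset
open scoped Classical

/-- The graph `K₁ ∨ (K_{n-k-2} + (k+1)K₁)` on `n` vertices: vertex `0` is joined
to everything, vertices `0, …, n-k-2` form a clique `K_{n-k-1}`, and the last
`k+1` vertices are only adjacent to vertex `0`. -/
def oneJoinCliquePlusIso' (n k : ℕ) : SimpleGraph (Fin n) :=
  SimpleGraph.fromRel fun i j =>
    i.val = 0 ∨ (i.val < n - (k + 1) ∧ j.val < n - (k + 1))

section Kaneko
variable {V : Type*} [Fintype V] [DecidableEq V]

/-- vertices isolated in `G - S` -/
noncomputable def isoS (G : SimpleGraph V) (S : Finset V) : Finset V :=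
  univ.filter fun x => x ∉ S ∧ ∀ y, G.Adj x y → y ∈ S

noncomputable def jS (G : SimpleGraph V) (S : Finset V) : Finset V :=
  univ.filter fun x => ∀ y, G.Adj x y → y ∈ S

noncomputable def hh (G : SimpleGraph V) (k : ℕ) (S : Finset V) : ℤ :=
  ((k : ℤ) + 1) * S.card - 1 - (isoS G S).card

noncomputable def qq (G : SimpleGraph V) (k : ℕ) (S : Finset V) : ℤ :=
  ((k : ℤ) + 1) * S.card - 1 - (jS G S).card

def PP (G : SimpleGraph V) (k : ℕ) : Prop := ∀ S : Finset V, S.Nonempty → 0 ≤ hh G k S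

theorem mem_isoS {G : SimpleGraph V} {S : Finset V} {x : V} :
    x ∈ isoS G S ↔ x ∉ S ∧ ∀ y, G.Adj x y → y ∈ S := by simp [isoS]

theorem mem_jS {G : SimpleGraph V} {S : Finset V} {x : V} :
    x ∈ jS G S ↔ ∀ y, G.Adj x y → y ∈ S := by simp [jS]

theorem hh_sdiff (G : SimpleGraph V) (k : ℕ) {S B C : Finset V} (hB : B ⊆ S)
    (hC : ∀ u ∈ isoS G S, ∀ b ∈ B, G.Adj u b → u ∈ C) :
    hh G k (S \ B) ≤ hh G k S - ((k : ℤ) + 1) * B.card + C.card := by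
  have h1 : isoS G S \ C ⊆ isoS G (S \ B) := by
    intro u hu
    rw [mem_sdiff] at hu
    obtain ⟨hu1, hu2⟩ := hu
    have hu3 := mem_isoS.1 hu1
    rw [mem_isoS]
    refine ⟨fun h => hu3.1 (mem_sdiff.1 h).1, fun y hy => ?_⟩
    rw [mem_sdiff]
    exact ⟨hu3.2 y hy, fun hyB => hu2 (hC u hu1 y hyB hy)⟩
  have h2 := card_le_card h1
  have h3 := Finset.le_card_sdiff C (isoS G S)
  have h4 := Finset.card_sdiff_add_card_eq_card hB
  have h5 : ((S \ B).card : ℤ) = S.card - B.card := by omega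
  have h6 : ((isoS G S).card : ℤ) - C.card ≤ (isoS G (S \ B)).card := by omega
  unfold hh
  rw [h5]
  linarith

theorem hh_erase (G : SimpleGraph V) (k : ℕ) {S : Finset V} {s : V} (C : Finset V) (hs : s ∈ S)
    (hC : ∀ u ∈ isoS G S, G.Adj u s → u ∈ C) :
    hh G k (S.erase s) ≤ hh G k S - ((k : ℤ) + 1) + C.card := by
  have := hh_sdiff G k (S := S) (B := {s}) (C := C) (by simpa using hs) (by simpa using hC)
  rw [sdiff_singleton_eq_erase] at this
  simpa using this

theorem hh_AB (G : SimpleGraph V) (k : ℕ) (S T : Finset V) :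
    hh G k (T \ (isoS G S ∩ T)) + hh G k (S \ (isoS G T ∩ S)) ≤
      hh G k S + hh G k T - k * ((isoS G S ∩ T).card + (isoS G T ∩ S).card) := by
  have h1 := hh_sdiff G k (S := T) (B := isoS G S ∩ T) (C := isoS G T ∩ S) inter_subset_right
    (by
      intro u hu b hb hub
      exact mem_inter.2 ⟨hu, (mem_isoS.1 (mem_inter.1 hb).1).2 u hub.symm⟩)
  have h2 := hh_sdiff G k (S := S) (B := isoS G T ∩ S) (C := isoS G S ∩ T) inter_subset_right
    (by
      intro u hu b hb hub
      exact mem_inter.2 ⟨hu, (mem_isoS.1 (mem_inter.1 hb).1).2 u hub.symm⟩)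
  linarith

theorem qq_le_hh (G : SimpleGraph V) (k : ℕ) (S : Finset V) : qq G k S ≤ hh G k S := by
  have : isoS G S ⊆ jS G S := fun x hx => mem_jS.2 (mem_isoS.1 hx).2
  have := card_le_card this
  unfold qq hh
  linarith [(Nat.cast_le (α := ℤ)).2 this]

theorem closed_univ_s4 {G : SimpleGraph V} (hc : G.Connected) {p : V → Prop} {a : V} (ha : p a)
    (h : ∀ x y, p x → G.Adj x y → p y) (b : V) : p b := by
  obtain ⟨w⟩ := hc.preconnected a b
  induction w with
  | nil => exact ha
  | cons hadj _ ih => exact ih (h _ _ ha hadj)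

theorem qq_key {G : SimpleGraph V} {k : ℕ} (hk : 1 ≤ k) (hc : G.Connected)
    (hn : 2 ≤ Fintype.card V) (hP : PP G k) {S : Finset V} (hS : S.Nonempty) :
    0 ≤ qq G k S ∧ (qq G k S = 0 → hh G k S = 0) := by
  have hk' : (1 : ℤ) ≤ k := by exact_mod_cast hk
  have hJ : (jS G S).card = (isoS G S).card + (S ∩ jS G S).card := by
    rw [← card_union_of_disjoint]
    · congr 1
      ext x
      simp only [mem_jS, mem_union, mem_isoS, mem_inter]
      tauto
    · rw [disjoint_left]
      intro x hx hx'
      exact (mem_isoS.1 hx).1 (mem_inter.1 hx').1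
  by_cases hne : (S \ (S ∩ jS G S)).Nonempty
  · have h1 := hP _ hne
    have h2 := hh_sdiff G k (S := S) (B := S ∩ jS G S) (C := ∅) inter_subset_left
      (by
        intro u hu b hb hub
        exact absurd (mem_jS.1 (mem_inter.1 hb).2 u hub.symm) (mem_isoS.1 hu).1)
    have h3 : qq G k S = hh G k S - (S ∩ jS G S).card := by
      unfold qq hh
      rw [hJ]; push_cast; ring
    have h4 : (0 : ℤ) ≤ (S ∩ jS G S).card := by positivity
    simp only [card_empty, Nat.cast_zero, add_zero] at h2
    constructor
    · nlinarith
    · intro h0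
      have : ((S ∩ jS G S).card : ℤ) = 0 := by nlinarith
      linarith
  · rw [not_nonempty_iff_eq_empty, sdiff_eq_empty_iff_subset] at hne
    obtain ⟨a, ha⟩ := hS
    have hu : ∀ b, b ∈ S := closed_univ_s4 hc ha (fun x y hx hxy =>
      mem_jS.1 (mem_inter.1 (hne hx)).2 y hxy)
    have h1 : S.card = Fintype.card V := by
      rw [Finset.eq_univ_iff_forall.2 hu, card_univ]
    have h2 : (jS G S).card ≤ Fintype.card V := card_le_univ _
    have h3 : (1 : ℤ) ≤ qq G k S := by
      unfold qq
      rw [h1]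
      have : ((jS G S).card : ℤ) ≤ Fintype.card V := by exact_mod_cast h2
      have : (2 : ℤ) ≤ Fintype.card V := by exact_mod_cast hn
      nlinarith
    constructor
    · linarith
    · intro h; linarith

theorem qq_uncross (G : SimpleGraph V) (k : ℕ) (S T E : Finset V)
    (hE : ∀ x ∈ E, x ∈ jS G (S ∪ T) ∧ x ∉ jS G S ∧ x ∉ jS G T) :
    qq G k (S ∪ T) + qq G k (S ∩ T) + E.card ≤ qq G k S + qq G k T := by
  have h1 := card_union_add_card_inter S T
  have h2 := card_union_add_card_inter (jS G S) (jS G T)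
  have h3 : jS G S ∩ jS G T ⊆ jS G (S ∩ T) := by
    intro x hx
    rw [mem_inter, mem_jS, mem_jS] at hx
    rw [mem_jS]
    intro y hy
    exact mem_inter.2 ⟨hx.1 y hy, hx.2 y hy⟩
  have h4 : (jS G S ∪ jS G T) ∪ E ⊆ jS G (S ∪ T) := by
    intro x hx
    rw [mem_union, mem_union] at hx
    rcases hx with (hx | hx) | hx
    · rw [mem_jS] at hx ⊢
      exact fun y hy => mem_union_left _ (hx y hy)
    · rw [mem_jS] at hx ⊢
      exact fun y hy => mem_union_right _ (hx y hy)
    · exact (hE x hx).1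
  have h5 : Disjoint (jS G S ∪ jS G T) E := by
    rw [disjoint_left]
    intro x hx hxE
    rcases mem_union.1 hx with h | h
    · exact (hE x hxE).2.1 h
    · exact (hE x hxE).2.2 h
  have h6 := card_le_card h4
  rw [card_union_of_disjoint h5] at h6
  have h7 := card_le_card h3
  unfold qq
  have h8 : ((k : ℤ) + 1) * (S ∪ T).card + ((k : ℤ) + 1) * (S ∩ T).card =
    ((k : ℤ) + 1) * S.card + ((k : ℤ) + 1) * T.card := by
    rw [← mul_add, ← mul_add]; congr 1; exact_mod_cast h1
  have h9 : ((jS G S).card : ℤ) + (jS G T).card + E.card ≤ (jS G (S ∪ T)).card + (jS G (S ∩ T)).card := by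
    norm_cast; omega
  linarith

def SB (G : SimpleGraph V) (k : ℕ) (x y : V) (S : Finset V) : Prop :=
  S.Nonempty ∧ x ∉ S ∧ y ∉ S ∧ hh G k S = 0 ∧ ∀ z, G.Adj x z → z = y ∨ z ∈ S

def WB (G : SimpleGraph V) (k : ℕ) (x y : V) (S : Finset V) : Prop :=
  S.Nonempty ∧ x ∉ S ∧ y ∉ S ∧ hh G k S = 1 ∧ (∀ z, G.Adj x z → z = y ∨ z ∈ S) ∧
    ∀ z, G.Adj y z → z = x ∨ z ∈ S

/-- if deleting an edge destroys the property then the edge is blocked -/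
theorem blocked {G : SimpleGraph V} {k : ℕ} (hP : PP G k) {x y : V} (hxy : G.Adj x y)
    (hd : ¬ PP (G.deleteEdges {s(x, y)}) k) :
    ∃ S, SB G k x y S ∨ SB G k y x S ∨ WB G k x y S := by
  unfold PP at hd
  push Not at hd
  obtain ⟨S, hS, hlt⟩ := hd
  have h0 := hP S hS
  have hadj : ∀ u v, G.Adj u v → (G.deleteEdges {s(x, y)}).Adj u v ∨ (u = x ∧ v = y) ∨ (u = y ∧ v = x) := by
    intro u v huv
    rw [SimpleGraph.deleteEdges_adj]
    by_cases h : s(u, v) = s(x, y)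
    · right; simpa using h
    · left; exact ⟨huv, by simpa using h⟩
  have key : ∀ C : Finset V, (∀ u ∈ isoS (G.deleteEdges {s(x, y)}) S, u ∈ isoS G S ∨ u ∈ C) →
      hh G k S - C.card < 0 := by
    intro C hC
    have h1 : isoS (G.deleteEdges {s(x, y)}) S ⊆ isoS G S ∪ C := fun u hu => mem_union.2 (hC u hu)
    have h2 := (card_le_card h1).trans (card_union_le _ _)
    have h3 : ((isoS (G.deleteEdges {s(x, y)}) S).card : ℤ) ≤ (isoS G S).card + C.card := by
      exact_mod_cast h2
    unfold hh at hlt ⊢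
    linarith
  have hiso : ∀ u ∈ isoS (G.deleteEdges {s(x, y)}) S, u ∈ isoS G S ∨
      (u = x ∧ y ∉ S ∧ x ∉ S ∧ ∀ z, G.Adj x z → z = y ∨ z ∈ S) ∨
      (u = y ∧ x ∉ S ∧ y ∉ S ∧ ∀ z, G.Adj y z → z = x ∨ z ∈ S) := by
    intro u hu
    rw [mem_isoS] at hu
    by_cases h : u ∈ isoS G S
    · exact Or.inl h
    right
    rw [mem_isoS] at h
    push Not at h
    obtain ⟨v, huv, hv⟩ := h hu.1
    have hne : x ≠ y := hxy.ne
    rcases hadj u v huv with h | ⟨rfl, rfl⟩ | ⟨rfl, rfl⟩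
    · exact absurd (hu.2 v h) hv
    · left
      refine ⟨rfl, hv, hu.1, fun z hz => ?_⟩
      rcases hadj _ _ hz with h | ⟨_, h⟩ | ⟨h, _⟩
      · exact Or.inr (hu.2 z h)
      · exact Or.inl h
      · exact absurd h hne
    · right
      refine ⟨rfl, hv, hu.1, fun z hz => ?_⟩
      rcases hadj _ _ hz with h | ⟨h, _⟩ | ⟨_, h⟩
      · exact Or.inr (hu.2 z h)
      · exact absurd h hne.symm
      · exact Or.inl h
  refine ⟨S, ?_⟩
  have hxS : x ∉ S ∧ y ∉ S := by
    by_contra hcon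
    have := key ∅ (fun u hu => by
      rcases hiso u hu with h | h | h
      · exact Or.inl h
      · exact absurd ⟨h.2.2.1, h.2.1⟩ hcon
      · exact absurd ⟨h.2.1, h.2.2.1⟩ hcon)
    simp at this
    linarith
  have k2 := key {x, y} (fun u hu => by
      rcases hiso u hu with h | h | h
      · exact Or.inl h
      · right; simp [h.1]
      · right; simp [h.1])
  have h3 : (({x, y} : Finset V).card : ℤ) = 2 := by
    rw [card_pair hxy.ne]; rfl
  rw [h3] at k2
  by_cases hx : ∀ z, G.Adj x z → z = y ∨ z ∈ S
  · by_cases hy : ∀ z, G.Adj y z → z = x ∨ z ∈ S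
    · have : hh G k S = 0 ∨ hh G k S = 1 := by omega
      rcases this with h | h
      · exact Or.inl ⟨hS, hxS.1, hxS.2, h, hx⟩
      · exact Or.inr (Or.inr ⟨hS, hxS.1, hxS.2, h, hx, hy⟩)
    · have := key {x} (fun u hu => by
        rcases hiso u hu with h | h | h
        · exact Or.inl h
        · right; simp [h.1]
        · exact absurd h.2.2.2 hy)
      simp at this
      exact Or.inl ⟨hS, hxS.1, hxS.2, by omega, hx⟩
  · have := key {y} (fun u hu => by
        rcases hiso u hu with h | h | h
        · exact Or.inl h
        · exact absurd h.2.2.2 hx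
        · right; simp [h.1])
    simp at this
    by_cases hy : ∀ z, G.Adj y z → z = x ∨ z ∈ S
    · exact Or.inr (Or.inl ⟨hS, hxS.2, hxS.1, by omega, hy⟩)
    · have := key ∅ (fun u hu => by
        rcases hiso u hu with h | h | h
        · exact Or.inl h
        · exact absurd h.2.2.2 hx
        · exact absurd h.2.2.2 hy)
      simp at this
      linarith


theorem exists_nbr {G : SimpleGraph V} (hc : G.Connected) (hn : 2 ≤ Fintype.card V) (v : V) :
    ∃ u, G.Adj v u := by
  haveI : Nontrivial V := Fintype.one_lt_card_iff_nontrivial.1 hn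
  exact hc.preconnected.exists_adj_of_nontrivial v

section local_lemmas
variable {G : SimpleGraph V} {k : ℕ}

theorem deg_bound (hP : PP G k) {S C : Finset V} {s : V} (hs : s ∈ S)
    (hC : ∀ u ∈ isoS G S, G.Adj u s → u ∈ C) :
    S = {s} ∨ (k : ℤ) + 1 ≤ hh G k S + C.card := by
  by_cases h : (S.erase s).Nonempty
  · right
    have h1 := hP _ h
    have h2 := hh_erase G k C hs hC
    linarith
  · left
    rw [not_nonempty_iff_eq_empty] at h
    ext z
    rw [mem_singleton]
    constructor
    · intro hz
      by_contra hne
      have : z ∈ S.erase s := mem_erase.2 ⟨hne, hz⟩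
      rw [h] at this
      simp at this
    · rintro rfl; exact hs

theorem leaf_exists (hc : G.Connected) (hn : 2 ≤ Fintype.card V) {s : V}
    (h : hh G k {s} < k) : ∃ u ∈ isoS G {s}, G.Adj u s := by
  have h1 : 0 < (isoS G {s}).card := by
    unfold hh at h
    simp at h
    rw [card_pos, nonempty_iff_ne_empty]
    intro h0
    simp [h0] at h
  obtain ⟨u, hu⟩ := card_pos.1 h1
  obtain ⟨v, hv⟩ := exists_nbr hc hn u
  have : v = s := by simpa using (mem_isoS.1 hu).2 v hv
  exact ⟨u, hu, this ▸ hv⟩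

/-- a vertex of a tight set has a neighbour among the isolated vertices -/
theorem tight_nbr (hk : 1 ≤ k) (hc : G.Connected) (hn : 2 ≤ Fintype.card V) (hP : PP G k)
    {S : Finset V} {s : V} (hs : s ∈ S) (h : hh G k S = 0) : ∃ u ∈ isoS G S, G.Adj u s := by
  by_contra hcon
  push Not at hcon
  rcases deg_bound hP (C := ∅) hs (fun u hu hus => absurd hus (hcon u hu)) with h1 | h1
  · subst h1
    obtain ⟨u, hu, hus⟩ := leaf_exists (k := k) hc hn (s := s) (by rw [h]; exact_mod_cast hk)
    exact hcon u hu hus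
  · rw [h] at h1; simp at h1; omega

theorem tight_cross (hk : 1 ≤ k) (hc : G.Connected) (hn : 2 ≤ Fintype.card V) (hP : PP G k)
    {S T : Finset V} (hS : hh G k S = 0) (hT : hh G k T = 0)
    {w u : V} (hw : w ∈ S) (hwT : w ∉ isoS G T) (hu : u ∈ isoS G S) (huT : u ∈ T) : False := by
  have hk' : (1 : ℤ) ≤ k := by exact_mod_cast hk
  have hA : 0 < (isoS G S ∩ T).card := card_pos.2 ⟨u, mem_inter.2 ⟨hu, huT⟩⟩
  have hA' : (1 : ℤ) ≤ (isoS G S ∩ T).card := by exact_mod_cast hA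
  have h1 := hh_AB G k S T
  have h2 := hP (S \ (isoS G T ∩ S)) ⟨w, mem_sdiff.2 ⟨hw, fun h => hwT (mem_inter.1 h).1⟩⟩
  have hB' : (0 : ℤ) ≤ (isoS G T ∩ S).card := by positivity
  by_cases h3 : (T \ (isoS G S ∩ T)).Nonempty
  · have h4 := hP _ h3
    rw [hS, hT] at h1
    nlinarith
  · rw [not_nonempty_iff_eq_empty, sdiff_eq_empty_iff_subset] at h3
    have hAT : isoS G S ∩ T = T := Subset.antisymm inter_subset_right h3
    have hBT : isoS G T ∩ S = isoS G T := by
      apply Subset.antisymm inter_subset_left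
      intro v hv
      refine mem_inter.2 ⟨hv, ?_⟩
      obtain ⟨t, ht⟩ := exists_nbr hc hn v
      have htT := (mem_isoS.1 hv).2 t ht
      exact (mem_isoS.1 (mem_inter.1 (h3 htT)).1).2 v ht.symm
    have h5 := hh_sdiff G k (S := S) (B := isoS G T ∩ S) (C := isoS G S ∩ T) inter_subset_right
      (by
        intro u hu b hb hub
        exact mem_inter.2 ⟨hu, (mem_isoS.1 (mem_inter.1 hb).1).2 u hub.symm⟩)
    rw [hAT] at h5 hA'
    rw [hBT] at h5 h2
    rw [hS] at h5
    have h6 : ((isoS G T).card : ℤ) = (k + 1) * T.card - 1 := by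
      unfold hh at hT; linarith
    have h7 : (T.card : ℤ) ≤ (isoS G T).card := by nlinarith
    nlinarith

theorem E_strong (hk : 1 ≤ k) (hc : G.Connected) (hn : 2 ≤ Fintype.card V) (hP : PP G k)
    {x y w : V} {S T : Finset V} (hxy : G.Adj x y) (hxw : G.Adj x w) (hwy : w ≠ y)
    (hS : SB G k x y S) (hT : SB G k w x T) : False := by
  obtain ⟨_, hxS, hyS, hS0, hSN⟩ := hS
  obtain ⟨_, hwT, hxT, hT0, hTN⟩ := hT
  have hwS : w ∈ S := (hSN w hxw).resolve_left hwy
  obtain ⟨u, hu, huw⟩ := tight_nbr hk hc hn hP hwS hS0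
  have hux : u ≠ x := by
    rintro rfl
    exact hyS ((mem_isoS.1 hu).2 y hxy)
  exact tight_cross hk hc hn hP hS0 hT0 hwS
    (fun h => hxT ((mem_isoS.1 h).2 x hxw.symm)) hu ((hTN u huw.symm).resolve_left hux)

theorem E_weak (hk : 1 ≤ k) (hc : G.Connected) (hn : 2 ≤ Fintype.card V) (hP : PP G k)
    {x y w : V} {S T : Finset V} (hxy : G.Adj x y) (hxw : G.Adj x w) (hwy : w ≠ y)
    (hS : SB G k x y S) (hT : WB G k x w T) : False := by
  have hk' : (1 : ℤ) ≤ k := by exact_mod_cast hk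
  obtain ⟨_, hxS, hyS, hS0, hSN⟩ := hS
  obtain ⟨_, hxT, hwT, hT0, hTN, hTN'⟩ := hT
  have hwS : w ∈ S := (hSN w hxw).resolve_left hwy
  have hyT : y ∈ T := (hTN y hxy).resolve_left hwy.symm
  have hyA : y ∉ isoS G S := fun h => hxS ((mem_isoS.1 h).2 x hxy.symm)
  have hwB : w ∉ isoS G T := fun h => hxT ((mem_isoS.1 h).2 x hxw.symm)
  have hAw : ∀ u ∈ isoS G S, G.Adj u w → u ∈ isoS G S ∩ T := by
    intro u hu huw
    have hux : u ≠ x := by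
      rintro rfl
      exact hyS ((mem_isoS.1 hu).2 y hxy)
    exact mem_inter.2 ⟨hu, (hTN' u huw.symm).resolve_left hux⟩
  have h1 := hh_AB G k S T
  have h2 := hP (S \ (isoS G T ∩ S)) ⟨w, mem_sdiff.2 ⟨hwS, fun h => hwB (mem_inter.1 h).1⟩⟩
  have h3 := hP (T \ (isoS G S ∩ T)) ⟨y, mem_sdiff.2 ⟨hyT, fun h => hyA (mem_inter.1 h).1⟩⟩
  have hB' : (0 : ℤ) ≤ (isoS G T ∩ S).card := by positivity
  rw [hS0, hT0] at h1
  rcases deg_bound hP hwS hAw with h4 | h4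
  · obtain ⟨u, hu, huw⟩ := tight_nbr hk hc hn hP hwS hS0
    have huA := hAw u hu huw
    have huT := (mem_inter.1 huA).2
    rcases deg_bound hP (C := ∅) huT (fun v hv hvu => by
      have : v ∈ S := (mem_isoS.1 hu).2 v hvu.symm
      rw [h4, mem_singleton] at this
      exact absurd (this ▸ hv) hwB) with h5 | h5
    · rw [h5, mem_singleton] at hyT
      exact hyA (hyT ▸ hu)
    · rw [hT0] at h5; simp at h5; omega
  · rw [hS0] at h4
    nlinarith

theorem F_lem (hk : 1 ≤ k) (hc : G.Connected) (hn : 2 ≤ Fintype.card V) (hP : PP G k)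
    {x y s s2 t : V} {S T : Finset V} (hxy : G.Adj x y) (hxs : G.Adj x s) (hsy : s ≠ y)
    (hs2 : G.Adj s s2) (hs2x : s2 ≠ x) (hyt : G.Adj y t) (htx : t ≠ x)
    (hS : WB G k x y S) (hT : SB G k s s2 T) : False := by
  have hk' : (1 : ℤ) ≤ k := by exact_mod_cast hk
  obtain ⟨_, hxS, hyS, hS0, hSN, hSN'⟩ := hS
  obtain ⟨_, hsT, hs2T, hT0, hTN⟩ := hT
  have hsS : s ∈ S := (hSN s hxs).resolve_left hsy
  have hxT : x ∈ T := (hTN x hxs.symm).resolve_left hs2x.symm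
  have hxB : x ∉ isoS G S := fun h => hyS ((mem_isoS.1 h).2 y hxy)
  have hsA : s ∉ isoS G T := fun h => hs2T ((mem_isoS.1 h).2 s2 hs2)
  have h1 := hh_AB G k S T
  have h2 := hP (S \ (isoS G T ∩ S)) ⟨s, mem_sdiff.2 ⟨hsS, fun h => hsA (mem_inter.1 h).1⟩⟩
  have h3 := hP (T \ (isoS G S ∩ T)) ⟨x, mem_sdiff.2 ⟨hxT, fun h => hxB (mem_inter.1 h).1⟩⟩
  rw [hS0, hT0] at h1
  have hB' : (0 : ℤ) ≤ (isoS G S ∩ T).card := by positivity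
  have hC : ∀ u ∈ isoS G T, G.Adj u x → u = y ∨ u ∈ isoS G T ∩ S := by
    intro u hu hux
    rcases hSN u hux.symm with h | h
    · exact Or.inl h
    · exact Or.inr (mem_inter.2 ⟨hu, h⟩)
  have hA : (isoS G T ∩ S).Nonempty := by
    rcases deg_bound hP (C := insert y (isoS G T ∩ S)) hxT (fun u hu hux => by
      rw [mem_insert]; exact hC u hu hux) with h4 | h4
    · obtain ⟨u, hu, hux⟩ := tight_nbr hk hc hn hP hxT hT0
      rcases hC u hu hux with rfl | h5
      · have := (mem_isoS.1 hu).2 t hyt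
        rw [h4, mem_singleton] at this
        exact absurd this htx
      · exact ⟨u, h5⟩
    · by_contra hne
      rw [not_nonempty_iff_eq_empty] at hne
      rw [hne, hT0] at h4
      simp at h4
      omega
  have hA' : (1 : ℤ) ≤ (isoS G T ∩ S).card := by exact_mod_cast card_pos.2 hA
  have hB0 : ((isoS G S ∩ T).card : ℤ) = 0 := by nlinarith
  obtain ⟨a, ha⟩ := hA
  obtain ⟨ha1, ha2⟩ := mem_inter.1 ha
  rcases deg_bound hP (C := isoS G S ∩ T) ha2 (fun u hu hua =>
    mem_inter.2 ⟨hu, (mem_isoS.1 ha1).2 u hua.symm⟩) with h4 | h4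
  · rw [h4, mem_singleton] at hsS
    exact hsA (hsS ▸ ha1)
  · rw [hS0, hB0] at h4
    linarith

theorem W_leaf (hk : 1 ≤ k) (hP : PP G k)
    {x y s u : V} {S T : Finset V} (hxy : G.Adj x y) (hxs : G.Adj x s) (hsy : s ≠ y)
    (hS : WB G k x y S) (hT : WB G k x s T) (huS : u ∈ isoS G S) (huT : u ∈ T)
    (hus : ∀ v, G.Adj u v → v = s) : False := by
  obtain ⟨_, hxS, hyS, hS0, hSN, hSN'⟩ := hS
  obtain ⟨_, hxT, hsT, hT0, hTN, hTN'⟩ := hT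
  have hyT : y ∈ T := (hTN y hxy).resolve_left hsy.symm
  have hyA : y ∉ isoS G S := fun h => hxS ((mem_isoS.1 h).2 x hxy.symm)
  have hsB : s ∉ isoS G T := fun h => hxT ((mem_isoS.1 h).2 x hxs.symm)
  rcases deg_bound hP (C := ∅) huT (fun v hv hvu => by
      exact absurd (hus v hvu.symm ▸ hv) hsB) with h5 | h5
  · rw [h5, mem_singleton] at hyT
    exact hyA (hyT ▸ huS)
  · rw [hT0] at h5; simp at h5; omega

theorem W_one (hk : 1 ≤ k) (hc : G.Connected) (hn : 4 ≤ Fintype.card V) (hP : PP G k)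
    {x y s : V} {S T : Finset V} (hxy : G.Adj x y) (hxs : G.Adj x s) (hsy : s ≠ y)
    (hS : WB G k x y S) (hT : WB G k x s T) (hSs : S = {s}) : False := by
  have hS' := hS
  have hT' := hT
  obtain ⟨_, hxS, hyS, hS0, hSN, hSN'⟩ := hS
  obtain ⟨_, hxT, hsT, hT0, hTN, hTN'⟩ := hT
  have hyT : y ∈ T := (hTN y hxy).resolve_left hsy.symm
  have hsB : s ∉ isoS G T := fun h => hxT ((mem_isoS.1 h).2 x hxs.symm)
  have hyA : y ∉ isoS G S := fun h => hxS ((mem_isoS.1 h).2 x hxy.symm)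
  have hxA : x ∉ isoS G S := fun h => hyS ((mem_isoS.1 h).2 y hxy)
  have hxB : x ∉ isoS G T := fun h => hsT ((mem_isoS.1 h).2 s hxs)
  have hk1 : k = 1 := by
    by_contra hne
    have h2 : 2 ≤ k := by omega
    obtain ⟨u, hu, hus⟩ := leaf_exists (k := k) hc (by omega) (s := s) (by
      rw [← hSs, hS0]; exact_mod_cast h2)
    rw [← hSs] at hu
    have hux : u ≠ x := fun h => hxA (h ▸ hu)
    refine W_leaf hk hP hxy hxs hsy hS' hT' hu ((hTN' u hus.symm).resolve_left hux) ?_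
    intro v hv
    have := (mem_isoS.1 hu).2 v hv
    rwa [hSs, mem_singleton] at this
  have hTy : T = {y} := by
    rcases deg_bound hP (C := ∅) hyT (fun v hv hvy => by
      rcases hSN' v hvy.symm with h | h
      · exact absurd (h ▸ hv) hxB
      · rw [hSs, mem_singleton] at h
        exact absurd (h ▸ hv) hsB) with h5 | h5
    · exact h5
    · rw [hT0, hk1] at h5; simp at h5
  have hall : ∀ b, b ∈ ({x, y, s} : Finset V) := by
    refine closed_univ_s4 hc (a := x) (by simp) ?_
    intro u v hu huv
    simp only [mem_insert, mem_singleton] at hu ⊢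
    rw [hSs] at hSN hSN'
    rw [hTy] at hTN'
    simp only [mem_singleton] at hSN hSN' hTN'
    rcases hu with rfl | rfl | rfl
    · have := hSN v huv; tauto
    · have := hSN' v huv; tauto
    · have := hTN' v huv; tauto
  have h1 : Fintype.card V ≤ 3 := by
    rw [← card_univ, ← Finset.eq_univ_iff_forall.2 hall]
    exact card_le_three
  omega

theorem W_lem (hk : 1 ≤ k) (hc : G.Connected) (hn : 4 ≤ Fintype.card V) (hP : PP G k)
    {x y s : V} {S T : Finset V} (hxy : G.Adj x y) (hxs : G.Adj x s) (hsy : s ≠ y)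
    (hS : WB G k x y S) (hT : WB G k x s T) : False := by
  have hk' : (1 : ℤ) ≤ k := by exact_mod_cast hk
  by_cases hSs : S = {s}
  · exact W_one hk hc hn hP hxy hxs hsy hS hT hSs
  by_cases hTy : T = {y}
  · exact W_one hk hc hn hP hxs hxy hsy.symm hT hS hTy
  have hS' := hS
  have hT' := hT
  obtain ⟨_, hxS, hyS, hS0, hSN, hSN'⟩ := hS
  obtain ⟨_, hxT, hsT, hT0, hTN, hTN'⟩ := hT
  have hsS : s ∈ S := (hSN s hxs).resolve_left hsy
  have hyT : y ∈ T := (hTN y hxy).resolve_left hsy.symm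
  have hsB : s ∉ isoS G T := fun h => hxT ((mem_isoS.1 h).2 x hxs.symm)
  have hyA : y ∉ isoS G S := fun h => hxS ((mem_isoS.1 h).2 x hxy.symm)
  have hxA : x ∉ isoS G S := fun h => hyS ((mem_isoS.1 h).2 y hxy)
  have hxB : x ∉ isoS G T := fun h => hsT ((mem_isoS.1 h).2 s hxs)
  have hA := (deg_bound hP (C := isoS G S ∩ T) hsS (fun u hu hus => mem_inter.2 ⟨hu,
    (hTN' u hus.symm).resolve_left (fun h => hxA (h ▸ hu))⟩)).resolve_left hSs
  have hB := (deg_bound hP (C := isoS G T ∩ S) hyT (fun u hu hus => mem_inter.2 ⟨hu,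
    (hSN' u hus.symm).resolve_left (fun h => hxB (h ▸ hu))⟩)).resolve_left hTy
  have h1 := hh_AB G k S T
  have hne : s ∈ S \ (isoS G T ∩ S) := mem_sdiff.2 ⟨hsS, fun h => hsB (mem_inter.1 h).1⟩
  have h2 := hP (S \ (isoS G T ∩ S)) ⟨s, hne⟩
  have h3 := hP (T \ (isoS G S ∩ T)) ⟨y, mem_sdiff.2 ⟨hyT, fun h => hyA (mem_inter.1 h).1⟩⟩
  rw [hS0] at h1 hA
  rw [hT0] at h1 hB
  have hk1 : (k : ℤ) = 1 := by nlinarith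
  rw [hk1] at h1 hA hB
  have h0 : hh G k (S \ (isoS G T ∩ S)) = 0 := by linarith
  have hA1 : ((isoS G S ∩ T).card : ℤ) = 1 := by linarith
  have hC : ∀ u ∈ isoS G (S \ (isoS G T ∩ S)), G.Adj u s → u ∈ isoS G S ∩ T := by
    intro u hu hus
    rw [mem_isoS] at hu
    have hux : u ≠ x := by
      rintro rfl
      exact hyS (mem_sdiff.1 (hu.2 y hxy)).1
    have huT : u ∈ T := (hTN' u hus.symm).resolve_left hux
    refine mem_inter.2 ⟨mem_isoS.2 ⟨fun huS => hu.1 (mem_sdiff.2 ⟨huS, fun h => ?_⟩),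
      fun v hv => (mem_sdiff.1 (hu.2 v hv)).1⟩, huT⟩
    exact (mem_isoS.1 (mem_inter.1 h).1).1 huT
  rcases deg_bound hP hne hC with h4 | h4
  · obtain ⟨u, hu, hus⟩ := tight_nbr hk hc (by omega) hP hne h0
    have h5 := hC u hu hus
    refine W_leaf hk hP hxy hxs hsy hS' hT' (mem_inter.1 h5).1 (mem_inter.1 h5).2 ?_
    intro v hv
    have := (mem_isoS.1 hu).2 v hv
    rwa [h4, mem_singleton] at this
  · rw [h0, hk1] at h4
    linarith

theorem WB.symm {x y : V} {S : Finset V} (h : WB G k x y S) : WB G k y x S :=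
  ⟨h.1, h.2.2.1, h.2.1, h.2.2.2.1, h.2.2.2.2.2, h.2.2.2.2.1⟩

end local_lemmas
end Kaneko

section Kaneko2
variable {V : Type*} [Fintype V] [DecidableEq V]

def NB (G : SimpleGraph V) (x y : V) : Prop := G.Adj x y ∧ ¬ G.IsBridge s(x, y)

def Blk (G : SimpleGraph V) (k : ℕ) : Prop :=
  ∀ x y, NB G x y → ∃ S, SB G k x y S ∨ SB G k y x S ∨ WB G k x y S

def XX (G : SimpleGraph V) (k : ℕ) (x : V) : Prop := ∃ y S, NB G x y ∧ SB G k x y S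

variable {G : SimpleGraph V} {k : ℕ}

theorem NB.symm {x y : V} (h : NB G x y) : NB G y x :=
  ⟨h.1.symm, by rw [Sym2.eq_swap]; exact h.2⟩

theorem NB_boundary {x a : V} (h : NB G x a) (W : Set V) (ha : a ∈ W) (hx : x ∉ W) :
    ∃ u v, NB G u v ∧ u ∈ W ∧ v ∉ W ∧ s(u, v) ≠ s(x, a) := by
  obtain ⟨hadj, hnb⟩ := h
  rw [SimpleGraph.isBridge_iff, not_not, SimpleGraph.reachable_deleteEdges_iff_exists_walk] at hnb
  obtain ⟨p0, hp0⟩ := hnb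
  set p := p0.reverse.toPath with hp
  have hpe : s(x, a) ∉ (p : G.Walk a x).edges := by
    intro h
    have := SimpleGraph.Walk.edges_toPath_subset_edges _ h
    rw [SimpleGraph.Walk.edges_reverse, List.mem_reverse] at this
    exact hp0 this
  have hcyc := SimpleGraph.Path.cons_isCycle p hadj hpe
  obtain ⟨d, hd, hd1, hd2⟩ := (p : G.Walk a x).exists_boundary_dart W ha hx
  have hde : s(d.fst, d.snd) ∈ (p : G.Walk a x).edges := by
    rw [SimpleGraph.Walk.edges]
    exact List.mem_map.2 ⟨d, hd, rfl⟩
  refine ⟨d.fst, d.snd, ⟨d.adj, fun hb => ?_⟩, hd1, hd2, fun h => hpe (h ▸ hde)⟩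
  apply hb.notMem_edges_of_isCycle hcyc
  simp [hde]

theorem NB_other {x y : V} (h : NB G x y) : ∃ s, s ≠ y ∧ NB G x s := by
  obtain ⟨u, v, huv, hu, hv, hne⟩ := NB_boundary h {z | z ≠ x} h.1.ne.symm (by simp)
  have hvx : v = x := by simpa using hv
  subst hvx
  refine ⟨u, ?_, huv.symm⟩
  rintro rfl
  exact hne Sym2.eq_swap

theorem claim1 (hk : 1 ≤ k) (hc : G.Connected) (hn : 4 ≤ Fintype.card V) (hP : PP G k)
    (hB : Blk G k) {x y w : V} {S : Finset V} (hxy : NB G x y) (hS : SB G k x y S)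
    (hxw : NB G x w) : ∃ S', SB G k x w S' := by
  by_cases hwy : w = y
  · subst hwy; exact ⟨S, hS⟩
  obtain ⟨T, hT | hT | hT⟩ := hB x w hxw
  · exact ⟨T, hT⟩
  · exact (E_strong hk hc (by omega) hP hxy.1 hxw.1 hwy hS hT).elim
  · exact (E_weak hk hc (by omega) hP hxy.1 hxw.1 hwy hS hT).elim

theorem claim2 (hk : 1 ≤ k) (hc : G.Connected) (hn : 4 ≤ Fintype.card V) (hP : PP G k)
    (hB : Blk G k) {x y : V} (hxy : NB G x y) : XX G k x ∨ XX G k y := by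
  obtain ⟨S, hS | hS | hS⟩ := hB x y hxy
  · exact Or.inl ⟨y, S, hxy, hS⟩
  · exact Or.inr ⟨x, S, hxy.symm, hS⟩
  obtain ⟨s, hsy, hxs⟩ := NB_other hxy
  obtain ⟨T, hT | hT | hT⟩ := hB x s hxs
  · exact Or.inl ⟨s, T, hxs, hT⟩
  · obtain ⟨s2, hs2x, hs2⟩ := NB_other hxs.symm
    obtain ⟨t, htx, hyt⟩ := NB_other hxy.symm
    obtain ⟨T', hT'⟩ := claim1 hk hc hn hP hB hxs.symm hT hs2
    exact (F_lem hk hc (by omega) hP hxy.1 hxs.1 hsy hs2.1 hs2x hyt.1 htx hS hT').elim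
  · exact (W_lem hk hc hn hP hxy.1 hxs.1 hsy hS hT).elim

theorem qq_nonpos {S : Finset V} (h : hh G k S = 0) : qq G k S ≤ 0 := by
  have := qq_le_hh G k S; linarith

theorem claimD (hk : 1 ≤ k) (hc : G.Connected) (hn : 4 ≤ Fintype.card V) (hP : PP G k)
    {x y y' : V} {S S' : Finset V} (hxy : G.Adj x y) (hxy' : G.Adj x y') (hne : y ≠ y')
    (hS : SB G k x y S) (hS' : SB G k x y' S') {z : V} (hz : G.Adj x z) : z = y ∨ z = y' := by
  by_contra hcon
  push Not at hcon
  obtain ⟨hS1, _, hyS, hS0, hSN⟩ := hS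
  obtain ⟨_, _, hyS', hS0', hSN'⟩ := hS'
  have h1 : (S ∩ S').Nonempty :=
    ⟨z, mem_inter.2 ⟨(hSN z hz).resolve_left hcon.1, (hSN' z hz).resolve_left hcon.2⟩⟩
  have h2 : (S ∪ S').Nonempty := hS1.mono subset_union_left
  have h3 := qq_uncross G k S S' {x} (by
    intro u hu
    rw [mem_singleton] at hu
    subst hu
    refine ⟨mem_jS.2 fun t ht => ?_, fun h => hyS (mem_jS.1 h y hxy),
      fun h => hyS' (mem_jS.1 h y' hxy')⟩
    rcases hSN t ht with rfl | h
    · exact mem_union_right _ ((hSN' t ht).resolve_left hne)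
    · exact mem_union_left _ h)
  have h4 := (qq_key hk hc (by omega) hP h1).1
  have h5 := (qq_key hk hc (by omega) hP h2).1
  have h6 := qq_nonpos hS0
  have h7 := qq_nonpos hS0'
  rw [card_singleton] at h3
  push_cast at h3
  linarith

theorem claim3 (hk : 1 ≤ k) (hc : G.Connected) (hn : 4 ≤ Fintype.card V) (hP : PP G k)
    (hB : Blk G k) {x : V} (hx : XX G k x) {a : V} (ha : G.Adj x a) :
    NB G x a ∧ (∃ S, SB G k x a S) ∧ ∃ b, a ≠ b ∧ NB G x b ∧ (∃ S, SB G k x b S) ∧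
      ∀ z, G.Adj x z → z = a ∨ z = b := by
  obtain ⟨y, S, hxy, hS⟩ := hx
  obtain ⟨y', hne, hxy'⟩ := NB_other hxy
  obtain ⟨S', hS'⟩ := claim1 hk hc hn hP hB hxy hS hxy'
  have hD := fun z (hz : G.Adj x z) => claimD hk hc hn hP hxy.1 hxy'.1 hne.symm hS hS' hz
  rcases hD a ha with rfl | rfl
  · exact ⟨hxy, ⟨S, hS⟩, y', hne.symm, hxy', ⟨S', hS'⟩, hD⟩
  · exact ⟨hxy', ⟨S', hS'⟩, y, hne, hxy, ⟨S, hS⟩, fun z hz => (hD z hz).symm⟩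

theorem claim5 (hk : 1 ≤ k) (hc : G.Connected) (hn : 4 ≤ Fintype.card V) (hP : PP G k)
    (hB : Blk G k) {u : V} {S : Finset V} (hS : hh G k S = 0) (hu : u ∈ S) : ¬ XX G k u := by
  intro hx
  obtain ⟨v, hv, hvu⟩ := tight_nbr hk hc (by omega) hP hu hS
  obtain ⟨_, _, b, hne, hb, ⟨S1, h1⟩, _⟩ := claim3 hk hc hn hP hB hx hvu.symm
  obtain ⟨_, _, h3, h4, h5⟩ := h1
  exact tight_cross hk hc (by omega) hP hS h4 hu (fun h => h3 ((mem_isoS.1 h).2 b hb.1)) hv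
    ((h5 v hvu.symm).resolve_left hne)

def Bad (G : SimpleGraph V) (k : ℕ) (S : Finset V) : Prop :=
  S.Nonempty ∧ hh G k S = 0 ∧ ∃ x a b, XX G k x ∧ G.Adj x a ∧ G.Adj x b ∧ a ∈ S ∧ b ∉ S

theorem no_NB (hk : 1 ≤ k) (hc : G.Connected) (hn : 4 ≤ Fintype.card V) (hP : PP G k)
    (hB : Blk G k) (x0 y0 : V) : ¬ NB G x0 y0 := by
  intro h0
  have hbad : ∃ S, Bad G k S := by
    have h1 : ∃ x, XX G k x := by
      rcases claim2 hk hc hn hP hB h0 with h | h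
      · exact ⟨_, h⟩
      · exact ⟨_, h⟩
    obtain ⟨x, hx⟩ := h1
    obtain ⟨y, hy⟩ := exists_nbr hc (by omega) x
    obtain ⟨h2, ⟨S, hS⟩, b, hne, hb, ⟨S', hS'⟩, hN⟩ := claim3 hk hc hn hP hB hx hy
    refine ⟨S, hS.1, hS.2.2.2.1, x, b, y, hx, hb.1, hy, ?_, hS.2.2.1⟩
    exact (hS.2.2.2.2 b hb.1).resolve_left hne.symm
  obtain ⟨S, hS, hmax⟩ := Finset.exists_max_image (univ.filter (Bad G k)) Finset.card
    (by obtain ⟨S, hS⟩ := hbad; exact ⟨S, by simpa using hS⟩)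
  have hS' : Bad G k S := by simpa using hS
  obtain ⟨hSne, hS0, x, a, b, hx, hxa, hxb, haS, hbS⟩ := hS'
  have hab : a ≠ b := fun h => hbS (h ▸ haS)
  obtain ⟨hNa, ⟨S', hSB⟩, b', hab', _, _, hN⟩ := claim3 hk hc hn hP hB hx hxa
  have hb' : b = b' := (hN b hxb).resolve_left hab.symm
  subst hb'
  obtain ⟨hS'ne, hxS', haS', hS'0, hS'N⟩ := hSB
  have hbS' : b ∈ S' := (hS'N b hxb).resolve_left hab.symm
  have hxE : x ∈ jS G (S ∪ S') ∧ x ∉ jS G S ∧ x ∉ jS G S' := by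
    refine ⟨mem_jS.2 fun t ht => ?_, fun h => hbS (mem_jS.1 h b hxb),
      fun h => haS' (mem_jS.1 h a hxa)⟩
    rcases hN t ht with rfl | rfl
    · exact mem_union_left _ haS
    · exact mem_union_right _ hbS'
  have hq := qq_nonpos hS0
  have hq' := qq_nonpos hS'0
  have hUne : (S ∪ S').Nonempty := hSne.mono subset_union_left
  obtain ⟨hU, hU0⟩ := qq_key hk hc (by omega) hP hUne
  have hunc := qq_uncross G k S S' {x} (by
    intro u hu; rw [mem_singleton] at hu; subst hu; exact hxE)
  rw [card_singleton] at hunc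
  push_cast at hunc
  have hI : S ∩ S' = ∅ := by
    by_contra hne
    have := (qq_key hk hc (by omega) hP (nonempty_iff_ne_empty.2 hne)).1
    linarith
  have hqe : qq G k (∅ : Finset V) = -1 := by
    have : jS G (∅ : Finset V) = ∅ := by
      rw [eq_empty_iff_forall_notMem]
      intro u hu
      obtain ⟨v, hv⟩ := exists_nbr hc (by omega) u
      simpa using mem_jS.1 hu v hv
    simp [qq, this]
  rw [hI, hqe] at hunc
  have hUh : hh G k (S ∪ S') = 0 := hU0 (by linarith)
  have hxS : x ∉ S := fun h => claim5 hk hc hn hP hB hS0 h hx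
  obtain ⟨u, v, huv, huW, hvW, hne⟩ := NB_boundary hNa
    {v | v ∈ S ∨ (XX G k v ∧ ∀ z, G.Adj v z → z ∈ S)} (Or.inl haS) (by
      rintro (h | h)
      · exact hxS h
      · exact hbS (h.2 b hxb))
  rcases huW with huS | huX
  swap
  · exact hvW (Or.inl (huX.2 v huv.1))
  have hvX : XX G k v := (claim2 hk hc hn hP hB huv).resolve_left (claim5 hk hc hn hP hB hS0 huS)
  have hz : ∃ z, G.Adj v z ∧ z ∉ S := by
    by_contra hcon
    push Not at hcon
    exact hvW (Or.inr ⟨hvX, hcon⟩)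
  obtain ⟨z, hvz, hzS⟩ := hz
  have hvx : v ≠ x := by
    rintro rfl
    rcases hN u huv.1.symm with rfl | rfl
    · exact hne Sym2.eq_swap
    · exact hbS huS
  by_cases hzS' : z ∈ S'
  · have huz : u ≠ z := fun h => hzS (h ▸ huS)
    have huS' : u ∉ S' := by
      intro h
      have : u ∈ S ∩ S' := mem_inter.2 ⟨huS, h⟩
      rw [hI] at this
      simp at this
    obtain ⟨_, _, b1, hub1, _, _, hN1⟩ := claim3 hk hc hn hP hB hvX huv.1.symm
    have hzb : z = b1 := (hN1 z hvz).resolve_left huz.symm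
    subst hzb
    have hunc2 := qq_uncross G k S S' {x, v} (by
      intro w hw
      rw [mem_insert, mem_singleton] at hw
      rcases hw with rfl | rfl
      · exact hxE
      · refine ⟨mem_jS.2 fun t ht => ?_, fun h => hzS (mem_jS.1 h z hvz),
          fun h => huS' (mem_jS.1 h u huv.1.symm)⟩
        rcases hN1 t ht with rfl | rfl
        · exact mem_union_left _ huS
        · exact mem_union_right _ hzS')
    rw [card_pair hvx.symm, hI, hqe] at hunc2
    push_cast at hunc2
    linarith
  · have hb2 : Bad G k (S ∪ S') := by
      refine ⟨hUne, hUh, v, u, z, hvX, huv.1.symm, hvz, mem_union_left _ huS, ?_⟩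
      rw [mem_union]; tauto
    have h1 := hmax (S ∪ S') (by simpa using hb2)
    have h2 : S.card < (S ∪ S').card := by
      apply card_lt_card
      refine ⟨subset_union_left, fun h => hbS (h (mem_union_right _ hbS'))⟩
    omega

/-- Kaneko's theorem on spanning trees with bounded leaf degree (sufficiency) -/
theorem kaneko (hk : 1 ≤ k) (hc : G.Connected) (hn : 4 ≤ Fintype.card V) (hP : PP G k) :
    ∃ T : SimpleGraph V, T ≤ G ∧ T.IsTree ∧
      ∀ v, (univ.filter fun u => T.Adj v u ∧ T.degree u = 1).card ≤ k := by
  obtain ⟨T, hT, hmin⟩ := (Set.toFinite {T : SimpleGraph V | T ≤ G ∧ T.Connected ∧ PP T k}).exists_minimal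
    ⟨G, le_refl _, hc, hP⟩
  obtain ⟨hTG, hTc, hTP⟩ := hT
  have hB : Blk T k := by
    intro x y hxy
    apply blocked hTP hxy.1
    intro hPP
    have hle : T.deleteEdges {s(x, y)} ≤ T := SimpleGraph.deleteEdges_le _
    have := hmin ⟨hle.trans hTG, hTc.connected_delete_edge_of_not_isBridge hxy.2, hPP⟩ hle
    have h2 := this hxy.1
    simp at h2
  refine ⟨T, hTG, ⟨hTc, ?_⟩, ?_⟩
  · rw [SimpleGraph.isAcyclic_iff_forall_adj_isBridge]
    intro x y hxy
    by_contra hb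
    exact no_NB hk hTc hn hTP hB x y ⟨hxy, hb⟩
  · intro v
    have h1 := hTP {v} (singleton_nonempty v)
    have h2 : (univ.filter fun u => T.Adj v u ∧ T.degree u = 1) ⊆ isoS T {v} := by
      intro u hu
      simp only [mem_filter, mem_univ, true_and] at hu
      rw [mem_isoS]
      refine ⟨by simpa using hu.1.ne.symm, fun y hy => ?_⟩
      rw [mem_singleton]
      obtain ⟨w, hw⟩ := Finset.card_eq_one.1 ((SimpleGraph.card_neighborFinset_eq_degree T u).trans hu.2)
      have ha : y ∈ T.neighborFinset u := by simpa using hy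
      have hb : v ∈ T.neighborFinset u := by simpa using hu.1.symm
      rw [hw, mem_singleton] at ha hb
      rw [ha, hb]
    have h3 := card_le_card h2
    unfold hh at h1
    simp at h1
    omega

end Kaneko2

section Spec
variable {V : Type*} [Fintype V]

theorem adjMat_herm (G : SimpleGraph V) : (adjMat G).IsHermitian := by
  ext i j
  simp [adjMat, Matrix.conjTranspose_apply, G.adj_comm]

theorem eig_finite (G : SimpleGraph V) :
    {μ : ℝ | Module.End.HasEigenvalue (Matrix.mulVecLin (adjMat G)) μ}.Finite :=
  Module.End.finite_hasEigenvalue _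

theorem eig_le (G : SimpleGraph V) {μ : ℝ} {v : V → ℝ} (hv : v ≠ 0)
    (h : (adjMat G).mulVec v = μ • v) : μ ≤ specRad G := by
  apply le_csSup (eig_finite G).bddAbove
  exact Module.End.hasEigenvalue_of_hasEigenvector (x := v)
    ⟨Module.End.mem_eigenspace_iff.2 (by simpa using h), hv⟩

theorem rad_eig [Nonempty V] (G : SimpleGraph V) :
    ∃ v : V → ℝ, v ≠ 0 ∧ (adjMat G).mulVec v = specRad G • v := by
  have hne : {μ : ℝ | Module.End.HasEigenvalue (Matrix.mulVecLin (adjMat G)) μ}.Nonempty := by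
    obtain ⟨i⟩ := ‹Nonempty V›
    have hA := adjMat_herm G
    refine ⟨hA.eigenvalues i, ?_⟩
    have h := hA.mulVec_eigenvectorBasis i
    refine Module.End.hasEigenvalue_of_hasEigenvector (x := (hA.eigenvectorBasis i).ofLp)
      ⟨Module.End.mem_eigenspace_iff.2 (by simpa using h), ?_⟩
    intro h0
    apply hA.eigenvectorBasis.toBasis.ne_zero i
    ext j
    simpa using congrFun h0 j
  have hmem : specRad G ∈ {μ : ℝ | Module.End.HasEigenvalue (Matrix.mulVecLin (adjMat G)) μ} :=
    hne.csSup_mem (eig_finite G)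
  obtain ⟨v, hv⟩ := Module.End.HasEigenvalue.exists_hasEigenvector hmem
  exact ⟨v, hv.2, by simpa using Module.End.mem_eigenspace_iff.1 hv.1⟩

theorem rad_psd (G : SimpleGraph V) : (specRad G • (1 : Matrix V V ℝ) - adjMat G).PosSemidef := by
  have hM : (specRad G • (1 : Matrix V V ℝ) - adjMat G).IsHermitian := by
    refine Matrix.IsHermitian.sub ?_ (adjMat_herm G)
    ext i j
    simp [Matrix.one_apply, eq_comm]
  rw [hM.posSemidef_iff_eigenvalues_nonneg]
  intro i
  have h := hM.mulVec_eigenvectorBasis i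
  set v := (hM.eigenvectorBasis i).ofLp with hv
  have hv0 : v ≠ 0 := by
    intro h0
    apply hM.eigenvectorBasis.toBasis.ne_zero i
    ext j
    simpa using congrFun h0 j
  rw [Matrix.sub_mulVec, Matrix.smul_mulVec, Matrix.one_mulVec] at h
  have h2 : (adjMat G).mulVec v = (specRad G - hM.eigenvalues i) • v := by
    rw [sub_smul, ← h]; abel
  have := eig_le G hv0 h2
  simp only [Pi.zero_apply]
  linarith

theorem rayleigh (G : SimpleGraph V) (x : V → ℝ) :
    x ⬝ᵥ (adjMat G).mulVec x ≤ specRad G * (x ⬝ᵥ x) := by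
  have h := (rad_psd G).dotProduct_mulVec_nonneg x
  rw [Matrix.sub_mulVec, Matrix.smul_mulVec, Matrix.one_mulVec, dotProduct_sub, dotProduct_smul] at h
  simp at h
  linarith

theorem rayleigh_eq (G : SimpleGraph V) (x : V → ℝ)
    (h : specRad G * (x ⬝ᵥ x) ≤ x ⬝ᵥ (adjMat G).mulVec x) :
    (adjMat G).mulVec x = specRad G • x := by
  have h1 := ((rad_psd G).dotProduct_mulVec_zero_iff x).1 (by
    have h2 := rayleigh G x
    rw [Matrix.sub_mulVec, Matrix.smul_mulVec, Matrix.one_mulVec, dotProduct_sub, dotProduct_smul]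
    simp
    linarith)
  rw [Matrix.sub_mulVec, Matrix.smul_mulVec, Matrix.one_mulVec, sub_eq_zero] at h1
  exact h1.symm

/-- Collatz-type upper bound -/
theorem collatz (G : SimpleGraph V) (w : V → ℝ) (hw : ∀ i, 0 < w i) {r : ℝ} (hr : 0 ≤ r)
    (h : ∀ i, (adjMat G).mulVec w i ≤ r * w i) : specRad G ≤ r := by
  apply Real.sSup_le _ hr
  rintro μ hμ
  obtain ⟨v, hv⟩ := Module.End.HasEigenvalue.exists_hasEigenvector hμ
  have hv1 : (adjMat G).mulVec v = μ • v := by simpa using Module.End.mem_eigenspace_iff.1 hv.1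
  have hv0 := hv.2
  have hne : Nonempty V := by
    by_contra hcon
    rw [not_nonempty_iff] at hcon
    exact hv0 (Subsingleton.elim _ _)
  obtain ⟨i, -, hi⟩ := Finset.exists_max_image (univ : Finset V) (fun i => |v i| / w i) univ_nonempty
  set c := |v i| / w i with hc
  have hle : ∀ j, |v j| ≤ c * w j := fun j => by
    have := hi j (mem_univ j)
    rwa [div_le_iff₀ (hw j)] at this
  have hci : |v i| = c * w i := by rw [hc, div_mul_cancel₀ _ (hw i).ne']
  have hcpos : 0 < c := by
    by_contra hcon
    push Not at hcon
    apply hv0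
    ext j
    have h1 := hle j
    have h2 : c * w j ≤ 0 := mul_nonpos_of_nonpos_of_nonneg hcon (hw j).le
    have h3 := abs_nonneg (v j)
    simpa using abs_eq_zero.1 (le_antisymm (h1.trans h2) h3)
  have h1 : μ * v i = ∑ j, adjMat G i j * v j := by
    have := congrFun hv1 i
    simp [Matrix.mulVec, dotProduct] at this
    exact this.symm
  have hA : ∀ i j, 0 ≤ adjMat G i j := fun i j => by unfold adjMat; split_ifs <;> simp
  have h2 : μ * |v i| ≤ c * (r * w i) := by
    calc μ * |v i| ≤ |μ| * |v i| := by gcongr; exact le_abs_self μ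
      _ = |∑ j, adjMat G i j * v j| := by rw [← abs_mul, h1]
      _ ≤ ∑ j, |adjMat G i j * v j| := abs_sum_le_sum_abs _ _
      _ ≤ ∑ j, c * (adjMat G i j * w j) := by
        apply sum_le_sum
        intro j _
        rw [abs_mul, abs_of_nonneg (hA i j)]
        calc adjMat G i j * |v j| ≤ adjMat G i j * (c * w j) := by
              exact mul_le_mul_of_nonneg_left (hle j) (hA i j)
          _ = _ := by ring
      _ = c * (adjMat G).mulVec w i := by rw [← mul_sum]; rfl
      _ ≤ c * (r * w i) := by
        exact mul_le_mul_of_nonneg_left (h i) hcpos.le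
  rw [hci] at h2
  have h3 : 0 < c * w i := mul_pos hcpos (hw i)
  by_contra hcon
  push Not at hcon
  nlinarith

end Spec

section Spec2
variable {V W : Type*} [Fintype V] [Fintype W]

theorem quad_expand (G : SimpleGraph V) (x : V → ℝ) :
    x ⬝ᵥ (adjMat G).mulVec x = ∑ i, ∑ j, adjMat G i j * (x i * x j) := by
  simp only [dotProduct, Matrix.mulVec, mul_sum]
  refine sum_congr rfl fun i _ => sum_congr rfl fun j _ => by ring

theorem adjMat_nonneg (G : SimpleGraph V) (i j : V) : 0 ≤ adjMat G i j := by
  unfold adjMat; split_ifs <;> simp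

theorem spec_mono_eq [Nonempty V] (G : SimpleGraph V) (H : SimpleGraph W) (hc : G.Connected) (σ : V ≃ W)
    (hσ : ∀ i j, G.Adj i j → H.Adj (σ i) (σ j)) (hρ : specRad H ≤ specRad G) (i j : V)
    (hij : H.Adj (σ i) (σ j)) : G.Adj i j := by
  by_contra hG
  obtain ⟨x, hx0, hx⟩ := rad_eig G
  set y : V → ℝ := fun i => |x i| with hy
  have hyn : ∀ i, 0 ≤ y i := fun i => abs_nonneg _
  have hyy : y ⬝ᵥ y = x ⬝ᵥ x := by simp [dotProduct, hy]
  have hyy0 : 0 ≤ y ⬝ᵥ y := sum_nonneg fun i _ => mul_nonneg (hyn i) (hyn i)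
  have h1 : specRad G * (y ⬝ᵥ y) ≤ y ⬝ᵥ (adjMat G).mulVec y := by
    have : specRad G * (y ⬝ᵥ y) = x ⬝ᵥ (adjMat G).mulVec x := by
      rw [hx, dotProduct_smul, hyy]; rfl
    rw [this, quad_expand, quad_expand]
    refine sum_le_sum fun i _ => sum_le_sum fun j _ => ?_
    apply mul_le_mul_of_nonneg_left _ (adjMat_nonneg G i j)
    rw [hy, ← abs_mul]; exact le_abs_self _
  have h2 : ∑ i, ∑ j, adjMat H (σ i) (σ j) * (y i * y j) ≤ specRad H * (y ⬝ᵥ y) := by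
    have h := rayleigh H (y ∘ σ.symm)
    rw [quad_expand] at h
    have e1 : (y ∘ σ.symm) ⬝ᵥ (y ∘ σ.symm) = y ⬝ᵥ y := by
      simp only [dotProduct]
      rw [← Equiv.sum_comp σ]; simp
    rw [e1, ← Equiv.sum_comp σ] at h
    refine le_trans (le_of_eq ?_) h
    refine sum_congr rfl fun i _ => ?_
    rw [← Equiv.sum_comp σ]
    simp
  have h3 : ∀ i j, adjMat G i j * (y i * y j) ≤ adjMat H (σ i) (σ j) * (y i * y j) := by
    intro i j
    apply mul_le_mul_of_nonneg_right _ (mul_nonneg (hyn i) (hyn j))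
    by_cases h : G.Adj i j
    · simp [adjMat, h, hσ i j h]
    · simp only [adjMat, h, if_false]; split_ifs <;> simp
  have h4 : specRad H * (y ⬝ᵥ y) ≤ specRad G * (y ⬝ᵥ y) := mul_le_mul_of_nonneg_right hρ hyy0
  have h5 : y i * y j = 0 := by
    by_contra hne
    have hpos : 0 < y i * y j := lt_of_le_of_ne (mul_nonneg (hyn i) (hyn j)) (Ne.symm hne)
    have : ∑ i, ∑ j, adjMat G i j * (y i * y j) < ∑ i, ∑ j, adjMat H (σ i) (σ j) * (y i * y j) := by
      apply sum_lt_sum (fun i _ => sum_le_sum fun j _ => h3 i j)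
      refine ⟨i, mem_univ _, sum_lt_sum (fun j _ => h3 i j) ⟨j, mem_univ _, ?_⟩⟩
      simpa [adjMat, hG, hij] using hpos
    rw [quad_expand] at h1
    linarith
  have h6 := rayleigh_eq G y h1
  have hprop : ∀ a b, y a = 0 → G.Adj a b → y b = 0 := by
    intro a b ha hab
    have h := congrFun h6 a
    simp only [Matrix.mulVec, dotProduct, Pi.smul_apply, ha, smul_zero] at h
    rw [sum_eq_zero_iff_of_nonneg fun j _ => mul_nonneg (adjMat_nonneg G a j) (hyn j)] at h
    simpa [adjMat, hab] using h b (mem_univ b)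
  have hz : ∃ a, y a = 0 := by
    rcases mul_eq_zero.1 h5 with h | h
    · exact ⟨_, h⟩
    · exact ⟨_, h⟩
  obtain ⟨a, ha⟩ := hz
  apply hx0
  ext b
  exact abs_eq_zero.1 (closed_univ_s4 hc ha hprop b)

theorem H_adj {n k : ℕ} {i j : Fin n} : (oneJoinCliquePlusIso' n k).Adj i j ↔
    i ≠ j ∧ (i.val = 0 ∨ j.val = 0 ∨ (i.val < n - (k + 1) ∧ j.val < n - (k + 1))) := by
  unfold oneJoinCliquePlusIso'
  rw [SimpleGraph.fromRel_adj]
  tauto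

theorem card_lt_fin {n m : ℕ} (h : m ≤ n) : (univ.filter fun i : Fin n => i.val < m).card = m := by
  rw [Fin.card_filter_val_lt]; omega

theorem H_gt {n k : ℕ} (hn : 2 * k + 12 ≤ n) :
    ((n : ℝ) - k - 2) < specRad (oneJoinCliquePlusIso' n k) := by
  set H := oneJoinCliquePlusIso' n k with hH
  set r : ℝ := (n : ℝ) - k - 2 with hr
  have hnr : (2 * k + 12 : ℝ) ≤ n := by exact_mod_cast hn
  have hk0 : (0 : ℝ) ≤ k := Nat.cast_nonneg k
  have hr0 : 0 < r := by linarith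
  set m := n - (k + 1) with hm
  have hmr : ((m - 1 : ℕ) : ℝ) = r := by
    have : (m - 1) + (k + 2) = n := by omega
    rw [hr, ← this]; push_cast; ring
  set C : Finset (Fin n) := univ.filter fun i => i.val < m with hC
  have hCc : C.card = m := card_lt_fin (by omega)
  have memC : ∀ i, i ∈ C ↔ i.val < m := fun i => by simp [hC]
  set x : Fin n → ℝ := fun i => if i.val < m then 1 else 1 / r with hx
  have hxpos : ∀ i, 0 < x i := fun i => by
    simp only [hx]; split_ifs <;> positivity
  have hterm : ∀ i j, 0 ≤ adjMat H i j * x j :=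
    fun i j => mul_nonneg (adjMat_nonneg H i j) (hxpos j).le
  have hrow : ∀ i : Fin n, i.val < m → ∑ j ∈ C.erase i, adjMat H i j * x j = r := by
    intro i hi
    rw [← hmr]
    have : ∀ j ∈ C.erase i, adjMat H i j * x j = 1 := by
      intro j hj
      rw [mem_erase, memC] at hj
      have : H.Adj i j := H_adj.2 ⟨hj.1.symm, Or.inr (Or.inr ⟨hi, hj.2⟩)⟩
      simp [adjMat, this, hx, hj.2]
    rw [sum_congr rfl this, sum_const, card_erase_of_mem ((memC i).2 hi), hCc]
    simp
  have hge : ∀ i, r * x i ≤ ∑ j, adjMat H i j * x j := by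
    intro i
    by_cases hi : i.val < m
    · have : x i = 1 := by simp [hx, hi]
      rw [this, mul_one, ← hrow i hi]
      exact sum_le_sum_of_subset_of_nonneg (subset_univ _) fun j _ _ => hterm i j
    · have : x i = 1 / r := by simp only [hx, hi, if_false]
      rw [this, mul_one_div_cancel hr0.ne']
      let z : Fin n := ⟨0, by omega⟩
      have hadj : H.Adj i z := H_adj.2 ⟨fun h => hi (by rw [h]; show 0 < m; omega), Or.inr (Or.inl rfl)⟩
      have h1 : adjMat H i z * x z = 1 := by
        have : (0:ℕ) < m := by omega
        simp [adjMat, hadj, hx, z, this]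
      rw [← h1]
      exact single_le_sum (f := fun j => adjMat H i j * x j) (fun j _ => hterm i j) (mem_univ z)
  let z : Fin n := ⟨0, by omega⟩
  let t : Fin n := ⟨n - 1, by omega⟩
  have hzm : z.val < m := by show 0 < m; omega
  have htm : ¬ t.val < m := by show ¬ n - 1 < m; omega
  have hgt : r * x z < ∑ j, adjMat H z j * x j := by
    have h1 : x z = 1 := by simp only [hx, hzm, if_true]
    have hzt : z ≠ t := fun h => htm (h ▸ hzm)
    have h2 : 0 < adjMat H z t * x t := by
      have : H.Adj z t := H_adj.2 ⟨hzt, Or.inl rfl⟩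
      simp [adjMat, this, hxpos t]
    have h3 : t ∉ C.erase z := fun h => htm ((memC t).1 (mem_erase.1 h).2)
    rw [h1, mul_one]
    calc r < ∑ j ∈ insert t (C.erase z), adjMat H z j * x j := by
          rw [sum_insert h3, hrow z hzm]; linarith
      _ ≤ _ := sum_le_sum_of_subset_of_nonneg (subset_univ _) fun j _ _ => hterm z j
  by_contra hcon
  push Not at hcon
  have h1 := rayleigh H x
  have hxx : 0 ≤ x ⬝ᵥ x := sum_nonneg fun i _ => mul_nonneg (hxpos i).le (hxpos i).le
  have h2 : specRad H * (x ⬝ᵥ x) ≤ r * (x ⬝ᵥ x) := mul_le_mul_of_nonneg_right hcon hxx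
  have h3 : r * (x ⬝ᵥ x) < x ⬝ᵥ (adjMat H).mulVec x := by
    simp only [dotProduct, Matrix.mulVec, mul_sum (a := r)]
    apply sum_lt_sum
    · intro i _
      have := mul_le_mul_of_nonneg_left (hge i) (hxpos i).le
      linarith
    · refine ⟨z, mem_univ _, ?_⟩
      have := mul_lt_mul_of_pos_left hgt (hxpos z)
      linarith
  linarith

end Spec2

section CaseTwo
variable {V : Type*} [Fintype V] [DecidableEq V]

theorem arith_two {k s n : ℕ} (hn : 2 * k + 12 ≤ n) (hs : 2 ≤ s) (hk : 1 ≤ k)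
    (hb : (k + 2) * s ≤ n) :
    (s : ℝ) ^ 2 * ((k + 2) * s - (k + 1)) ≤ (s - 1) * ((n : ℝ) - k - 2) * ((n : ℝ) - k - 1) := by
  have hnr : (2 * k + 12 : ℝ) ≤ n := by exact_mod_cast hn
  have hk0 : (1 : ℝ) ≤ k := by exact_mod_cast hk
  have hbr : ((k : ℝ) + 2) * s ≤ n := by exact_mod_cast hb
  rcases Nat.lt_or_ge s 3 with h | h
  · have : s = 2 := by omega
    subst this
    push_cast
    nlinarith
  · have hs3 : (3 : ℝ) ≤ s := by exact_mod_cast h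
    have h1 : ((k : ℝ) + 2) * s - (k + 1) ≤ (n : ℝ) - k - 1 := by linarith
    have h2 : 3 * ((s : ℝ) - 1) ≤ (n : ℝ) - k - 2 := by nlinarith
    have h3 : (s : ℝ) ^ 2 ≤ (s - 1) * ((n : ℝ) - k - 2) := by nlinarith
    have h4 : (0 : ℝ) ≤ (k + 2) * s - (k + 1) := by nlinarith
    exact mul_le_mul h3 h1 h4 (by nlinarith)

theorem case_two {G : SimpleGraph V} {k s n : ℕ} (hcard : Fintype.card V = n)
    (hn : 2 * k + 12 ≤ n) (hs : 2 ≤ s) (hk : 1 ≤ k)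
    {S I : Finset V} (hS : S.card = s) (hI : I.card = (k + 1) * s) (hIS : I ⊆ isoS G S) :
    specRad G ≤ (n : ℝ) - k - 2 := by
  have hdis : Disjoint S I := by
    rw [disjoint_left]
    exact fun x hx hxI => (mem_isoS.1 (hIS hxI)).1 hx
  set R : Finset V := univ \ (S ∪ I) with hR
  have hSI : (S ∪ I).card = (k + 2) * s := by
    rw [card_union_of_disjoint hdis, hS, hI]; ring
  have hle : (k + 2) * s ≤ n := by rw [← hSI, ← hcard]; exact card_le_univ _
  have hRc : R.card + (k + 2) * s = n := by
    rw [← hSI, ← hcard, hR, card_sdiff_add_card_eq_card (subset_univ _)]; rfl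
  have harith := arith_two hn hs hk hle
  set r : ℝ := (n : ℝ) - k - 2 with hr
  set d : ℝ := ((k : ℝ) + 2) * s - (k + 1) with hd
  have hnr : (2 * k + 12 : ℝ) ≤ n := by exact_mod_cast hn
  have hk0 : (1 : ℝ) ≤ k := by exact_mod_cast hk
  have hs2 : (2 : ℝ) ≤ s := by exact_mod_cast hs
  have hr0 : 0 < r := by linarith
  have hd0 : 0 < d := by nlinarith
  have hRr : (R.card : ℝ) = r + 1 - d := by
    have : (R.card : ℝ) + (k + 2) * s = n := by exact_mod_cast hRc
    rw [hr, hd]; linarith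
  have hIr : (I.card : ℝ) = (k + 1) * s := by exact_mod_cast hI
  have hSr : (S.card : ℝ) = s := by exact_mod_cast hS
  have memR : ∀ j, j ∈ R ↔ j ∉ S ∧ j ∉ I := fun j => by simp [hR]
  set w : V → ℝ := fun j => if j ∈ S then 1 else if j ∈ I then s / r else s / d with hw
  have hwS : ∀ j, j ∈ S → w j = 1 := fun j hj => by simp [hw, hj]
  have hwI : ∀ j, j ∈ I → w j = s / r := fun j hj => by
    have : j ∉ S := fun h => (disjoint_left.1 hdis) h hj
    simp [hw, hj, this]
  have hwR : ∀ j, j ∈ R → w j = s / d := fun j hj => by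
    have := (memR j).1 hj
    simp [hw, this.1, this.2]
  have hwpos : ∀ j, 0 < w j := by
    intro j
    simp only [hw]
    split_ifs <;> positivity
  have hcases : ∀ j, j ∈ S ∨ j ∈ I ∨ j ∈ R := fun j => by rw [memR]; tauto
  have hA1 : ∀ i j, adjMat G i j * w j ≤ w j := by
    intro i j
    have := (hwpos j).le
    unfold adjMat; split_ifs <;> simp [this]
  have hsum : ∀ f : V → ℝ, ∑ j, f j = ∑ j ∈ S, f j + ∑ j ∈ I, f j + ∑ j ∈ R, f j := by
    intro f
    rw [← sum_union hdis, hR, add_comm, sum_sdiff (subset_univ _)]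
  have hbS : ∀ i, ∑ j ∈ S, adjMat G i j * w j ≤ s := by
    intro i
    calc ∑ j ∈ S, adjMat G i j * w j ≤ ∑ j ∈ S, (1 : ℝ) :=
          sum_le_sum fun j hj => (hA1 i j).trans (hwS j hj).le
      _ = s := by simp [hSr]
  have hself : ∀ i, adjMat G i i * w i = 0 := fun i => by simp [adjMat]
  apply collatz G w hwpos hr0.le
  intro i
  show ∑ j, adjMat G i j * w j ≤ r * w i
  rw [hsum]
  rcases hcases i with hi | hi | hi
  · rw [hwS i hi]
    have h1 : ∑ j ∈ S, adjMat G i j * w j ≤ s - 1 := by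
      rw [← add_sum_erase S _ hi, hself, zero_add]
      calc ∑ j ∈ S.erase i, adjMat G i j * w j ≤ ∑ j ∈ S.erase i, (1 : ℝ) :=
            sum_le_sum fun j hj => (hA1 i j).trans (hwS j (mem_of_mem_erase hj)).le
        _ = s - 1 := by
          rw [sum_const, card_erase_of_mem hi, hS, nsmul_eq_mul, Nat.cast_sub (by omega)]; simp
    have h2 : ∑ j ∈ I, adjMat G i j * w j ≤ (k + 1) * s * (s / r) := by
      calc ∑ j ∈ I, adjMat G i j * w j ≤ ∑ j ∈ I, (s / r : ℝ) :=
            sum_le_sum fun j hj => (hA1 i j).trans (hwI j hj).le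
        _ = _ := by rw [sum_const, nsmul_eq_mul, hIr]
    have h3 : ∑ j ∈ R, adjMat G i j * w j ≤ (r + 1 - d) * (s / d) := by
      calc ∑ j ∈ R, adjMat G i j * w j ≤ ∑ j ∈ R, (s / d : ℝ) :=
            sum_le_sum fun j hj => (hA1 i j).trans (hwR j hj).le
        _ = _ := by rw [sum_const, nsmul_eq_mul, hRr]
    have h4 : (k + 1) * s * (s / r : ℝ) ≤ (r + 1) * ((k + 1) * (s - 1)) / d := by
      rw [← mul_div_assoc, div_le_div_iff₀ hr0 hd0]
      have : (s : ℝ) ^ 2 * d ≤ (s - 1) * r * (r + 1) := by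
        have e : (n : ℝ) - k - 1 = r + 1 := by rw [hr]; ring
        rw [← e]; exact harith
      have := mul_le_mul_of_nonneg_left this (by linarith : (0 : ℝ) ≤ k + 1)
      linarith
    have h5 : (r + 1 - d) * (s / d) + (r + 1) * ((k + 1) * (s - 1)) / d = r + 1 - s := by
      field_simp
      rw [hd]; ring
    linarith
  · rw [hwI i hi]
    have hnb := (mem_isoS.1 (hIS hi)).2
    have h2 : ∑ j ∈ I, adjMat G i j * w j = 0 := sum_eq_zero fun j hj => by
      have : ¬ G.Adj i j := fun h => (disjoint_left.1 hdis) (hnb j h) hj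
      simp [adjMat, this]
    have h3 : ∑ j ∈ R, adjMat G i j * w j = 0 := sum_eq_zero fun j hj => by
      have : ¬ G.Adj i j := fun h => ((memR j).1 hj).1 (hnb j h)
      simp [adjMat, this]
    rw [h2, h3, mul_div_cancel₀ _ hr0.ne']
    linarith [hbS i]
  · rw [hwR i hi]
    have h2 : ∑ j ∈ I, adjMat G i j * w j = 0 := sum_eq_zero fun j hj => by
      have : ¬ G.Adj i j := fun h => ((memR i).1 hi).1 ((mem_isoS.1 (hIS hj)).2 i h.symm)
      simp [adjMat, this]
    have h3 : ∑ j ∈ R, adjMat G i j * w j ≤ (r - d) * (s / d) := by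
      rw [← add_sum_erase R _ hi, hself, zero_add]
      calc ∑ j ∈ R.erase i, adjMat G i j * w j ≤ ∑ j ∈ R.erase i, (s / d : ℝ) :=
            sum_le_sum fun j hj => (hA1 i j).trans (hwR j (mem_of_mem_erase hj)).le
        _ = _ := by
          rw [sum_const, card_erase_of_mem hi, nsmul_eq_mul,
            Nat.cast_sub (card_pos.2 ⟨i, hi⟩), hRr]
          push_cast; ring
    have h4 : s + (r - d) * (s / d) = r * (s / d) := by field_simp; ring
    rw [h2]
    linarith [hbS i]

end CaseTwo

section CaseOne

theorem exists_perm {n k : ℕ} (hn : 2 * k + 12 ≤ n) (v : Fin n) (I : Finset (Fin n)) (hv : v ∉ I)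
    (hI : I.card = k + 1) :
    ∃ σ : Fin n ≃ Fin n, (σ v).val = 0 ∧ ∀ i, i ∉ I → (σ i).val < n - (k + 1) := by
  have hcard : Fintype.card {i // i ∈ I} = Fintype.card {j : Fin n // ¬ j.val < n - (k + 1)} := by
    rw [Fintype.card_coe, hI, Fintype.card_subtype_compl, Fintype.card_fin, Fintype.card_subtype,
      card_lt_fin (by omega)]
    omega
  let e := Fintype.equivOfCardEq hcard
  let τ : Fin n ≃ Fin n := e.extendSubtype
  have hτ : ∀ i, i ∉ I → (τ i).val < n - (k + 1) := fun i hi => by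
    have := e.extendSubtype_not_mem i hi
    exact not_not.1 this
  let z : Fin n := ⟨0, by omega⟩
  refine ⟨τ.trans (Equiv.swap (τ v) z), ?_, fun i hi => ?_⟩
  · simp [z]
  · simp only [Equiv.trans_apply]
    rw [Equiv.swap_apply_def]
    split_ifs
    · show 0 < n - (k + 1); omega
    · exact hτ v hv
    · exact hτ i hi

theorem case_one {n k : ℕ} (hn : 2 * k + 12 ≤ n) (G : SimpleGraph (Fin n)) (hG : G.Connected)
    (hρ : specRad (oneJoinCliquePlusIso' n k) ≤ specRad G) (v : Fin n) (I : Finset (Fin n))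
    (hI : I.card = k + 1) (hIv : I ⊆ isoS G {v}) : Nonempty (G ≃g oneJoinCliquePlusIso' n k) := by
  have hv : v ∉ I := fun h => (mem_isoS.1 (hIv h)).1 (mem_singleton_self v)
  obtain ⟨σ, hσv, hσ⟩ := exists_perm hn v I hv hI
  have hnb : ∀ i ∈ I, ∀ j, G.Adj i j → j = v := fun i hi j hij =>
    mem_singleton.1 ((mem_isoS.1 (hIv hi)).2 j hij)
  have hmap : ∀ i j, G.Adj i j → (oneJoinCliquePlusIso' n k).Adj (σ i) (σ j) := by
    intro i j hij
    rw [H_adj]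
    refine ⟨fun h => hij.ne (σ.injective h), ?_⟩
    by_cases hi : i ∈ I
    · right; left; rw [hnb i hi j hij]; exact hσv
    by_cases hj : j ∈ I
    · left; rw [hnb j hj i hij.symm]; exact hσv
    exact Or.inr (Or.inr ⟨hσ i hi, hσ j hj⟩)
  haveI : Nonempty (Fin n) := ⟨v⟩
  exact ⟨⟨σ, fun {i j} => ⟨spec_mono_eq G _ hG σ hmap hρ i j, hmap i j⟩⟩⟩

end CaseOne

/-- **Theorem (spectral radius and spanning trees with bounded leaf degree).**
Let `k ≥ 1` and let `G` be a connected graph of order `n ≥ 2k + 12`.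
If `ρ(G) ≥ ρ(K₁ ∨ (K_{n-k-2} + (k+1)K₁))`, then `G` has a spanning tree with
leaf degree at most `k` unless `G ≅ K₁ ∨ (K_{n-k-2} + (k+1)K₁)`. -/
theorem spectral_spanning_tree_leaf_degree {n k : ℕ} (hk : 1 ≤ k)
    (hn : 2 * k + 12 ≤ n) (G : SimpleGraph (Fin n)) (hG : G.Connected)
    (hρ : specRad (oneJoinCliquePlusIso' n k) ≤ specRad G) :
    HasSpanningTreeLeafDegLE G k ∨ Nonempty (G ≃g oneJoinCliquePlusIso' n k) := by
  by_cases hP : PP G k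
  · left
    obtain ⟨T, h1, h2, h3⟩ := kaneko hk hG (by rw [Fintype.card_fin]; omega) hP
    refine ⟨T, h1, h2, fun v => ?_⟩
    convert h3 v
  · right
    unfold PP at hP
    push Not at hP
    obtain ⟨S, hS, hlt⟩ := hP
    have hge : (k + 1) * S.card ≤ (isoS G S).card := by
      unfold hh at hlt
      zify
      linarith
    obtain ⟨I, hIS, hI⟩ := exists_subset_card_eq hge
    rcases Nat.lt_or_ge S.card 2 with h | h
    · have h1 : S.card = 1 := by have := card_pos.2 hS; omega
      obtain ⟨v, rfl⟩ := card_eq_one.1 h1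
      exact case_one hn G hG hρ v I (by simpa using hI) hIS
    · have h1 := case_two (Fintype.card_fin n) hn h hk rfl hI hIS
      have h2 := H_gt hn
      linarith
end
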